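/- arXiv:1208.0161 — 3 statements merged into one kernel-verified Lean document; each statement's English description precedes it below -/
import Mathlib

section
/- For any function f : {±1}^n → ℝ, any exponents 1 ≤ p ≤ q with q > 1, and any 0 ≤ ε ≤ √((p−1)/(q−1)), the noise operator satisfies ‖T_ε f‖_q ≤ ‖f‖_p, where the norms are the normalized ℓ_p norms on the boolean cube. -/
noncomputable section

/-- The character `χ_S(x) = ∏_{i ∈ S} x_i` on the boolean cube, with `true ↦ -1`, `false ↦ 1`. -/
def cubeChar {n : ℕ} (S : Finset (Fin n)) (x : Fin n → Bool) : ℝ :=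
  ∏ i ∈ S, (if x i then -1 else 1)

/-- The Fourier coefficient `f̂(S)` of `f : {±1}ⁿ → ℝ`. -/
def cubeFourier {n : ℕ} (f : (Fin n → Bool) → ℝ) (S : Finset (Fin n)) : ℝ :=
  (2 ^ n : ℝ)⁻¹ * ∑ x : Fin n → Bool, f x * cubeChar S x

/-- The noise operator `T_ε f = ∑_S ε^{|S|} f̂(S) χ_S`. -/
def noiseOp {n : ℕ} (ε : ℝ) (f : (Fin n → Bool) → ℝ) : (Fin n → Bool) → ℝ :=
  fun x => ∑ S : Finset (Fin n), ε ^ S.card * cubeFourier f S * cubeChar S x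

/-- The normalised ℓ_p norm `‖f‖_p = (2^{-n} ∑_x |f(x)|^p)^{1/p}` on the boolean cube. -/
def cubeNorm {n : ℕ} (p : ℝ) (f : (Fin n → Bool) → ℝ) : ℝ :=
  ((2 ^ n : ℝ)⁻¹ * ∑ x : Fin n → Bool, |f x| ^ p) ^ (1 / p)

/-! Gross's argument. For two points, `s ↦ ‖a + b / √(s - 1) · x‖_s` is nonincreasing: its
derivative is the difference of the two sides of a logarithmic Sobolev inequality. That inequality
holds for the exponent `2` by one-variable calculus, and the Stroock–Varopoulos inequality carries
it over to every exponent `s > 1`. The passage to `n` coordinates is by induction: on the cube of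
dimension `n + 1` apply the two-point inequality in the first coordinate, exchange the two norms by
Minkowski's inequality, which is possible because `p ≤ q`, and apply the induction hypothesis in
the others. -/

section LogSobolev

open Set

lemma sub_one_le_log_one_add_sq_div_two {r : ℝ} (hr : r ≤ 1) :
    r - 1 ≤ Real.log ((1 + r ^ 2) / 2) := by
  have hderiv (x : ℝ) : HasDerivAt (fun r : ℝ => Real.log ((1 + r ^ 2) / 2) - r)
      (-((1 - x) ^ 2 / (1 + x ^ 2))) x := by
    have hlog := (((hasDerivAt_pow 2 x).const_add 1).div_const 2).log (by positivity)
    refine (hlog.sub (hasDerivAt_id x)).congr_deriv ?_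
    field_simp
    ring
  have hanti : Antitone (fun r : ℝ => Real.log ((1 + r ^ 2) / 2) - r) :=
    antitone_of_hasDerivAt_nonpos hderiv fun x => neg_nonpos.2 (by positivity)
  have h := hanti hr
  norm_num at h
  linarith

/-- The entropy `𝔼[F log F] - 𝔼[F] log 𝔼[F]` of a function `F` on a two-point space with the uniform
measure, with values `x` and `y`. -/
def twoPointEntropy (x y : ℝ) : ℝ :=
  (x * Real.log x + y * Real.log y) / 2 - (x + y) / 2 * Real.log ((x + y) / 2)

lemma twoPointEntropy_comm (x y : ℝ) : twoPointEntropy x y = twoPointEntropy y x := by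
  simp only [twoPointEntropy, add_comm]

lemma twoPointEntropy_self (x : ℝ) : twoPointEntropy x x = 0 := by
  simp only [twoPointEntropy, add_self_div_two, sub_self]

lemma continuous_twoPointEntropy_left (y : ℝ) : Continuous fun x => twoPointEntropy x y := by
  have hmean : Continuous fun x : ℝ => (x + y) / 2 * Real.log ((x + y) / 2) :=
    Real.continuous_mul_log.comp (by fun_prop : Continuous fun x : ℝ => (x + y) / 2)
  exact ((Real.continuous_mul_log.add_const _).div_const 2).sub hmean

lemma hasDerivAt_twoPointEntropy_left {x y : ℝ} (hx : x ≠ 0) (hxy : x + y ≠ 0) :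
    HasDerivAt (fun t => twoPointEntropy t y) ((Real.log x - Real.log ((x + y) / 2)) / 2) x := by
  have hmean : HasDerivAt (fun t : ℝ => (t + y) / 2) (1 / 2) x :=
    ((hasDerivAt_id x).add_const y).div_const 2
  have hmean_log : HasDerivAt (fun t => (t + y) / 2 * Real.log ((t + y) / 2))
      ((Real.log ((x + y) / 2) + 1) * (1 / 2)) x :=
    HasDerivAt.comp (h₂ := fun m => m * Real.log m) x
      (Real.hasDerivAt_mul_log (div_ne_zero hxy two_ne_zero)) hmean
  refine ((((Real.hasDerivAt_mul_log hx).add_const _).div_const 2).sub hmean_log).congr_deriv ?_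
  ring

lemma twoPointEntropy_sq_le_of_le {g h : ℝ} (hh : 0 ≤ h) (hgh : h ≤ g) :
    twoPointEntropy (g ^ 2) (h ^ 2) ≤ (g - h) ^ 2 / 2 := by
  let deficit : ℝ → ℝ := fun x => (x - h) ^ 2 / 2 - twoPointEntropy (x ^ 2) (h ^ 2)
  have hderiv (x : ℝ) (hx : 0 < x) :
      HasDerivAt deficit (x * (Real.log ((1 + (h / x) ^ 2) / 2) - (h / x - 1))) x := by
    have hsq : HasDerivAt (fun x : ℝ => (x - h) ^ 2 / 2) (x - h) x := by
      refine ((((hasDerivAt_id x).sub_const h).pow 2).div_const 2).congr_deriv ?_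
      simp
    have hent := HasDerivAt.comp (h := fun x => x ^ 2) x
      (hasDerivAt_twoPointEntropy_left (y := h ^ 2) (by positivity) (by positivity))
      (hasDerivAt_pow 2 x)
    have hlog : Real.log ((1 + (h / x) ^ 2) / 2) =
        Real.log ((x ^ 2 + h ^ 2) / 2) - Real.log (x ^ 2) := by
      rw [← Real.log_div (by positivity) (by positivity)]
      congr 1
      field_simp
    refine (hsq.sub hent).congr_deriv ?_
    rw [hlog]
    field_simp
    ring
  have hcont : Continuous deficit :=
    (by fun_prop : Continuous fun x : ℝ => (x - h) ^ 2 / 2).sub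
      ((continuous_twoPointEntropy_left _).comp (continuous_pow 2))
  have hmono : MonotoneOn deficit (Ici h) := by
    refine monotoneOn_of_hasDerivWithinAt_nonneg (convex_Ici h) hcont.continuousOn
      (fun x hx => (hderiv x ?_).hasDerivWithinAt) fun x hx => ?_ <;> rw [interior_Ici] at hx
    · exact hh.trans_lt hx
    · have hx0 : 0 < x := hh.trans_lt hx
      have hlog := sub_one_le_log_one_add_sq_div_two ((div_le_one hx0).2 (le_of_lt hx))
      exact mul_nonneg hx0.le (sub_nonneg.2 hlog)
  have hle : deficit h ≤ deficit g := hmono self_mem_Ici hgh hgh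
  have hzero : deficit h = 0 := by simp [deficit, twoPointEntropy_self]
  exact sub_nonneg.1 (hzero ▸ hle)

theorem twoPointEntropy_sq_le (g h : ℝ) : twoPointEntropy (g ^ 2) (h ^ 2) ≤ (g - h) ^ 2 / 2 := by
  wlog hle : |h| ≤ |g| generalizing g h
  · rw [twoPointEntropy_comm, sub_sq_comm]
    exact this h g (le_of_not_ge hle)
  calc twoPointEntropy (g ^ 2) (h ^ 2) = twoPointEntropy (|g| ^ 2) (|h| ^ 2) := by
        rw [sq_abs, sq_abs]
    _ ≤ (|g| - |h|) ^ 2 / 2 := twoPointEntropy_sq_le_of_le (abs_nonneg h) hle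
    _ ≤ (g - h) ^ 2 / 2 := by
        gcongr ?_ / 2
        exact sq_le_sq.2 (abs_abs_sub_abs_le g h)

/-- The Cauchy–Schwarz inequality `(∫ f')² ≤ (b - a) ∫ f'²`, without integrability assumptions. -/
lemma sq_sub_le_mul_sub_of_sq_deriv_le {f g f' g' : ℝ → ℝ} {a b : ℝ} (hab : a < b)
    (hf : ContinuousOn f (Icc a b)) (hf' : ∀ x ∈ Ioo a b, HasDerivAt f (f' x) x)
    (hg : ContinuousOn g (Icc a b)) (hg' : ∀ x ∈ Ioo a b, HasDerivAt g (g' x) x)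
    (hle : ∀ x ∈ Ioo a b, f' x ^ 2 ≤ g' x) :
    (f b - f a) ^ 2 ≤ (b - a) * (g b - g a) := by
  have hba : 0 < b - a := sub_pos.2 hab
  obtain ⟨m, hm⟩ : ∃ m, m * (b - a) = f b - f a := ⟨(f b - f a) / (b - a), by field_simp⟩
  obtain ⟨c, hc, hslope⟩ := exists_hasDerivAt_eq_slope
    (fun x => g x - 2 * m * f x + m ^ 2 * x) (fun x => g' x - 2 * m * f' x + m ^ 2 * 1) hab
    (by fun_prop)
    fun x hx => ((hg' x hx).sub ((hf' x hx).const_mul _)).add ((hasDerivAt_id x).const_mul _)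
  have hnonneg : 0 ≤ g' c - 2 * m * f' c + m ^ 2 * 1 := by
    linarith [hle c hc, sq_nonneg (f' c - m)]
  rw [hslope, le_div_iff₀ hba] at hnonneg
  nlinarith

theorem sq_rpow_half_sub_le {A B s : ℝ} (hA : 0 ≤ A) (hB : 0 ≤ B) (hs : 1 < s) :
    (A ^ (s / 2) - B ^ (s / 2)) ^ 2 ≤
      s ^ 2 / (4 * (s - 1)) * ((A ^ (s - 1) - B ^ (s - 1)) * (A - B)) := by
  wlog hBA : B ≤ A generalizing A B
  · have h := this hB hA (le_of_not_ge hBA)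
    linarith
  rcases hBA.eq_or_lt with rfl | hBA
  · simp
  have hs1 : 0 < s - 1 := sub_pos.2 hs
  have h := sq_sub_le_mul_sub_of_sq_deriv_le hBA
    (f := fun x => x ^ (s / 2)) (f' := fun x => s / 2 * x ^ (s / 2 - 1))
    (g := fun x => s ^ 2 / (4 * (s - 1)) * x ^ (s - 1))
    (g' := fun x => s ^ 2 / (4 * (s - 1)) * ((s - 1) * x ^ (s - 1 - 1)))
    (Real.continuous_rpow_const (by positivity)).continuousOn
    (fun x hx => Real.hasDerivAt_rpow_const (Or.inl (hB.trans_lt hx.1).ne'))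
    ((Real.continuous_rpow_const hs1.le).const_mul _).continuousOn
    (fun x hx => (Real.hasDerivAt_rpow_const (Or.inl (hB.trans_lt hx.1).ne')).const_mul _)
    (fun x hx => le_of_eq ?_)
  · linarith
  · rw [mul_pow, ← Real.rpow_mul_natCast (hB.trans hx.1.le)]
    field_simp
    ring_nf

theorem twoPointEntropy_rpow_le {A B s : ℝ} (hA : 0 ≤ A) (hB : 0 ≤ B) (hs : 1 < s) :
    twoPointEntropy (A ^ s) (B ^ s) ≤
      s ^ 2 / (8 * (s - 1)) * ((A ^ (s - 1) - B ^ (s - 1)) * (A - B)) := by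
  have hsq (x : ℝ) (hx : 0 ≤ x) : (x ^ (s / 2)) ^ 2 = x ^ s := by
    rw [← Real.rpow_mul_natCast hx, Nat.cast_ofNat, div_mul_cancel₀ s two_ne_zero]
  calc twoPointEntropy (A ^ s) (B ^ s)
      = twoPointEntropy ((A ^ (s / 2)) ^ 2) ((B ^ (s / 2)) ^ 2) := by rw [hsq A hA, hsq B hB]
    _ ≤ (A ^ (s / 2) - B ^ (s / 2)) ^ 2 / 2 := twoPointEntropy_sq_le _ _
    _ ≤ s ^ 2 / (4 * (s - 1)) * ((A ^ (s - 1) - B ^ (s - 1)) * (A - B)) / 2 := by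
        gcongr
        exact sq_rpow_half_sub_le hA hB hs
    _ = s ^ 2 / (8 * (s - 1)) * ((A ^ (s - 1) - B ^ (s - 1)) * (A - B)) := by
        field_simp
        ring

end LogSobolev

section PowerMean

open Set

/-- The power mean of exponent `p` of two nonnegative numbers, that is, the normalised `ℓ_p` norm of
a nonnegative function with values `x` and `y` on a two-point space. -/
def powerMean (p x y : ℝ) : ℝ := ((x ^ p + y ^ p) / 2) ^ p⁻¹

lemma powerMean_nonneg {x y : ℝ} (p : ℝ) (hx : 0 ≤ x) (hy : 0 ≤ y) : 0 ≤ powerMean p x y := by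
  unfold powerMean
  positivity

lemma powerMean_rpow {p x y : ℝ} (hp : p ≠ 0) (hx : 0 ≤ x) (hy : 0 ≤ y) :
    powerMean p x y ^ p = (x ^ p + y ^ p) / 2 := by
  rw [powerMean, Real.rpow_inv_rpow (by positivity) hp]

lemma powerMean_self {p x : ℝ} (hp : p ≠ 0) (hx : 0 ≤ x) : powerMean p x x = x := by
  rw [powerMean, add_self_div_two, Real.rpow_rpow_inv hx hp]

lemma powerMean_le_powerMean {p x y x' y' : ℝ} (hp : 0 ≤ p) (hx : 0 ≤ x) (hy : 0 ≤ y)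
    (hxx' : x ≤ x') (hyy' : y ≤ y') : powerMean p x y ≤ powerMean p x' y' := by
  unfold powerMean
  gcongr

lemma continuousOn_powerMean {A B : ℝ → ℝ} {S : Set ℝ} (hA : ContinuousOn A S)
    (hB : ContinuousOn B S) (hS : ∀ s ∈ S, 0 < s) :
    ContinuousOn (fun s => powerMean s (A s) (B s)) S :=
  (((hA.rpow continuousOn_id fun s hs => Or.inr (hS s hs)).add
    (hB.rpow continuousOn_id fun s hs => Or.inr (hS s hs))).div_const 2).rpow
      (continuousOn_id.inv₀ fun s hs => (hS s hs).ne')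
      fun s hs => Or.inr (inv_pos.2 (hS s hs))

lemma hasDerivAt_powerMean {A B : ℝ → ℝ} {A' B' s : ℝ} (hs : s ≠ 0) (hA : HasDerivAt A A' s)
    (hB : HasDerivAt B B' s) (hA0 : 0 < A s) (hB0 : 0 < B s) :
    HasDerivAt (fun t => powerMean t (A t) (B t))
      (powerMean s (A s) (B s) / (s ^ 2 * ((A s ^ s + B s ^ s) / 2)) *
        (twoPointEntropy (A s ^ s) (B s ^ s) +
          s ^ 2 / 2 * (A' * A s ^ (s - 1) + B' * B s ^ (s - 1)))) s := by
  have hM0 : 0 < (A s ^ s + B s ^ s) / 2 := by positivity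
  have hM : HasDerivAt (fun t => (A t ^ t + B t ^ t) / 2)
      (((A' * s * A s ^ (s - 1) + 1 * A s ^ s * Real.log (A s)) +
        (B' * s * B s ^ (s - 1) + 1 * B s ^ s * Real.log (B s))) / 2) s :=
    ((hA.rpow (hasDerivAt_id s) hA0).add (hB.rpow (hasDerivAt_id s) hB0)).div_const 2
  refine (hM.rpow (hasDerivAt_inv hs) hM0).congr_deriv ?_
  rw [Real.rpow_sub_one hM0.ne', powerMean, twoPointEntropy, Real.log_rpow hA0, Real.log_rpow hB0]
  field_simp
  ring

lemma hasDerivAt_div_sqrt_sub_one (b : ℝ) {s : ℝ} (hs : 1 < s) :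
    HasDerivAt (fun t => b / √(t - 1)) (-(b / √(s - 1)) / (2 * (s - 1))) s := by
  have hs1 : 0 < s - 1 := sub_pos.2 hs
  have hsqrt : HasDerivAt (fun t => √(t - 1)) (1 / (2 * √(s - 1))) s :=
    ((hasDerivAt_id s).sub_const 1).sqrt hs1.ne'
  refine ((hasDerivAt_const s b).div hsqrt (by positivity)).congr_deriv ?_
  rw [Real.sq_sqrt hs1.le]
  field_simp
  ring

/-- The noise rate `b / √(t - 1)` is the one whose derivative turns the right-hand side of
`twoPointEntropy_rpow_le` into the second term. -/
lemma hasDerivAt_powerMean_add_sub {a b s A B : ℝ} (hs : 1 < s) (hA : a + b / √(s - 1) = A)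
    (hB : a - b / √(s - 1) = B) (hA0 : 0 < A) (hB0 : 0 < B) :
    HasDerivAt (fun t => powerMean t (a + b / √(t - 1)) (a - b / √(t - 1)))
      (powerMean s A B / (s ^ 2 * ((A ^ s + B ^ s) / 2)) *
        (twoPointEntropy (A ^ s) (B ^ s) -
          s ^ 2 / (8 * (s - 1)) * ((A ^ (s - 1) - B ^ (s - 1)) * (A - B)))) s := by
  have hs1 : s - 1 ≠ 0 := (sub_pos.2 hs).ne'
  have hrate := hasDerivAt_div_sqrt_sub_one b hs
  have hmean := hasDerivAt_powerMean (one_pos.trans hs).ne' (hrate.const_add a) (hrate.const_sub a)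
    (hA ▸ hA0) (hB ▸ hB0)
  rw [hA, hB] at hmean
  refine hmean.congr_deriv ?_
  have hdiff : b / √(s - 1) = (A - B) / 2 := by linarith
  rw [hdiff]
  field_simp
  ring

theorem antitoneOn_powerMean_add_sub {a b p : ℝ} (hp : 1 < p) (ha : 0 < a)
    (hb : |b| ≤ a * √(p - 1)) :
    AntitoneOn (fun s => powerMean s (a + b / √(s - 1)) (a - b / √(s - 1))) (Ici p) := by
  have hone (s : ℝ) (hs : s ∈ Ici p) : 1 < s := hp.trans_le hs
  have hrate : ContinuousOn (fun s => b / √(s - 1)) (Ici p) := fun s hs =>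
    (hasDerivAt_div_sqrt_sub_one b (hone s hs)).continuousAt.continuousWithinAt
  have hpos (s : ℝ) (hs : s ∈ interior (Ici p)) :
      0 < a + b / √(s - 1) ∧ 0 < a - b / √(s - 1) := by
    rw [interior_Ici, mem_Ioi] at hs
    have hs1 : 0 < √(s - 1) := Real.sqrt_pos.2 (by linarith)
    have hlt : |b / √(s - 1)| < a := by
      rw [abs_div, abs_of_pos hs1, div_lt_iff₀ hs1]
      exact hb.trans_lt (by gcongr)
    obtain ⟨hneg, hle⟩ := abs_lt.1 hlt
    constructor <;> linarith
  refine antitoneOn_of_hasDerivWithinAt_nonpos (convex_Ici p)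
    (continuousOn_powerMean (continuousOn_const.add hrate) (continuousOn_const.sub hrate)
      fun s hs => one_pos.trans (hone s hs))
    (fun s hs => (hasDerivAt_powerMean_add_sub (hone s (interior_subset hs)) rfl rfl
      (hpos s hs).1 (hpos s hs).2).hasDerivWithinAt)
    fun s hs => ?_
  obtain ⟨hA0, hB0⟩ := hpos s hs
  have hmean := powerMean_nonneg s hA0.le hB0.le
  exact mul_nonpos_of_nonneg_of_nonpos (by positivity)
    (sub_nonpos.2 (twoPointEntropy_rpow_le hA0.le hB0.le (hone s (interior_subset hs))))

end PowerMean

section TwoPoint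

lemma abs_add_mul_le {c : ℝ} (hc : |c| ≤ 1) (a b : ℝ) :
    |a + c * b| ≤ (1 + c) / 2 * |a + b| + (1 - c) / 2 * |a - b| := by
  obtain ⟨hneg, hle⟩ := abs_le.1 hc
  calc |a + c * b| = |(1 + c) / 2 * (a + b) + (1 - c) / 2 * (a - b)| := by ring_nf
    _ ≤ |(1 + c) / 2 * (a + b)| + |(1 - c) / 2 * (a - b)| := abs_add_le _ _
    _ = (1 + c) / 2 * |a + b| + (1 - c) / 2 * |a - b| := by
        rw [abs_mul, abs_mul, abs_of_nonneg (by linarith : 0 ≤ (1 + c) / 2),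
          abs_of_nonneg (by linarith : 0 ≤ (1 - c) / 2)]

lemma abs_add_mul_rpow_le {c q : ℝ} (hq : 1 ≤ q) (hc : |c| ≤ 1) (a b : ℝ) :
    |a + c * b| ^ q ≤ (1 + c) / 2 * |a + b| ^ q + (1 - c) / 2 * |a - b| ^ q := by
  obtain ⟨hneg, hle⟩ := abs_le.1 hc
  calc |a + c * b| ^ q ≤ ((1 + c) / 2 * |a + b| + (1 - c) / 2 * |a - b|) ^ q := by
        gcongr
        exact abs_add_mul_le hc a b
    _ ≤ (1 + c) / 2 * |a + b| ^ q + (1 - c) / 2 * |a - b| ^ q :=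
        (convexOn_rpow hq).2 (abs_nonneg (a + b)) (abs_nonneg (a - b)) (by linarith) (by linarith)
          (by ring)

lemma powerMean_abs_add_mul_le {c q : ℝ} (hq : 1 ≤ q) (hc : |c| ≤ 1) (a b : ℝ) :
    powerMean q |a + c * b| |a - c * b| ≤ powerMean q |a + b| |a - b| := by
  have hadd := abs_add_mul_rpow_le hq hc a b
  have hsub := abs_add_mul_rpow_le hq hc a (-b)
  simp only [mul_neg, ← sub_eq_add_neg, sub_neg_eq_add] at hsub
  unfold powerMean
  gcongr ?_ ^ _
  linarith

lemma powerMean_add_sqrt_mul_le {a b p q : ℝ} (hp : 1 < p) (hpq : p ≤ q) (hab : |b| ≤ a) :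
    powerMean q (a + √((p - 1) / (q - 1)) * b) (a - √((p - 1) / (q - 1)) * b) ≤
      powerMean p (a + b) (a - b) := by
  rcases ((abs_nonneg b).trans hab).eq_or_lt with rfl | ha
  · have hb : b = 0 := abs_nonpos_iff.1 hab
    simp [hb, powerMean_self (p := p) (by linarith), powerMean_self (p := q) (by linarith)]
  have hp1 : 0 < √(p - 1) := Real.sqrt_pos.2 (sub_pos.2 hp)
  have hanti := antitoneOn_powerMean_add_sub (b := b * √(p - 1)) hp ha
    (by rw [abs_mul, abs_of_pos hp1]; gcongr) Set.self_mem_Ici hpq hpq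
  simp only [mul_div_cancel_right₀ b hp1.ne'] at hanti
  rwa [Real.sqrt_div (sub_pos.2 hp).le, div_mul_eq_mul_div, mul_comm (√(p - 1))]

lemma powerMean_abs_add_sqrt_mul_le {p q : ℝ} (hp : 1 < p) (hpq : p ≤ q) (a b : ℝ) :
    powerMean q |a + √((p - 1) / (q - 1)) * b| |a - √((p - 1) / (q - 1)) * b| ≤
      powerMean p |a + b| |a - b| := by
  let ε := √((p - 1) / (q - 1))
  let a' := (|a + b| + |a - b|) / 2
  let b' := (|a + b| - |a - b|) / 2
  have hε1 : |ε| ≤ 1 := by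
    rw [abs_of_nonneg (Real.sqrt_nonneg _), Real.sqrt_le_one, div_le_one (by linarith)]
    linarith
  have hadd : |a + ε * b| ≤ a' + ε * b' :=
    (abs_add_mul_le hε1 a b).trans_eq (by simp only [a', b']; ring)
  have hsub : |a - ε * b| ≤ a' - ε * b' := by
    have h := abs_add_mul_le hε1 a (-b)
    simp only [mul_neg, ← sub_eq_add_neg, sub_neg_eq_add] at h
    exact h.trans_eq (by simp only [a', b']; ring)
  have hb' : |b'| ≤ a' := by
    simp only [a', b', abs_le]
    constructor <;> linarith [abs_nonneg (a + b), abs_nonneg (a - b)]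
  calc powerMean q |a + ε * b| |a - ε * b| ≤ powerMean q (a' + ε * b') (a' - ε * b') :=
        powerMean_le_powerMean (by linarith) (abs_nonneg _) (abs_nonneg _) hadd hsub
    _ ≤ powerMean p (a' + b') (a' - b') := powerMean_add_sqrt_mul_le hp hpq hb'
    _ = powerMean p |a + b| |a - b| := by simp only [a', b']; congr 1 <;> ring

theorem powerMean_abs_add_mul_le_powerMean {p q ε : ℝ} (hp : 1 ≤ p) (hpq : p ≤ q) (hq : 1 < q)
    (hε : |ε| ≤ √((p - 1) / (q - 1))) (a b : ℝ) :
    powerMean q |a + ε * b| |a - ε * b| ≤ powerMean p |a + b| |a - b| := by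
  rcases hp.eq_or_lt with rfl | hp
  · have hε0 : ε = 0 := by simpa using hε
    have hmean := powerMean_abs_add_mul_le le_rfl (by simp : |(0 : ℝ)| ≤ 1) a b
    simpa [hε0, powerMean_self (show q ≠ 0 by linarith), powerMean_self one_ne_zero] using hmean
  have hpos : 0 < √((p - 1) / (q - 1)) :=
    Real.sqrt_pos.2 (div_pos (sub_pos.2 hp) (sub_pos.2 hq))
  obtain ⟨c, hc⟩ : ∃ c, c * √((p - 1) / (q - 1)) = ε := ⟨_, div_mul_cancel₀ ε hpos.ne'⟩
  have hc1 : |c| ≤ 1 := by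
    rwa [← hc, abs_mul, abs_of_pos hpos, mul_le_iff_le_one_left hpos] at hε
  rw [← hc, mul_assoc]
  exact (powerMean_abs_add_mul_le hq.le hc1 a _).trans (powerMean_abs_add_sqrt_mul_le hp hpq a b)

end TwoPoint

section CubeNorm

variable {n : ℕ} {p q r : ℝ}

lemma cubeNorm_nonneg (p : ℝ) (f : (Fin n → Bool) → ℝ) : 0 ≤ cubeNorm p f := by
  unfold cubeNorm
  positivity

lemma cubeNorm_rpow (hp : p ≠ 0) (f : (Fin n → Bool) → ℝ) :
    cubeNorm p f ^ p = (2 ^ n : ℝ)⁻¹ * ∑ x, |f x| ^ p := by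
  rw [cubeNorm, one_div, Real.rpow_inv_rpow (by positivity) hp]

lemma cubeNorm_fin_zero (hp : p ≠ 0) (f : (Fin 0 → Bool) → ℝ) (x : Fin 0 → Bool) :
    cubeNorm p f = |f x| := by
  rw [cubeNorm, one_div, Fintype.sum_subsingleton _ x, pow_zero, inv_one, one_mul,
    Real.rpow_rpow_inv (abs_nonneg _) hp]

lemma cubeNorm_mono (hp : 0 ≤ p) {f g : (Fin n → Bool) → ℝ} (hfg : ∀ x, |f x| ≤ |g x|) :
    cubeNorm p f ≤ cubeNorm p g := by
  unfold cubeNorm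
  gcongr (_ * ∑ x, ?_ ^ _) ^ _ with x
  exact hfg x

lemma cubeNorm_add_le (hr : 1 ≤ r) (f g : (Fin n → Bool) → ℝ) :
    cubeNorm r (fun x => f x + g x) ≤ cubeNorm r f + cubeNorm r g := by
  simp only [cubeNorm, Real.mul_rpow (by positivity : (0 : ℝ) ≤ (2 ^ n)⁻¹)
    (Finset.sum_nonneg fun x _ => Real.rpow_nonneg (abs_nonneg _) r), ← mul_add]
  gcongr
  exact Real.Lp_add_le Finset.univ f g hr

lemma cubeNorm_const_mul (hp : p ≠ 0) (c : ℝ) (f : (Fin n → Bool) → ℝ) :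
    cubeNorm p (fun x => c * f x) = |c| * cubeNorm p f := by
  have h : (2 ^ n : ℝ)⁻¹ * ∑ x, |c * f x| ^ p = |c| ^ p * ((2 ^ n : ℝ)⁻¹ * ∑ x, |f x| ^ p) := by
    simp only [abs_mul, Real.mul_rpow (abs_nonneg _) (abs_nonneg _), ← Finset.mul_sum]
    ring
  rw [cubeNorm, cubeNorm, one_div p, h, Real.mul_rpow (by positivity) (by positivity),
    Real.rpow_rpow_inv (abs_nonneg c) hp]

lemma cubeNorm_rpow_div (hp : p ≠ 0) (f : (Fin n → Bool) → ℝ) :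
    cubeNorm (q / p) (fun x => |f x| ^ p) = cubeNorm q f ^ p := by
  simp only [cubeNorm, Real.abs_rpow_of_nonneg (abs_nonneg _), abs_abs,
    ← Real.rpow_mul (abs_nonneg _), mul_div_cancel₀ q hp]
  rw [← Real.rpow_mul (by positivity), one_div_div, one_div_mul_eq_div]

/-- This is Minkowski's inequality in `ℓ_{q/p}` for the functions `|f| ^ p` and `|g| ^ p`. -/
theorem cubeNorm_powerMean_le (hp : 0 < p) (hpq : p ≤ q) (f g : (Fin n → Bool) → ℝ) :
    cubeNorm q (fun x => powerMean p |f x| |g x|) ≤ powerMean p (cubeNorm q f) (cubeNorm q g) := by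
  have hr : 1 ≤ q / p := (one_le_div hp).2 hpq
  refine (Real.rpow_le_rpow_iff (cubeNorm_nonneg _ _)
    (powerMean_nonneg p (cubeNorm_nonneg _ _) (cubeNorm_nonneg _ _)) hp).1 ?_
  calc cubeNorm q (fun x => powerMean p |f x| |g x|) ^ p
      = cubeNorm (q / p) (fun x => 1 / 2 * (|f x| ^ p + |g x| ^ p)) := by
        rw [← cubeNorm_rpow_div hp.ne']
        congr 1 with x
        rw [abs_of_nonneg (powerMean_nonneg p (abs_nonneg _) (abs_nonneg _)),
          powerMean_rpow hp.ne' (abs_nonneg _) (abs_nonneg _)]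
        ring
    _ = 1 / 2 * cubeNorm (q / p) (fun x => |f x| ^ p + |g x| ^ p) := by
        rw [cubeNorm_const_mul (by positivity), abs_of_pos one_half_pos]
    _ ≤ 1 / 2 * (cubeNorm (q / p) (fun x => |f x| ^ p) + cubeNorm (q / p) fun x => |g x| ^ p) := by
        gcongr
        exact cubeNorm_add_le hr _ _
    _ = powerMean p (cubeNorm q f) (cubeNorm q g) ^ p := by
        rw [cubeNorm_rpow_div hp.ne', cubeNorm_rpow_div hp.ne',
          powerMean_rpow hp.ne' (cubeNorm_nonneg _ _) (cubeNorm_nonneg _ _)]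
        ring

lemma sum_cube_succ {M : Type*} [AddCommMonoid M] (g : (Fin (n + 1) → Bool) → M) :
    ∑ x, g x = ∑ y : Fin n → Bool, (g (Fin.cons false y) + g (Fin.cons true y)) := by
  rw [← (Fin.consEquiv fun _ => Bool).sum_comp, Fintype.sum_prod_type_right]
  refine Finset.sum_congr rfl fun y _ => ?_
  rw [Fintype.sum_bool, add_comm]
  rfl

lemma cubeNorm_succ_eq_cubeNorm_powerMean (hp : p ≠ 0) (f : (Fin (n + 1) → Bool) → ℝ) :
    cubeNorm p f =
      cubeNorm p fun x => powerMean p |f (Fin.cons false x)| |f (Fin.cons true x)| := by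
  have habs (x : Fin n → Bool) :=
    abs_of_nonneg (powerMean_nonneg p (abs_nonneg (f (Fin.cons false x)))
      (abs_nonneg (f (Fin.cons true x))))
  simp only [cubeNorm, habs, powerMean_rpow hp (abs_nonneg _) (abs_nonneg _), ← Finset.sum_div,
    sum_cube_succ, pow_succ]
  ring_nf

lemma cubeNorm_succ_eq_powerMean_cubeNorm (hp : p ≠ 0) (f : (Fin (n + 1) → Bool) → ℝ) :
    cubeNorm p f = powerMean p (cubeNorm p fun x => f (Fin.cons false x))
      (cubeNorm p fun x => f (Fin.cons true x)) := by
  rw [powerMean, cubeNorm_rpow hp, cubeNorm_rpow hp, cubeNorm, sum_cube_succ,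
    Finset.sum_add_distrib, pow_succ]
  ring_nf

end CubeNorm

section NoiseOp

variable {n : ℕ}

/-- The transition kernel of `T_ε`: the probability of reaching `y` from `x` when every coordinate
is negated independently with probability `(1 - ε) / 2`. -/
def noiseKernel (ε : ℝ) (x y : Fin n → Bool) : ℝ :=
  ∏ i, (1 + ε * ((if y i then -1 else 1) * (if x i then -1 else 1))) / 2

lemma noiseKernel_eq_sum_cubeChar (ε : ℝ) (x y : Fin n → Bool) :
    noiseKernel ε x y = (2 ^ n : ℝ)⁻¹ * ∑ S, ε ^ S.card * (cubeChar S y * cubeChar S x) := by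
  simp only [noiseKernel, cubeChar, Finset.prod_one_add,
    Finset.powerset_univ, Finset.prod_mul_distrib, Finset.prod_const, Finset.card_univ,
    Fintype.card_fin, div_eq_inv_mul, inv_pow]

lemma noiseOp_eq_sum_noiseKernel (ε : ℝ) (f : (Fin n → Bool) → ℝ) (x : Fin n → Bool) :
    noiseOp ε f x = ∑ y, noiseKernel ε x y * f y := by
  simp only [noiseOp, cubeFourier, noiseKernel_eq_sum_cubeChar, Finset.mul_sum, Finset.sum_mul]
  rw [Finset.sum_comm]
  refine Finset.sum_congr rfl fun y _ => Finset.sum_congr rfl fun S _ => ?_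
  ring

lemma noiseOp_fin_zero (ε : ℝ) (f : (Fin 0 → Bool) → ℝ) : noiseOp ε f = f := by
  funext x
  rw [noiseOp_eq_sum_noiseKernel, Fintype.sum_subsingleton _ x, noiseKernel, Fin.prod_univ_zero,
    one_mul]

lemma noiseOp_cons (ε : ℝ) (f : (Fin (n + 1) → Bool) → ℝ) (b : Bool) (x : Fin n → Bool) :
    noiseOp ε f (Fin.cons b x) =
      (1 + ε * (if b then -1 else 1)) / 2 * noiseOp ε (fun y => f (Fin.cons false y)) x +
      (1 - ε * (if b then -1 else 1)) / 2 * noiseOp ε (fun y => f (Fin.cons true y)) x := by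
  simp only [noiseOp_eq_sum_noiseKernel, noiseKernel, sum_cube_succ, Finset.mul_sum,
    ← Finset.sum_add_distrib, Fin.prod_univ_succ, Fin.cons_zero, Fin.cons_succ]
  refine Finset.sum_congr rfl fun y _ => ?_
  simp only [Bool.false_eq_true, if_false, if_true]
  ring

lemma powerMean_noiseOp_cons_le {p q ε : ℝ} (hp : 1 ≤ p) (hpq : p ≤ q) (hq : 1 < q)
    (hε : |ε| ≤ √((p - 1) / (q - 1))) (f : (Fin (n + 1) → Bool) → ℝ) (x : Fin n → Bool) :
    powerMean q |noiseOp ε f (Fin.cons false x)| |noiseOp ε f (Fin.cons true x)| ≤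
      powerMean p |noiseOp ε (fun y => f (Fin.cons false y)) x|
        |noiseOp ε (fun y => f (Fin.cons true y)) x| := by
  simp only [noiseOp_cons, Bool.false_eq_true, if_false, if_true]
  set u := noiseOp ε (fun y => f (Fin.cons false y)) x
  set v := noiseOp ε (fun y => f (Fin.cons true y)) x
  convert powerMean_abs_add_mul_le_powerMean hp hpq hq hε ((u + v) / 2) ((u - v) / 2) using 3 <;>
    ring

end NoiseOp

theorem noiseOp_hypercontractive_general {n : ℕ} (f : (Fin n → Bool) → ℝ) {p q ε : ℝ}
    (hp : 1 ≤ p) (hpq : p ≤ q) (hq : 1 < q) (hε : |ε| ≤ √((p - 1) / (q - 1))) :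
    cubeNorm q (noiseOp ε f) ≤ cubeNorm p f := by
  have hp0 : 0 < p := by linarith
  have hq0 : 0 < q := by linarith
  induction n with
  | zero =>
    rw [noiseOp_fin_zero, cubeNorm_fin_zero hq0.ne' f default, cubeNorm_fin_zero hp0.ne' f default]
  | succ n ih =>
    let f₀ : (Fin n → Bool) → ℝ := fun x => f (Fin.cons false x)
    let f₁ : (Fin n → Bool) → ℝ := fun x => f (Fin.cons true x)
    calc cubeNorm q (noiseOp ε f)
        = cubeNorm q fun x => powerMean q |noiseOp ε f (Fin.cons false x)|
            |noiseOp ε f (Fin.cons true x)| := cubeNorm_succ_eq_cubeNorm_powerMean hq0.ne' _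
      _ ≤ cubeNorm q fun x => powerMean p |noiseOp ε f₀ x| |noiseOp ε f₁ x| :=
          cubeNorm_mono hq0.le fun x => abs_le_abs_of_nonneg
            (powerMean_nonneg q (abs_nonneg _) (abs_nonneg _))
            (powerMean_noiseOp_cons_le hp hpq hq hε f x)
      _ ≤ powerMean p (cubeNorm q (noiseOp ε f₀)) (cubeNorm q (noiseOp ε f₁)) :=
          cubeNorm_powerMean_le hp0 hpq _ _
      _ ≤ powerMean p (cubeNorm p f₀) (cubeNorm p f₁) :=
          powerMean_le_powerMean hp0.le (cubeNorm_nonneg _ _) (cubeNorm_nonneg _ _) (ih f₀) (ih f₁)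
      _ = cubeNorm p f := (cubeNorm_succ_eq_powerMean_cubeNorm hp0.ne' f).symm

/-- Hypercontractivity of the noise operator on the boolean cube (Bonami, Gross):
if `1 ≤ p ≤ q`, `q > 1` and `0 ≤ ε ≤ √((p-1)/(q-1))`, then `‖T_ε f‖_q ≤ ‖f‖_p`. -/
theorem noiseOp_hypercontractive {n : ℕ} (f : (Fin n → Bool) → ℝ) (p q ε : ℝ)
    (hp : 1 ≤ p) (hpq : p ≤ q) (hq : 1 < q) (hε0 : 0 ≤ ε)
    (hε : ε ≤ Real.sqrt ((p - 1) / (q - 1))) :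
    cubeNorm q (noiseOp ε f) ≤ cubeNorm p f :=
  noiseOp_hypercontractive_general f hp hpq hq ((abs_of_nonneg hε0).trans_le hε)
end
end

section
/- Let f : ℝ^{n+1} → ℝ be a polynomial of degree at most d. Then for any q ≥ 2, ‖f‖_{L^q(S^n)} ≤ (q−1)^{d/2} ‖f‖_{L^2(S^n)}. -/
/-!
The sharp two-point inequality `(|a + b|^q + |a - b|^q) / 2 ≤ (a² + (q - 1) b²)^(q/2)` gives
`‖F‖_q ≤ (q - 1)^(d/2) ‖F‖_2` for polynomials `F` of degree at most `d` under the law of a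
Rademacher sum, by induction on the number of signs: conditioning on one sign splits `F` into an
even part of degree at most `d` and an odd part of degree at most `d - 1`. The central limit
theorem transfers the bound to the standard Gaussian measure; hypercontractivity itself supplies
the uniform integrability needed for the `L²` norms to converge.

In polar coordinates the Gaussian `L^p` norm of a homogeneous polynomial is the product of its
spherical `L^p` norm and of `‖|x|^d‖_p`. The radial factor is nondecreasing in `p` and cancels,
which settles homogeneous polynomials on the sphere. On the sphere, where `|x|² = 1`, a polynomial
of degree `d + 1` is the sum of a homogeneous polynomial of degree `d + 1` and one of degree `d`;
these have opposite parity, so the antipodal map makes one last use of the two-point inequality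
possible.
-/

noncomputable section

open MeasureTheory

open Filter Topology Function ProbabilityTheory
open scoped ENNReal NNReal RealInnerProductSpace

section TwoPoint

lemma mul_rpow_sub_one {x : ℝ} (hx : 0 < x) (m : ℝ) : x * x ^ (m - 1) = x ^ m := by
  rw [Real.rpow_sub_one hx.ne', mul_div_cancel₀ _ hx.ne']

lemma rpow_one_add_sub_rpow_one_sub_le {m t : ℝ} (hm : 1 ≤ m) (ht : t ∈ Set.Icc (0 : ℝ) 1) :
    (1 + t) ^ m - (1 - t) ^ m ≤ m * t * ((1 + t) ^ m + (1 - t) ^ m) := by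
  let f : ℝ → ℝ := fun t ↦ m * t * ((1 + t) ^ m + (1 - t) ^ m) - ((1 + t) ^ m - (1 - t) ^ m)
  have hderiv (x : ℝ) : HasDerivAt f
      (m * 1 * ((1 + x) ^ m + (1 - x) ^ m)
        + m * x * (1 * m * (1 + x) ^ (m - 1) + -1 * m * (1 - x) ^ (m - 1))
        - (1 * m * (1 + x) ^ (m - 1) - -1 * m * (1 - x) ^ (m - 1))) x := by
    have hadd := ((hasDerivAt_id x).const_add 1).rpow_const (Or.inr hm)
    have hsub := ((hasDerivAt_id x).const_sub 1).rpow_const (Or.inr hm)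
    exact (((hasDerivAt_id x).const_mul m).mul (hadd.add hsub)).sub (hadd.sub hsub)
  have hmono : MonotoneOn f (Set.Icc 0 1) := by
    refine monotoneOn_of_deriv_nonneg (convex_Icc 0 1)
      (fun x _ ↦ (hderiv x).continuousAt.continuousWithinAt)
      (fun x _ ↦ (hderiv x).differentiableAt.differentiableWithinAt) fun x hx ↦ ?_
    rw [interior_Icc] at hx
    have hle : (1 - x) ^ (m - 1) ≤ (1 + x) ^ (m - 1) := by
      gcongr <;> linarith [hx.1, hx.2]
    have hfactor : deriv f x =
        m * x * (1 + m) * ((1 + x) ^ (m - 1) - (1 - x) ^ (m - 1)) := by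
      rw [(hderiv x).deriv, ← mul_rpow_sub_one (x := 1 + x) (by linarith [hx.1]) m,
        ← mul_rpow_sub_one (x := 1 - x) (by linarith [hx.2]) m]
      ring
    rw [hfactor]
    have := hx.1
    have := sub_nonneg.2 hle
    positivity
  have h := hmono (Set.left_mem_Icc.2 zero_le_one) ht ht.1
  simp only [f, mul_zero, zero_mul, add_zero, sub_zero, Real.one_rpow, sub_self] at h
  linarith

lemma rpow_one_add_add_rpow_one_sub_le {q t : ℝ} (hq : 2 ≤ q) (ht : t ∈ Set.Icc (0 : ℝ) 1) :
    (1 + t) ^ q + (1 - t) ^ q ≤ 2 * (1 + (q - 1) * t ^ 2) ^ (q / 2) := by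
  have hpos (x : ℝ) : 0 < 1 + (q - 1) * x ^ 2 := by nlinarith [sq_nonneg x]
  let f : ℝ → ℝ := fun t ↦ ((1 + t) ^ q + (1 - t) ^ q) * (1 + (q - 1) * t ^ 2) ^ (-(q / 2))
  have hderiv (x : ℝ) : HasDerivAt f
      ((1 * q * (1 + x) ^ (q - 1) + -1 * q * (1 - x) ^ (q - 1))
          * (1 + (q - 1) * x ^ 2) ^ (-(q / 2))
        + ((1 + x) ^ q + (1 - x) ^ q)
          * ((q - 1) * (2 * x) * (-(q / 2)) * (1 + (q - 1) * x ^ 2) ^ (-(q / 2) - 1))) x := by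
    have hadd := ((hasDerivAt_id x).const_add 1).rpow_const (p := q) (Or.inr (by linarith))
    have hsub := ((hasDerivAt_id x).const_sub 1).rpow_const (p := q) (Or.inr (by linarith))
    have hsq : HasDerivAt (fun t : ℝ ↦ 1 + (q - 1) * t ^ 2) ((q - 1) * (2 * x)) x := by
      simpa using ((hasDerivAt_pow 2 x).const_mul (q - 1)).const_add 1
    exact (hadd.add hsub).mul (hsq.rpow_const (Or.inl (hpos x).ne'))
  have hanti : AntitoneOn f (Set.Icc 0 1) := by
    refine antitoneOn_of_deriv_nonpos (convex_Icc 0 1)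
      (fun x _ ↦ (hderiv x).continuousAt.continuousWithinAt)
      (fun x _ ↦ (hderiv x).differentiableAt.differentiableWithinAt) fun x hx ↦ ?_
    rw [interior_Icc] at hx
    have hfactor : deriv f x = q * (1 + (q - 1) * x ^ 2) ^ (-(q / 2) - 1) *
        (((1 + x) ^ (q - 1) - (1 - x) ^ (q - 1))
          - (q - 1) * x * ((1 + x) ^ (q - 1) + (1 - x) ^ (q - 1))) := by
      rw [(hderiv x).deriv, ← mul_rpow_sub_one (x := 1 + x) (by linarith [hx.1]) q,
        ← mul_rpow_sub_one (x := 1 - x) (by linarith [hx.2]) q,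
        ← mul_rpow_sub_one (hpos x) (-(q / 2))]
      ring
    have hweight : 0 ≤ (1 + (q - 1) * x ^ 2) ^ (-(q / 2) - 1) := Real.rpow_nonneg (hpos x).le _
    rw [hfactor]
    exact mul_nonpos_of_nonneg_of_nonpos (by positivity) (sub_nonpos.2
      (rpow_one_add_sub_rpow_one_sub_le (by linarith) (Set.Ioo_subset_Icc_self hx)))
  have h := hanti (Set.left_mem_Icc.2 zero_le_one) ht ht.1
  simp only [f, Real.rpow_neg (hpos t).le, ← div_eq_mul_inv] at h
  rw [div_le_iff₀ (Real.rpow_pos_of_pos (hpos t) _)] at h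
  norm_num at h
  linarith

theorem abs_add_rpow_add_abs_sub_rpow_le {q : ℝ} (hq : 2 ≤ q) (a b : ℝ) :
    |a + b| ^ q + |a - b| ^ q ≤ 2 * (a ^ 2 + (q - 1) * b ^ 2) ^ (q / 2) := by
  wlog hab : |b| ≤ |a| generalizing a b
  · have hle : a ^ 2 ≤ b ^ 2 := sq_le_sq.2 (not_le.1 hab).le
    calc |a + b| ^ q + |a - b| ^ q = |b + a| ^ q + |b - a| ^ q := by
          rw [add_comm, abs_sub_comm a b, add_comm a b, add_comm]
      _ ≤ 2 * (b ^ 2 + (q - 1) * a ^ 2) ^ (q / 2) := this b a (not_le.1 hab).le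
      _ ≤ 2 * (a ^ 2 + (q - 1) * b ^ 2) ^ (q / 2) := by
          gcongr 2 * ?_ ^ _
          · nlinarith [sq_nonneg a, sq_nonneg b]
          · nlinarith
  wlog ha : 0 ≤ a generalizing a b
  · have := this (-a) (-b) (by simpa using hab) (by linarith)
    rwa [← neg_add, abs_neg, ← neg_sub', abs_neg, neg_sq, neg_sq] at this
  wlog hb : 0 ≤ b generalizing b
  · have := this (-b) (by simpa using hab) (by linarith)
    rwa [← sub_eq_add_neg, sub_neg_eq_add, neg_sq, add_comm (_ ^ q)] at this
  rw [abs_of_nonneg ha, abs_of_nonneg hb] at hab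
  rw [abs_of_nonneg (add_nonneg ha hb), abs_of_nonneg (sub_nonneg.2 hab)]
  rcases ha.eq_or_lt with rfl | hapos
  · obtain rfl : b = 0 := le_antisymm hab hb
    simp [Real.zero_rpow (show q ≠ 0 by linarith), Real.zero_rpow (show q / 2 ≠ 0 by linarith)]
  have ht : b / a ∈ Set.Icc (0 : ℝ) 1 := ⟨by positivity, (div_le_one hapos).2 hab⟩
  have hsq : (a ^ 2) ^ (q / 2) = a ^ q := by
    rw [← Real.rpow_natCast, ← Real.rpow_mul ha]; congr 1; push_cast; ring
  calc (a + b) ^ q + (a - b) ^ q = a ^ q * ((1 + b / a) ^ q + (1 - b / a) ^ q) := by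
        rw [mul_add, ← Real.mul_rpow ha (by linarith [ht.1]),
          ← Real.mul_rpow ha (by linarith [ht.2])]
        congr 2 <;> field_simp
    _ ≤ a ^ q * (2 * (1 + (q - 1) * (b / a) ^ 2) ^ (q / 2)) := by
        gcongr; exact rpow_one_add_add_rpow_one_sub_le hq ht
    _ = 2 * (a ^ 2 + (q - 1) * b ^ 2) ^ (q / 2) := by
        rw [mul_left_comm, ← hsq,
          ← Real.mul_rpow (by positivity) (by nlinarith [sq_nonneg (b / a)])]
        congr 2; field_simp

end TwoPoint

section Symmetrization

lemma one_le_coe_sub_one {q : ℝ≥0} (hq : 2 ≤ q) : (1 : ℝ≥0∞) ≤ q - 1 := by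
  rw [← one_add_one_eq_two] at hq
  exact_mod_cast le_tsub_of_add_le_right hq

lemma sq_le_of_rpow_le_rpow_half {a b : ℝ≥0∞} {r : ℝ} (hr : 0 < r)
    (h : a ^ r ≤ b ^ (r / 2)) : a ^ 2 ≤ b := by
  rwa [← ENNReal.rpow_le_rpow_iff (half_pos hr), ← ENNReal.rpow_natCast, ← ENNReal.rpow_mul,
    Nat.cast_ofNat, mul_div_cancel₀ r two_ne_zero]

lemma sq_le_pow_mul_sq_iff {a b c : ℝ≥0∞} {d : ℕ} :
    a ^ 2 ≤ c ^ d * b ^ 2 ↔ a ≤ c ^ (d / 2 : ℝ) * b := by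
  have hc : c ^ d = (c ^ (d / 2 : ℝ)) ^ 2 := by
    rw [← ENNReal.rpow_natCast, ← ENNReal.rpow_natCast, ← ENNReal.rpow_mul, Nat.cast_ofNat,
      div_mul_cancel₀ _ two_ne_zero]
  rw [hc, ← mul_pow, ENNReal.pow_le_pow_left_iff two_ne_zero]

lemma enorm_add_rpow_add_enorm_sub_rpow_le {q : ℝ≥0} (hq : 2 ≤ q) (a b : ℝ) :
    ‖a + b‖ₑ ^ (q : ℝ) + ‖a - b‖ₑ ^ (q : ℝ) ≤ 2 * ‖a ^ 2 + (q - 1) * b ^ 2‖ₑ ^ (q / 2 : ℝ) := by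
  have hq2 : (2 : ℝ) ≤ q := mod_cast hq
  have hpos : 0 ≤ a ^ 2 + (q - 1) * b ^ 2 := by nlinarith [sq_nonneg a, sq_nonneg b]
  have hle := ENNReal.ofReal_le_ofReal (abs_add_rpow_add_abs_sub_rpow_le hq2 a b)
  rw [ENNReal.ofReal_add (by positivity) (by positivity), ENNReal.ofReal_mul zero_le_two] at hle
  rw [Real.enorm_eq_ofReal hpos, ENNReal.ofReal_rpow_of_nonneg hpos (by positivity)]
  simpa [Real.enorm_eq_ofReal_abs, ENNReal.ofReal_rpow_of_nonneg] using hle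

variable {X : Type*} [MeasurableSpace X] {ν : Measure X} {G H : X → ℝ} {q : ℝ≥0}

lemma eLpNorm_pow_two (f : X → ℝ) (p : ℝ≥0∞) (ν : Measure X) :
    eLpNorm (f ^ 2) p ν = eLpNorm f (p * 2) ν ^ 2 := by
  simpa [Pi.pow_def] using eLpNorm_norm_rpow (p := p) (μ := ν) f (q := 2) two_pos

lemma eLpNorm_add_rpow_add_eLpNorm_sub_rpow_le (hq : 2 ≤ q) (hG : AEStronglyMeasurable G ν)
    (hH : AEStronglyMeasurable H ν) :
    eLpNorm (G + H) q ν ^ (q : ℝ) + eLpNorm (G - H) q ν ^ (q : ℝ)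
      ≤ 2 * (eLpNorm G q ν ^ 2 + (q - 1) * eLpNorm H q ν ^ 2) ^ (q / 2 : ℝ) := by
  have hq0 : q ≠ 0 := by positivity
  let p : ℝ≥0 := q / 2
  have hp0 : p ≠ 0 := by positivity
  have hp1 : (1 : ℝ≥0∞) ≤ p := by
    rw [ENNReal.one_le_coe_iff, one_le_div two_pos]
    exact hq
  have hpq : (p : ℝ≥0∞) * 2 = q := by exact_mod_cast div_mul_cancel₀ q two_ne_zero
  have hweight : ‖(q : ℝ) - 1‖ₑ = q - 1 := by
    have : (1 : ℝ) ≤ q := mod_cast one_le_two.trans hq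
    rw [Real.enorm_eq_ofReal (sub_nonneg.2 this), ENNReal.ofReal_sub _ zero_le_one]
    simp
  calc eLpNorm (G + H) q ν ^ (q : ℝ) + eLpNorm (G - H) q ν ^ (q : ℝ)
      = ∫⁻ x, ‖(G + H) x‖ₑ ^ (q : ℝ) + ‖(G - H) x‖ₑ ^ (q : ℝ) ∂ν := by
        rw [eLpNorm_nnreal_pow_eq_lintegral hq0, eLpNorm_nnreal_pow_eq_lintegral hq0,
          lintegral_add_left' ((hG.add hH).enorm.pow_const _)]
    _ ≤ ∫⁻ x, 2 * ‖(G ^ 2 + ((q : ℝ) - 1) • H ^ 2) x‖ₑ ^ (p : ℝ) ∂ν :=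
        lintegral_mono fun x ↦ enorm_add_rpow_add_enorm_sub_rpow_le hq (G x) (H x)
    _ = 2 * eLpNorm (G ^ 2 + ((q : ℝ) - 1) • H ^ 2) p ν ^ (p : ℝ) := by
        rw [lintegral_const_mul' _ _ (by simp), eLpNorm_nnreal_pow_eq_lintegral hp0]
    _ ≤ 2 * (eLpNorm (G ^ 2) p ν + eLpNorm (((q : ℝ) - 1) • H ^ 2) p ν) ^ (p : ℝ) := by
        gcongr
        exact eLpNorm_add_le (hG.pow 2) ((hH.pow 2).const_smul _) hp1
    _ = 2 * (eLpNorm G q ν ^ 2 + (q - 1) * eLpNorm H q ν ^ 2) ^ (q / 2 : ℝ) := by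
        rw [eLpNorm_const_smul, eLpNorm_pow_two, eLpNorm_pow_two, hpq, hweight, NNReal.coe_div,
          NNReal.coe_ofNat]

lemma eLpNorm_two_add_sq_add_eLpNorm_two_sub_sq (hG : AEStronglyMeasurable G ν)
    (hH : AEStronglyMeasurable H ν) :
    eLpNorm (G + H) 2 ν ^ 2 + eLpNorm (G - H) 2 ν ^ 2
      = 2 * (eLpNorm G 2 ν ^ 2 + eLpNorm H 2 ν ^ 2) := by
  have hsq (f : X → ℝ) : eLpNorm f 2 ν ^ 2 = ∫⁻ x, ‖f x‖ₑ ^ 2 ∂ν := by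
    simpa using eLpNorm_nnreal_pow_eq_lintegral (f := f) (μ := ν) (p := 2) two_ne_zero
  have hpt (x : X) : ‖(G + H) x‖ₑ ^ 2 + ‖(G - H) x‖ₑ ^ 2 = 2 * (‖G x‖ₑ ^ 2 + ‖H x‖ₑ ^ 2) := by
    have := congrArg ENNReal.ofReal (parallelogram_law_with_norm ℝ (G x) (H x))
    simpa only [← sq, ENNReal.ofReal_add, ENNReal.ofReal_mul, ENNReal.ofReal_pow, ofReal_norm,
      sq_nonneg, norm_nonneg, zero_le_two, ENNReal.ofReal_ofNat, Pi.add_apply, Pi.sub_apply]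
      using this
  simp_rw [hsq]
  rw [← lintegral_add_left' ((hG.add hH).enorm.pow_const _), lintegral_congr hpt,
    lintegral_const_mul' _ _ (by simp), lintegral_add_left' (hG.enorm.pow_const _)]

theorem eLpNorm_add_rpow_add_eLpNorm_sub_rpow_le_of_hypercontractive {C : ℝ≥0∞} (hq : 2 ≤ q)
    (hG : AEStronglyMeasurable G ν) (hH : AEStronglyMeasurable H ν)
    (hGC : eLpNorm G q ν ^ 2 ≤ C * eLpNorm G 2 ν ^ 2)
    (hHC : (q - 1) * eLpNorm H q ν ^ 2 ≤ C * eLpNorm H 2 ν ^ 2) :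
    2⁻¹ * (eLpNorm (G + H) q ν ^ (q : ℝ) + eLpNorm (G - H) q ν ^ (q : ℝ))
      ≤ (C * (2⁻¹ * (eLpNorm (G + H) 2 ν ^ 2 + eLpNorm (G - H) 2 ν ^ 2))) ^ (q / 2 : ℝ) := by
  rw [eLpNorm_two_add_sq_add_eLpNorm_two_sub_sq hG hH,
    ENNReal.inv_mul_le_iff two_ne_zero ENNReal.ofNat_ne_top,
    ENNReal.inv_mul_cancel_left two_ne_zero ENNReal.ofNat_ne_top, mul_add]
  refine (eLpNorm_add_rpow_add_eLpNorm_sub_rpow_le hq hG hH).trans ?_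
  gcongr

end Symmetrization

section DifferenceDegree

open scoped fwdDiff

variable {E R : Type*} [AddCommMonoid E] [CommRing R]

/-- The functions `F : E → R` of degree less than `d` in the sense of Fréchet: all `d`-fold forward
differences `Δ_[v₁] ⋯ Δ_[v_d] F` vanish. The bound is strict so that the zero function is the only
function of degree less than `0`. -/
def diffDegreeLT (E R : Type*) [AddCommMonoid E] [CommRing R] : ℕ → Submodule R (E → R)
  | 0 => ⊥
  | d + 1 => ⨅ v, (diffDegreeLT E R d).comap (LinearMap.funLeft R R (· + v) - LinearMap.id)

@[simp] lemma mem_diffDegreeLT_zero {F : E → R} : F ∈ diffDegreeLT E R 0 ↔ F = 0 := Iff.rfl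

lemma mem_diffDegreeLT_succ {F : E → R} {d : ℕ} :
    F ∈ diffDegreeLT E R (d + 1) ↔ ∀ v, Δ_[v] F ∈ diffDegreeLT E R d :=
  Submodule.mem_iInf _

lemma const_mem_diffDegreeLT (c : R) : const E c ∈ diffDegreeLT E R 1 :=
  mem_diffDegreeLT_succ.2 fun v ↦ by ext; simp [fwdDiff]

lemma addMonoidHom_mem_diffDegreeLT (φ : E →+ R) : ⇑φ ∈ diffDegreeLT E R 2 :=
  mem_diffDegreeLT_succ.2 fun v ↦ by
    have : Δ_[v] ⇑φ = const E (φ v) := by ext; simp [fwdDiff]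
    exact this ▸ const_mem_diffDegreeLT (φ v)

lemma diffDegreeLT_monotone : Monotone (diffDegreeLT E R) := by
  refine monotone_nat_of_le_succ fun d ↦ ?_
  induction d with
  | zero => exact bot_le
  | succ d ih =>
    exact fun F hF ↦ mem_diffDegreeLT_succ.2 fun v ↦ ih (mem_diffDegreeLT_succ.1 hF v)

lemma comp_add_right_mem_diffDegreeLT {F : E → R} {d : ℕ} (hF : F ∈ diffDegreeLT E R d) (v : E) :
    (fun x ↦ F (x + v)) ∈ diffDegreeLT E R d := by
  cases d with
  | zero => exact (mem_diffDegreeLT_zero.1 hF) ▸ zero_mem (diffDegreeLT E R 0)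
  | succ d =>
    have : (fun x ↦ F (x + v)) = F + Δ_[v] F := by ext; simp [fwdDiff]
    exact this ▸ add_mem hF (diffDegreeLT_monotone d.le_succ (mem_diffDegreeLT_succ.1 hF v))

lemma mul_mem_diffDegreeLT {F G : E → R} {a b : ℕ} (hF : F ∈ diffDegreeLT E R a)
    (hG : G ∈ diffDegreeLT E R b) : F * G ∈ diffDegreeLT E R (a + b - 1) := by
  induction a generalizing F G b with
  | zero => simp [mem_diffDegreeLT_zero.1 hF]
  | succ a iha =>
    induction b generalizing F G with
    | zero => simp [mem_diffDegreeLT_zero.1 hG]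
    | succ b ihb =>
      rw [show a + 1 + (b + 1) - 1 = a + b + 1 by lia]
      refine mem_diffDegreeLT_succ.2 fun v ↦ ?_
      have leibniz : Δ_[v] (F * G) = (fun x ↦ F (x + v)) * Δ_[v] G + Δ_[v] F * G := by
        ext; simp only [fwdDiff, Pi.mul_apply, Pi.add_apply]; ring
      have hleft := ihb (comp_add_right_mem_diffDegreeLT hF v) (mem_diffDegreeLT_succ.1 hG v)
      have hright := iha (mem_diffDegreeLT_succ.1 hF v) hG
      rw [show a + 1 + b - 1 = a + b by lia] at hleft
      rw [show a + (b + 1) - 1 = a + b by lia] at hright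
      rw [leibniz]
      exact add_mem hleft hright

lemma pow_mem_diffDegreeLT {F : E → R} {a : ℕ} (hF : F ∈ diffDegreeLT E R (a + 1)) (k : ℕ) :
    F ^ k ∈ diffDegreeLT E R (k * a + 1) := by
  induction k with
  | zero => simpa using const_mem_diffDegreeLT (1 : R)
  | succ k ih => simpa [pow_succ, add_mul, add_right_comm] using mul_mem_diffDegreeLT ih hF

lemma prod_mem_diffDegreeLT {ι : Type*} {s : Finset ι} {F : ι → E → R} {a : ι → ℕ}
    (hF : ∀ i ∈ s, F i ∈ diffDegreeLT E R (a i + 1)) :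
    ∏ i ∈ s, F i ∈ diffDegreeLT E R (∑ i ∈ s, a i + 1) := by
  induction s using Finset.cons_induction with
  | empty => simpa using const_mem_diffDegreeLT (1 : R)
  | cons i s his ih =>
    rw [Finset.prod_cons, Finset.sum_cons]
    simpa [add_assoc, add_left_comm, add_comm] using
      mul_mem_diffDegreeLT (hF i (Finset.mem_cons_self i s))
        (ih fun j hj ↦ hF j (Finset.mem_cons_of_mem hj))

theorem eval_mem_diffDegreeLT {σ : Type*} (φ : σ → E →+ R) (P : MvPolynomial σ R) :
    (fun x ↦ MvPolynomial.eval (fun i ↦ φ i x) P) ∈ diffDegreeLT E R (P.totalDegree + 1) := by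
  have heval : (fun x ↦ MvPolynomial.eval (fun i ↦ φ i x) P)
      = ∑ m ∈ P.support, P.coeff m • ∏ i ∈ m.support, ⇑(φ i) ^ m i := by
    ext x; simp [MvPolynomial.eval_eq]
  rw [heval]
  refine Submodule.sum_mem _ fun m hm ↦ Submodule.smul_mem _ _ ?_
  have hle : ∑ i ∈ m.support, m i ≤ P.totalDegree := MvPolynomial.le_totalDegree hm
  refine diffDegreeLT_monotone (Nat.succ_le_succ hle) (prod_mem_diffDegreeLT fun i _ ↦ ?_)
  simpa using pow_mem_diffDegreeLT (addMonoidHom_mem_diffDegreeLT (φ i)) (m i)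

lemma exists_even_odd_mem_diffDegreeLT {E 𝕜 : Type*} [AddCommGroup E] [Field 𝕜] [NeZero (2 : 𝕜)]
    {F : E → 𝕜} {d : ℕ} (hF : F ∈ diffDegreeLT E 𝕜 (d + 1)) (v : E) :
    ∃ G ∈ diffDegreeLT E 𝕜 (d + 1), ∃ H ∈ diffDegreeLT E 𝕜 d,
      (fun x ↦ F (x + v)) = G + H ∧ (fun x ↦ F (x - v)) = G - H := by
  let A : E → 𝕜 := fun x ↦ F (x + v)
  let B : E → 𝕜 := fun x ↦ F (x + -v)
  have hA : A ∈ diffDegreeLT E 𝕜 (d + 1) := comp_add_right_mem_diffDegreeLT hF v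
  have hB : B ∈ diffDegreeLT E 𝕜 (d + 1) := comp_add_right_mem_diffDegreeLT hF (-v)
  have hAB : A - B = fun x ↦ (Δ_[v + v] F) (x + -v) := by ext x; simp [A, B, fwdDiff]
  have htwo : (2 : 𝕜) ≠ 0 := two_ne_zero
  refine ⟨(2⁻¹ : 𝕜) • (A + B), Submodule.smul_mem _ _ (add_mem hA hB),
    (2⁻¹ : 𝕜) • (A - B), Submodule.smul_mem _ _ ?_, ?_, ?_⟩
  · exact hAB ▸ comp_add_right_mem_diffDegreeLT (mem_diffDegreeLT_succ.1 hF _) _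
  all_goals
    ext x
    simp only [A, B, Pi.add_apply, Pi.sub_apply, Pi.smul_apply, smul_eq_mul, sub_eq_add_neg x v]
    field_simp
    ring

end DifferenceDegree

section Rademacher

variable {E : Type*} [AddCommGroup E] [MeasurableSpace E]

/-- The law of `ε • v` for a uniformly random sign `ε`. -/
def rademacher (v : E) : Measure E := (2⁻¹ : ℝ≥0∞) • (Measure.dirac v + Measure.dirac (-v))

/-- The law of the Rademacher sum `∑ εᵢ • vᵢ` over the entries `vᵢ` of a list, with independent
uniformly random signs `εᵢ`. -/
def rademacherSum : List E → Measure E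
  | [] => Measure.dirac 0
  | v :: l => (rademacher v).conv (rademacherSum l)

instance (v : E) : IsProbabilityMeasure (rademacher v) :=
  ⟨by simp [rademacher, ENNReal.inv_two_add_inv_two]⟩

lemma lintegral_rademacher [MeasurableSingletonClass E] (f : E → ℝ≥0∞) (v : E) :
    ∫⁻ x, f x ∂rademacher v = 2⁻¹ * (f v + f (-v)) := by
  simp [rademacher, mul_add]

lemma integral_rademacher [MeasurableSingletonClass E] {F : Type*} [NormedAddCommGroup F]
    [NormedSpace ℝ F] [CompleteSpace F] (f : E → F) (v : E) :
    ∫ x, f x ∂rademacher v = (2⁻¹ : ℝ) • (f v + f (-v)) := by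
  rw [rademacher, integral_smul_measure, integral_add_measure (integrable_dirac (by simp))
    (integrable_dirac (by simp))]
  simp

variable [MeasurableAdd₂ E]

instance (l : List E) : IsProbabilityMeasure (rademacherSum l) := by
  induction l with
  | nil => exact inferInstanceAs (IsProbabilityMeasure (Measure.dirac 0))
  | cons v l ih => exact inferInstanceAs (IsProbabilityMeasure (Measure.conv _ _))

variable [MeasurableSingletonClass E]

lemma lintegral_rademacherSum_cons {f : E → ℝ≥0∞} (hf : Measurable f) (v : E) (l : List E) :
    ∫⁻ x, f x ∂rademacherSum (v :: l)
      = 2⁻¹ * (∫⁻ x, f (x + v) ∂rademacherSum l + ∫⁻ x, f (x - v) ∂rademacherSum l) := by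
  rw [rademacherSum, Measure.lintegral_conv hf, lintegral_rademacher]
  simp_rw [add_comm _ v, sub_eq_neg_add]

lemma eLpNorm_rademacherSum_cons_rpow {F : E → ℝ} (hF : Measurable F) (v : E) (l : List E)
    {q : ℝ≥0} (hq : q ≠ 0) :
    eLpNorm F q (rademacherSum (v :: l)) ^ (q : ℝ)
      = 2⁻¹ * (eLpNorm (fun x ↦ F (x + v)) q (rademacherSum l) ^ (q : ℝ)
        + eLpNorm (fun x ↦ F (x - v)) q (rademacherSum l) ^ (q : ℝ)) := by
  simp_rw [eLpNorm_nnreal_pow_eq_lintegral hq]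
  exact lintegral_rademacherSum_cons (by fun_prop) v l

variable [MeasurableSub E]

lemma eLpNorm_rademacherSum_ne_top {F : E → ℝ} (hF : Measurable F) {q : ℝ≥0} (hq : q ≠ 0)
    (l : List E) : eLpNorm F q (rademacherSum l) ≠ ∞ := by
  induction l generalizing F with
  | nil => simp [rademacherSum, eLpNorm_dirac, hq]
  | cons v l ih =>
    have hadd := ih (hF.comp (measurable_add_const v))
    have hsub := ih (hF.comp (measurable_sub_const v))
    have hpow := eLpNorm_rademacherSum_cons_rpow hF v l hq
    rw [Ne, ← ENNReal.rpow_eq_top_iff_of_pos (NNReal.coe_pos.2 hq.bot_lt), hpow]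
    finiteness

theorem eLpNorm_rademacherSum_sq_le {F : E → ℝ} {d : ℕ} {q : ℝ≥0} (hq : 2 ≤ q)
    (hF : F ∈ diffDegreeLT E ℝ (d + 1)) (hFm : Measurable F) (l : List E) :
    eLpNorm F q (rademacherSum l) ^ 2
      ≤ (q - 1 : ℝ≥0∞) ^ d * eLpNorm F 2 (rademacherSum l) ^ 2 := by
  have hq0 : q ≠ 0 := by positivity
  induction l generalizing F d with
  | nil =>
    rw [rademacherSum, eLpNorm_dirac _ _ (by simpa using hq0), eLpNorm_dirac _ _ two_ne_zero]
    exact le_mul_of_one_le_left' (one_le_pow₀ (one_le_coe_sub_one hq))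
  | cons v l ih =>
    obtain ⟨G, hG, H, hH, hadd, hsub⟩ := exists_even_odd_mem_diffDegreeLT hF v
    have haddm : Measurable (G + H) := hadd ▸ hFm.comp (measurable_add_const v)
    have hsubm : Measurable (G - H) := hsub ▸ hFm.comp (measurable_sub_const v)
    have hGm : Measurable G := by
      have : G = (2⁻¹ : ℝ) • ((G + H) + (G - H)) := by ext; simp; ring
      exact this ▸ (haddm.add hsubm).const_smul _
    have hHm : Measurable H := by simpa using haddm.sub hGm
    have hHle : (q - 1) * eLpNorm H q (rademacherSum l) ^ 2
        ≤ (q - 1 : ℝ≥0∞) ^ d * eLpNorm H 2 (rademacherSum l) ^ 2 := by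
      cases d with
      | zero => simp [mem_diffDegreeLT_zero.1 hH]
      | succ d =>
        rw [pow_succ' (q - 1 : ℝ≥0∞) d, mul_assoc]
        gcongr
        exact ih hH hHm
    have htwo : eLpNorm F 2 (rademacherSum (v :: l)) ^ 2
        = 2⁻¹ * (eLpNorm (G + H) 2 (rademacherSum l) ^ 2
          + eLpNorm (G - H) 2 (rademacherSum l) ^ 2) := by
      simpa [hadd, hsub] using eLpNorm_rademacherSum_cons_rpow hFm v l two_ne_zero
    refine sq_le_of_rpow_le_rpow_half (r := q) (by positivity) ?_
    rw [eLpNorm_rademacherSum_cons_rpow hFm v l hq0, hadd, hsub, htwo]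
    exact eLpNorm_add_rpow_add_eLpNorm_sub_rpow_le_of_hypercontractive hq
      hGm.aestronglyMeasurable hHm.aestronglyMeasurable (ih hG hGm) hHle

end Rademacher

section CentralLimit

variable {E : Type*} [NormedAddCommGroup E] [InnerProductSpace ℝ E] [MeasurableSpace E]
  [BorelSpace E]

lemma charFun_rademacher (v t : E) : charFun (rademacher v) t = Complex.cos ⟪v, t⟫ := by
  rw [charFun_apply, integral_rademacher, Complex.cos, Complex.real_smul]
  simp [div_eq_inv_mul]

lemma charFun_rademacherSum [SecondCountableTopology E] (l : List E) (t : E) :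
    charFun (rademacherSum l) t = (l.map fun v ↦ Complex.cos ⟪v, t⟫).prod := by
  induction l with
  | nil => simp [rademacherSum, charFun_dirac]
  | cons v l ih => simp [rademacherSum, charFun_conv, charFun_rademacher, ih]

lemma tendsto_cos_inv_sqrt_mul_pow (x : ℝ) :
    Tendsto (fun n : ℕ ↦ Complex.cos ((√n)⁻¹ * x : ℝ) ^ n) atTop
      (𝓝 (Complex.exp (-x ^ 2 / 2))) := by
  have := tendsto_charFun_inv_sqrt_mul_pow (P := rademacher (1 : ℝ)) (X := id) aemeasurable_id
    (by simp [integral_rademacher]) (by simp [integral_rademacher]; norm_num) x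
  simpa [charFun_rademacher] using this

variable [FiniteDimensional ℝ E]

variable (E) in
/-- The Rademacher sum with `n` independent copies of each vector of an orthonormal basis scaled
by `1 / √n`, which approximates a standard Gaussian vector. -/
def rademacherGaussian (n : ℕ) : ProbabilityMeasure E :=
  ⟨rademacherSum (List.replicate n
    (List.ofFn fun i ↦ (√n)⁻¹ • stdOrthonormalBasis ℝ E i)).flatten, inferInstance⟩

theorem tendsto_rademacherGaussian :
    Tendsto (rademacherGaussian E) atTop (𝓝 ⟨stdGaussian E, inferInstance⟩) := by
  refine ProbabilityMeasure.tendsto_of_tendsto_charFun fun t ↦ ?_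
  have hchar (n : ℕ) : charFun (rademacherGaussian E n : Measure E) t
      = ∏ i, Complex.cos ((√n)⁻¹ * ⟪stdOrthonormalBasis ℝ E i, t⟫ : ℝ) ^ n := by
    simp [rademacherGaussian, charFun_rademacherSum, List.prod_ofFn, Finset.prod_pow,
      real_inner_smul_left]
  have hlim : charFun (stdGaussian E) t
      = ∏ i, Complex.exp (-⟪stdOrthonormalBasis ℝ E i, t⟫ ^ 2 / 2) := by
    rw [charFun_stdGaussian, ← Complex.exp_sum, ← Finset.sum_div, Finset.sum_neg_distrib]
    exact_mod_cast congrArg (fun s : ℝ ↦ Complex.exp (-s / 2))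
      ((stdOrthonormalBasis ℝ E).sum_sq_inner_right t).symm
  simp_rw [hchar]
  exact hlim ▸ tendsto_finsetProd _ fun i _ ↦ tendsto_cos_inv_sqrt_mul_pow _

end CentralLimit

section WeakLimit

lemma exists_measure_ge_lt {X : Type*} [MeasurableSpace X] {ν : Measure X} {f : X → ℝ≥0∞}
    (hf : AEMeasurable f ν) (hfi : ∫⁻ x, f x ∂ν ≠ ∞) {δ : ℝ≥0∞} (hδ : δ ≠ 0) :
    ∃ K : ℝ≥0, ν {x | K ≤ f x} < δ := by
  obtain ⟨k, hk⟩ := ENNReal.exists_nat_mul_gt hδ hfi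
  have hk0 : (k : ℝ≥0∞) ≠ 0 := by
    rintro hk0
    simp [hk0] at hk
  exact ⟨k, (meas_ge_le_lintegral_div hf (by simpa using hk0) ENNReal.coe_ne_top).trans_lt
    (ENNReal.div_lt_of_lt_mul' hk)⟩

variable {X G : Type*} [MeasurableSpace X] [NormedAddCommGroup G] {F : X → G} {p q : ℝ≥0}

lemma eLpNorm_rpow_le_lintegral_min_add {ν : Measure X} (hp : p ≠ 0) (hpq : p ≤ q)
    (hF : AEStronglyMeasurable F ν) (K : ℝ≥0∞) :
    eLpNorm F p ν ^ (p : ℝ) ≤ ∫⁻ x, min (‖F x‖ₑ ^ (p : ℝ)) K ∂ν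
      + eLpNorm F q ν ^ (p : ℝ) * ν {x | K ≤ ‖F x‖ₑ ^ (p : ℝ)} ^ (1 - p / q : ℝ) := by
  let A := {x | K ≤ ‖F x‖ₑ ^ (p : ℝ)}
  have htail : ∫⁻ x in A, ‖F x‖ₑ ^ (p : ℝ) ∂ν
      ≤ eLpNorm F q ν ^ (p : ℝ) * ν A ^ (1 - p / q : ℝ) :=
    calc ∫⁻ x in A, ‖F x‖ₑ ^ (p : ℝ) ∂ν
        = eLpNorm F p (ν.restrict A) ^ (p : ℝ) := (eLpNorm_nnreal_pow_eq_lintegral hp).symm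
      _ ≤ (eLpNorm F q (ν.restrict A) * ν A ^ (1 / p - 1 / q : ℝ)) ^ (p : ℝ) := by
        gcongr
        simpa using eLpNorm_le_eLpNorm_mul_rpow_measure_univ (ENNReal.coe_le_coe.2 hpq) hF.restrict
      _ ≤ (eLpNorm F q ν * ν A ^ (1 / p - 1 / q : ℝ)) ^ (p : ℝ) := by
        gcongr
        exact Measure.restrict_le_self
      _ = eLpNorm F q ν ^ (p : ℝ) * ν A ^ (1 - p / q : ℝ) := by
        rw [ENNReal.mul_rpow_of_nonneg _ _ p.coe_nonneg, ← ENNReal.rpow_mul, sub_mul,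
          one_div_mul_cancel (by exact_mod_cast hp), one_div_mul_eq_div]
  calc eLpNorm F p ν ^ (p : ℝ)
      = ∫⁻ x, ‖F x‖ₑ ^ (p : ℝ) ∂ν := eLpNorm_nnreal_pow_eq_lintegral hp
    _ ≤ ∫⁻ x, min (‖F x‖ₑ ^ (p : ℝ)) K + A.indicator (fun x ↦ ‖F x‖ₑ ^ (p : ℝ)) x ∂ν := by
      refine lintegral_mono fun x ↦ ?_
      by_cases hx : x ∈ A
      · simp [hx]
      · simp [hx, (not_le.1 (show ¬ K ≤ _ from hx)).le]
    _ ≤ ∫⁻ x, min (‖F x‖ₑ ^ (p : ℝ)) K ∂ν + ∫⁻ x in A, ‖F x‖ₑ ^ (p : ℝ) ∂ν := by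
      rw [lintegral_add_left' ((hF.enorm.pow_const _).min aemeasurable_const)]
      exact add_le_add_right (lintegral_indicator_le _ _) _
    _ ≤ _ := by gcongr

lemma mul_eLpNorm_rpow_le_lintegral_min {ν : Measure X} {c C K : ℝ≥0∞} (hp : p ≠ 0) (hpq : p ≤ q)
    (hF : AEStronglyMeasurable F ν) (hfin : eLpNorm F p ν ≠ ∞)
    (hle : eLpNorm F q ν ≤ C * eLpNorm F p ν) (hc : c ≤ 1)
    (hK : C ^ (p : ℝ) * ν {x | K ≤ ‖F x‖ₑ ^ (p : ℝ)} ^ (1 - p / q : ℝ) ≤ 1 - c) :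
    c * eLpNorm F p ν ^ (p : ℝ) ≤ ∫⁻ x, min (‖F x‖ₑ ^ (p : ℝ)) K ∂ν := by
  have hfin' : (1 - c) * eLpNorm F p ν ^ (p : ℝ) ≠ ∞ := by finiteness
  rw [← ENNReal.add_le_add_iff_right hfin', ← add_mul, add_tsub_cancel_of_le hc, one_mul]
  refine (eLpNorm_rpow_le_lintegral_min_add hp hpq hF K).trans (add_le_add_right ?_ _)
  let τ := ν {x | K ≤ ‖F x‖ₑ ^ (p : ℝ)} ^ (1 - p / q : ℝ)
  calc eLpNorm F q ν ^ (p : ℝ) * τ ≤ (C * eLpNorm F p ν) ^ (p : ℝ) * τ := by gcongr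
    _ = C ^ (p : ℝ) * τ * eLpNorm F p ν ^ (p : ℝ) := by
      rw [ENNReal.mul_rpow_of_nonneg _ _ p.coe_nonneg, mul_right_comm]
    _ ≤ (1 - c) * eLpNorm F p ν ^ (p : ℝ) := by gcongr

variable [TopologicalSpace X] [OpensMeasurableSpace X]
  {μs : ℕ → ProbabilityMeasure X} {μ : ProbabilityMeasure X}

lemma tendsto_lintegral_min_enorm_rpow (hμ : Tendsto μs atTop (𝓝 μ)) (hF : Continuous F)
    (K : ℝ≥0) :
    Tendsto (fun n ↦ ∫⁻ x, min (‖F x‖ₑ ^ (p : ℝ)) K ∂(μs n : Measure X)) atTop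
      (𝓝 (∫⁻ x, min (‖F x‖ₑ ^ (p : ℝ)) K ∂(μ : Measure X))) := by
  let g : BoundedContinuousFunction X ℝ≥0 :=
    .mkOfBound ⟨fun x ↦ min (‖F x‖₊ ^ (p : ℝ)) K, by fun_prop (disch := simp)⟩ K fun x y ↦
      abs_sub_le_of_nonneg_of_le NNReal.zero_le_coe (by simp) NNReal.zero_le_coe (by simp)
  have hg (x : X) : (g x : ℝ≥0∞) = min (‖F x‖ₑ ^ (p : ℝ)) K := by
    change ((min (‖F x‖₊ ^ (p : ℝ)) K : ℝ≥0) : ℝ≥0∞) = _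
    simp [enorm_eq_nnnorm, ENNReal.coe_rpow_of_nonneg]
  simpa only [hg] using ProbabilityMeasure.tendsto_iff_forall_lintegral_tendsto.1 hμ g

variable [HasOuterApproxClosed X]

lemma eLpNorm_le_liminf_of_tendsto (hμ : Tendsto μs atTop (𝓝 μ)) (hF : Continuous F) (hq : q ≠ 0) :
    eLpNorm F q μ ≤ liminf (fun n ↦ eLpNorm F q (μs n)) atTop := by
  have hq0 : (0 : ℝ) < q := by positivity
  have hpow := lintegral_le_liminf_lintegral_of_forall_isOpen_measure_le_liminf_measure
    (f := fun x ↦ ‖F x‖ ^ (q : ℝ)) (by fun_prop (disch := simp)) (fun x ↦ by positivity)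
    fun _ ↦ ProbabilityMeasure.le_liminf_measure_open_of_tendsto hμ
  simp_rw [← ENNReal.ofReal_rpow_of_nonneg (norm_nonneg _) q.coe_nonneg, ofReal_norm,
    ← eLpNorm_nnreal_pow_eq_lintegral hq] at hpow
  rw [← ENNReal.rpow_le_rpow_iff hq0]
  exact hpow.trans_eq ((ENNReal.orderIsoRpow q hq0).liminf_apply).symm

variable [SecondCountableTopologyEither X G]

theorem limsup_eLpNorm_le_of_tendsto {C : ℝ≥0∞} (hμ : Tendsto μs atTop (𝓝 μ)) (hF : Continuous F)
    (hp : p ≠ 0) (hpq : p < q) (hC : C ≠ ∞) (hfin : ∀ n, eLpNorm F p (μs n) ≠ ∞)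
    (hle : ∀ n, eLpNorm F q (μs n) ≤ C * eLpNorm F p (μs n)) :
    limsup (fun n ↦ eLpNorm F p (μs n)) atTop ≤ eLpNorm F p μ := by
  have hp0 : (0 : ℝ) < p := by positivity
  have hs : (0 : ℝ) < 1 - p / q := by
    rw [sub_pos, div_lt_one (hp0.trans (mod_cast hpq))]
    exact_mod_cast hpq
  rw [← ENNReal.rpow_le_rpow_iff hp0]
  refine ((ENNReal.orderIsoRpow p hp0).limsup_apply).trans_le
    (ENNReal.le_of_forall_lt_one_mul_le fun c hc ↦ ?_)
  obtain hμF | hμF := eq_or_ne (eLpNorm F p μ) ∞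
  · simp [hμF, hp0]
  let δ : ℝ≥0∞ := ((1 - c) / C ^ (p : ℝ)) ^ (1 / (1 - p / q) : ℝ)
  have hδ : C ^ (p : ℝ) * δ ^ (1 - p / q : ℝ) ≤ 1 - c := by
    rw [← ENNReal.rpow_mul, one_div_mul_cancel hs.ne', ENNReal.rpow_one]
    exact ENNReal.mul_div_le
  obtain ⟨K, hK⟩ : ∃ K : ℝ≥0, (μ : Measure X) {x | K ≤ ‖F x‖ₑ ^ (p : ℝ)} < δ := by
    have hδ0 : 0 < δ := ENNReal.rpow_pos_of_nonneg
      (ENNReal.div_pos (tsub_pos_of_lt hc).ne' (by finiteness)) (by positivity)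
    refine exists_measure_ge_lt (by fun_prop) ?_ hδ0.ne'
    rw [← eLpNorm_nnreal_pow_eq_lintegral hp]
    finiteness
  have htail : ∀ᶠ n in atTop, (μs n : Measure X) {x | K ≤ ‖F x‖ₑ ^ (p : ℝ)} < δ :=
    eventually_lt_of_limsup_lt <| (ProbabilityMeasure.limsup_measure_closed_le_of_tendsto hμ
      (isClosed_le (by fun_prop) (by fun_prop))).trans_lt hK
  have hmain : ∀ᶠ n in atTop, c * eLpNorm F p (μs n) ^ (p : ℝ)
      ≤ ∫⁻ x, min (‖F x‖ₑ ^ (p : ℝ)) K ∂(μs n : Measure X) := by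
    filter_upwards [htail] with n hn
    refine mul_eLpNorm_rpow_le_lintegral_min hp hpq.le hF.aestronglyMeasurable (hfin n) (hle n)
      hc.le (hδ.trans' ?_)
    gcongr
  calc c * limsup (fun n ↦ eLpNorm F p (μs n) ^ (p : ℝ)) atTop
      = limsup (fun n ↦ c * eLpNorm F p (μs n) ^ (p : ℝ)) atTop :=
        (ENNReal.limsup_const_mul_of_ne_top hc.ne_top).symm
    _ ≤ ∫⁻ x, min (‖F x‖ₑ ^ (p : ℝ)) K ∂(μ : Measure X) :=
        (limsup_le_limsup hmain).trans_eq (tendsto_lintegral_min_enorm_rpow hμ hF K).limsup_eq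
    _ ≤ ∫⁻ x, ‖F x‖ₑ ^ (p : ℝ) ∂(μ : Measure X) := lintegral_mono fun x ↦ min_le_left _ _
    _ = eLpNorm F p μ ^ (p : ℝ) := (eLpNorm_nnreal_pow_eq_lintegral hp).symm

theorem eLpNorm_le_mul_eLpNorm_of_tendsto {r : ℝ≥0} {C D : ℝ≥0∞} (hμ : Tendsto μs atTop (𝓝 μ))
    (hF : Continuous F) (hp : p ≠ 0) (hpq : p < q) (hr : r ≠ 0) (hC : C ≠ ∞) (hD : D ≠ ∞)
    (hfin : ∀ n, eLpNorm F p (μs n) ≠ ∞)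
    (hq : ∀ n, eLpNorm F q (μs n) ≤ C * eLpNorm F p (μs n))
    (hr' : ∀ n, eLpNorm F r (μs n) ≤ D * eLpNorm F p (μs n)) :
    eLpNorm F r μ ≤ D * eLpNorm F p μ :=
  calc eLpNorm F r μ ≤ liminf (fun n ↦ eLpNorm F r (μs n)) atTop :=
        eLpNorm_le_liminf_of_tendsto hμ hF hr
    _ ≤ limsup (fun n ↦ D * eLpNorm F p (μs n)) atTop :=
        (liminf_le_liminf (.of_forall hr')).trans liminf_le_limsup
    _ = D * limsup (fun n ↦ eLpNorm F p (μs n)) atTop := ENNReal.limsup_const_mul_of_ne_top hD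
    _ ≤ D * eLpNorm F p μ := by
        gcongr
        exact limsup_eLpNorm_le_of_tendsto hμ hF hp hpq hC hfin hq

end WeakLimit

section Gaussian

variable {E : Type*} [NormedAddCommGroup E] [InnerProductSpace ℝ E] [FiniteDimensional ℝ E]
  [MeasurableSpace E] [BorelSpace E]

theorem eLpNorm_stdGaussian_le {F : E → ℝ} {d : ℕ} {q : ℝ≥0} (hq : 2 ≤ q)
    (hF : F ∈ diffDegreeLT E ℝ (d + 1)) (hFc : Continuous F) :
    eLpNorm F q (stdGaussian E) ≤ (q - 1 : ℝ≥0∞) ^ (d / 2 : ℝ) * eLpNorm F 2 (stdGaussian E) := by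
  have htwo : ((2 : ℝ≥0) : ℝ≥0∞) = 2 := ENNReal.coe_ofNat 2
  have hle {r : ℝ≥0} (hr : 2 ≤ r) (n : ℕ) : eLpNorm F r (rademacherGaussian E n)
      ≤ (r - 1 : ℝ≥0∞) ^ (d / 2 : ℝ) * eLpNorm F (2 : ℝ≥0) (rademacherGaussian E n) := by
    rw [htwo]
    exact sq_le_pow_mul_sq_iff.1 (eLpNorm_rademacherSum_sq_le hr hF hFc.measurable _)
  rw [← htwo]
  -- The bound for an exponent above 2 makes `‖F‖²` uniformly integrable along the sequence.
  exact eLpNorm_le_mul_eLpNorm_of_tendsto (μ := ⟨stdGaussian E, inferInstance⟩) (q := 4)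
    tendsto_rademacherGaussian hFc two_ne_zero (by norm_num) (by positivity) (by finiteness)
    (by finiteness) (fun n ↦ eLpNorm_rademacherSum_ne_top hFc.measurable two_ne_zero _)
    (hle (r := 4) (by norm_num)) (hle hq)

end Gaussian

section Polar

variable {E : Type*} [NormedAddCommGroup E] [InnerProductSpace ℝ E] [MeasurableSpace E]
  [BorelSpace E]

lemma charFun_eq_of_norm_eq {μ : Measure E} (hμ : ∀ U : E ≃ₗᵢ[ℝ] E, μ.map U = μ) {s t : E}
    (hst : ‖s‖ = ‖t‖) : charFun μ s = charFun μ t := by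
  let U := (ℝ ∙ (s - t))ᗮ.reflection
  have hU (x : E) : ⟪U x, s⟫ = ⟪x, t⟫ := by
    rw [← Submodule.reflection_sub hst, ← U.inner_map_map]
    simp [U]
  rw [← hμ U, charFun_apply, integral_map U.continuous.aemeasurable (by fun_prop), hμ U]
  simp_rw [hU, charFun_apply]

variable [CompleteSpace E] [SecondCountableTopology E] {γ σ : Measure E}

theorem map_norm_smul_prod [IsFiniteMeasure γ] [IsProbabilityMeasure σ]
    (hγ : ∀ U : E ≃ₗᵢ[ℝ] E, γ.map U = γ) (hσ : ∀ U : E ≃ₗᵢ[ℝ] E, σ.map U = σ)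
    (hσ1 : ∀ᵐ x ∂σ, ‖x‖ = 1) : (γ.prod σ).map (fun z ↦ ‖z.1‖ • z.2) = γ := by
  have hint (t : E) : Integrable (fun z : E × E ↦ Complex.exp (⟪z.2, ‖t‖ • z.1⟫ * Complex.I))
      (γ.prod σ) :=
    .of_bound (by fun_prop) 1 (ae_of_all _ fun z ↦ (Complex.norm_exp_ofReal_mul_I _).le)
  refine Measure.ext_of_charFun (funext fun t ↦ ?_)
  calc charFun ((γ.prod σ).map fun z ↦ ‖z.1‖ • z.2) t
      = ∫ x, charFun σ (‖x‖ • t) ∂γ := by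
        rw [charFun_apply, integral_map (by fun_prop) (by fun_prop), integral_prod]
        · simp_rw [charFun_apply, inner_smul_left, inner_smul_right]
          rfl
        · exact .of_bound (by fun_prop) 1
            (ae_of_all _ fun z ↦ (Complex.norm_exp_ofReal_mul_I _).le)
    _ = ∫ x, charFun σ (‖t‖ • x) ∂γ := by
        congr! 2 with x
        exact charFun_eq_of_norm_eq hσ (by simp [norm_smul, mul_comm])
    _ = ∫ y, charFun γ (‖t‖ • y) ∂σ := by
        simp_rw [charFun_apply]
        rw [integral_integral_swap (hint t)]
        simp_rw [inner_smul_right, real_inner_comm]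
    _ = ∫ _, charFun γ t ∂σ := by
        refine integral_congr_ae ?_
        filter_upwards [hσ1] with y hy
        exact charFun_eq_of_norm_eq hγ (by simp [norm_smul, hy])
    _ = charFun γ t := by simp

theorem eLpNorm_eq_eLpNorm_norm_pow_mul_eLpNorm [IsFiniteMeasure γ] [IsProbabilityMeasure σ]
    (hγ : ∀ U : E ≃ₗᵢ[ℝ] E, γ.map U = γ) (hσ : ∀ U : E ≃ₗᵢ[ℝ] E, σ.map U = σ)
    (hσ1 : ∀ᵐ x ∂σ, ‖x‖ = 1) {f : E → ℝ} {d : ℕ} (hf : Measurable f)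
    (hfd : ∀ (r : ℝ) x, f (r • x) = r ^ d * f x) {q : ℝ≥0} (hq : q ≠ 0) :
    eLpNorm f q γ = eLpNorm (fun x ↦ ‖x‖ ^ d) q γ * eLpNorm f q σ := by
  have hq0 : (0 : ℝ) < q := by positivity
  rw [← (ENNReal.rpow_left_injective hq0.ne').eq_iff, ENNReal.mul_rpow_of_nonneg _ _ hq0.le]
  simp_rw [eLpNorm_nnreal_pow_eq_lintegral hq]
  rw [← lintegral_prod_mul (by fun_prop) (by fun_prop)]
  nth_rw 1 [← map_norm_smul_prod hγ hσ hσ1]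
  rw [lintegral_map (by fun_prop) (by fun_prop)]
  simp_rw [hfd, enorm_mul, ENNReal.mul_rpow_of_nonneg _ _ hq0.le]

end Polar

section HomogeneousOnSphere

variable {E : Type*} [NormedAddCommGroup E] [InnerProductSpace ℝ E] [FiniteDimensional ℝ E]
  [MeasurableSpace E] [BorelSpace E]

instance [Nontrivial E] : NullSingletonClass (stdGaussian E) := by
  refine IsGaussian.nullSingletonClass fun x hx ↦ ?_
  obtain ⟨L, hL⟩ := exists_ne (0 : StrongDual ℝ E)
  have hvar := variance_dual_stdGaussian L
  rw [hx, variance_dirac] at hvar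
  exact hL (by simpa using hvar.symm)

lemma eLpNorm_norm_pow_stdGaussian_ne_zero [Nontrivial E] (d : ℕ) {p : ℝ≥0∞} (hp : p ≠ 0) :
    eLpNorm (fun x ↦ ‖x‖ ^ d) p (stdGaussian E) ≠ 0 := by
  rw [Ne, eLpNorm_eq_zero_iff (by fun_prop) hp]
  intro h
  obtain ⟨x, hx, hx0⟩ := (h.and (Measure.ae_ne (stdGaussian E) 0)).exists
  exact pow_ne_zero d (norm_ne_zero_iff.2 hx0) hx

lemma eLpNorm_norm_pow_stdGaussian_ne_top (d : ℕ) {p : ℝ≥0∞} (hp : p ≠ ∞) :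
    eLpNorm (fun x ↦ ‖x‖ ^ d) p (stdGaussian E) ≠ ∞ := by
  obtain rfl | hd := eq_or_ne d 0
  · simpa using (memLp_const (μ := stdGaussian E) (p := p) (1 : ℝ)).eLpNorm_ne_top
  have hd0 : (d : ℝ≥0∞) ≠ 0 := by exact_mod_cast hd
  have h := (IsGaussian.memLp_id (stdGaussian E) (p * d) (by finiteness)).norm_rpow_div d
  rw [ENNReal.mul_div_cancel_right hd0 (ENNReal.natCast_ne_top d)] at h
  simpa using h.eLpNorm_ne_top

variable {σ : Measure E} [IsProbabilityMeasure σ]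

theorem eLpNorm_le_of_homogeneous (hσ : ∀ U : E ≃ₗᵢ[ℝ] E, σ.map U = σ)
    (hσ1 : ∀ᵐ x ∂σ, ‖x‖ = 1) {f : E → ℝ} {d : ℕ} {q : ℝ≥0} (hq : 2 ≤ q)
    (hf : f ∈ diffDegreeLT E ℝ (d + 1)) (hfc : Continuous f)
    (hfd : ∀ (r : ℝ) x, f (r • x) = r ^ d * f x) :
    eLpNorm f q σ ≤ (q - 1 : ℝ≥0∞) ^ (d / 2 : ℝ) * eLpNorm f 2 σ := by
  have hpolar {r : ℝ≥0} (hr : r ≠ 0) : eLpNorm f r (stdGaussian E)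
      = eLpNorm (fun x ↦ ‖x‖ ^ d) r (stdGaussian E) * eLpNorm f r σ :=
    eLpNorm_eq_eLpNorm_norm_pow_mul_eLpNorm (γ := stdGaussian E) (fun U ↦ stdGaussian_map U)
      hσ hσ1 hfc.measurable hfd hr
  have hpolar_two := hpolar two_ne_zero
  rw [ENNReal.coe_ofNat 2] at hpolar_two
  obtain ⟨x, hx⟩ := hσ1.exists
  have : Nontrivial E := nontrivial_of_ne x 0 (norm_ne_zero_iff.1 (hx ▸ one_ne_zero))
  let ρ := eLpNorm (fun x : E ↦ ‖x‖ ^ d) 2 (stdGaussian E)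
  have hρ : ρ ≤ eLpNorm (fun x : E ↦ ‖x‖ ^ d) q (stdGaussian E) :=
    eLpNorm_le_eLpNorm_of_exponent_le (by exact_mod_cast hq) (by fun_prop)
  rw [← ENNReal.mul_le_mul_iff_right (eLpNorm_norm_pow_stdGaussian_ne_zero (E := E) d two_ne_zero)
    (eLpNorm_norm_pow_stdGaussian_ne_top d ENNReal.ofNat_ne_top)]
  calc ρ * eLpNorm f q σ ≤ eLpNorm (fun x : E ↦ ‖x‖ ^ d) q (stdGaussian E) * eLpNorm f q σ := by
        gcongr
    _ = eLpNorm f q (stdGaussian E) := (hpolar (by positivity)).symm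
    _ ≤ (q - 1 : ℝ≥0∞) ^ (d / 2 : ℝ) * eLpNorm f 2 (stdGaussian E) :=
        eLpNorm_stdGaussian_le hq hf hfc
    _ = ρ * ((q - 1 : ℝ≥0∞) ^ (d / 2 : ℝ) * eLpNorm f 2 σ) := by rw [hpolar_two, mul_left_comm]

end HomogeneousOnSphere

section Polynomial

open MvPolynomial

lemma eval_mul_of_isHomogeneous {ι R : Type*} [CommSemiring R] {P : MvPolynomial ι R} {d : ℕ}
    (hP : P.IsHomogeneous d) (r : R) (x : ι → R) :
    eval (fun i ↦ r * x i) P = r ^ d * eval x P := by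
  rw [eval_eq, eval_eq, Finset.mul_sum]
  refine Finset.sum_congr rfl fun m hm ↦ ?_
  rw [hP.degree_eq_sum_deg_support hm, ← Finset.prod_pow_eq_pow_sum, mul_left_comm,
    ← Finset.prod_mul_distrib]
  simp_rw [mul_pow]

lemma exists_isHomogeneous_add_isHomogeneous {ι R : Type*} [Fintype ι] [CommRing R]
    {f : ℕ → MvPolynomial ι R} (hf : ∀ k, (f k).IsHomogeneous k) (d : ℕ) :
    ∃ G H : MvPolynomial ι R, G.IsHomogeneous (d + 1) ∧ H.IsHomogeneous d ∧
      ∀ x, ∑ i, x i ^ 2 = 1 → eval x (∑ k ∈ Finset.range (d + 2), f k) = eval x (G + H) := by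
  induction d with
  | zero => exact ⟨f 1, f 0, hf 1, hf 0, fun x _ ↦ by simp [Finset.sum_range_succ, add_comm]⟩
  | succ d ih =>
    obtain ⟨G, H, hG, hH, h⟩ := ih
    have hsq : (∑ i, X i ^ 2 : MvPolynomial ι R).IsHomogeneous 2 :=
      .sum _ _ _ fun i _ ↦ isHomogeneous_X_pow i 2
    refine ⟨f (d + 2) + H * ∑ i, X i ^ 2, G, (hf _).add (hH.mul hsq), hG, fun x hx ↦ ?_⟩
    rw [Finset.sum_range_succ, map_add, h x hx]
    simp only [map_add, map_mul, map_sum, map_pow, eval_X, hx]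
    ring

variable {ι : Type*}

/-- The polynomial function on Euclidean space obtained by substituting the coordinates. -/
def euclideanEval (P : MvPolynomial ι ℝ) (x : EuclideanSpace ℝ ι) : ℝ := eval x P

lemma continuous_euclideanEval (P : MvPolynomial ι ℝ) : Continuous (euclideanEval P) :=
  P.continuous_eval.comp (by fun_prop)

lemma euclideanEval_smul {P : MvPolynomial ι ℝ} {d : ℕ} (hP : P.IsHomogeneous d) (r : ℝ)
    (x : EuclideanSpace ℝ ι) : euclideanEval P (r • x) = r ^ d * euclideanEval P x :=
  eval_mul_of_isHomogeneous hP r x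

lemma euclideanEval_mem_diffDegreeLT {P : MvPolynomial ι ℝ} {d : ℕ} (hP : P.totalDegree ≤ d) :
    euclideanEval P ∈ diffDegreeLT (EuclideanSpace ℝ ι) ℝ (d + 1) :=
  diffDegreeLT_monotone (Nat.succ_le_succ hP)
    (eval_mem_diffDegreeLT (fun i ↦ ⟨⟨fun x : EuclideanSpace ℝ ι ↦ x i, rfl⟩, fun _ _ ↦ rfl⟩) P)

variable {σ : Measure (EuclideanSpace ℝ ι)}

lemma eLpNorm_euclideanEval_sub [Finite ι] [σ.IsNegInvariant] {G H : MvPolynomial ι ℝ} {d : ℕ}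
    (hG : G.IsHomogeneous (d + 1)) (hH : H.IsHomogeneous d) (p : ℝ≥0∞) :
    eLpNorm (euclideanEval G - euclideanEval H) p σ
      = eLpNorm (euclideanEval G + euclideanEval H) p σ := by
  have := Fintype.ofFinite ι
  have hc : Continuous (euclideanEval G + euclideanEval H) :=
    (continuous_euclideanEval G).add (continuous_euclideanEval H)
  rw [← eLpNorm_comp_measurePreserving (g := euclideanEval G + euclideanEval H)
    hc.aestronglyMeasurable (Measure.measurePreserving_neg σ)]
  refine eLpNorm_congr_norm_ae (ae_of_all _ fun x ↦ ?_)
  rw [comp_apply, ← neg_one_smul ℝ x, Pi.add_apply, Pi.sub_apply, euclideanEval_smul hG,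
    euclideanEval_smul hH, pow_succ, mul_neg_one, neg_mul, neg_add_eq_sub, ← mul_sub]
  simp [abs_sub_comm]

variable [Fintype ι] [IsProbabilityMeasure σ] {q : ℝ≥0}

lemma eLpNorm_euclideanEval_le_of_isHomogeneous
    (hσ : ∀ U : EuclideanSpace ℝ ι ≃ₗᵢ[ℝ] EuclideanSpace ℝ ι, σ.map U = σ)
    (hσ1 : ∀ᵐ x ∂σ, ‖x‖ = 1) (hq : 2 ≤ q) {P : MvPolynomial ι ℝ} {d : ℕ}
    (hP : P.IsHomogeneous d) :
    eLpNorm (euclideanEval P) q σ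
      ≤ (q - 1 : ℝ≥0∞) ^ (d / 2 : ℝ) * eLpNorm (euclideanEval P) 2 σ :=
  eLpNorm_le_of_homogeneous hσ hσ1 hq (euclideanEval_mem_diffDegreeLT hP.totalDegree_le)
    (continuous_euclideanEval P) (euclideanEval_smul hP)

lemma eLpNorm_euclideanEval_add_le_of_isHomogeneous
    (hσ : ∀ U : EuclideanSpace ℝ ι ≃ₗᵢ[ℝ] EuclideanSpace ℝ ι, σ.map U = σ)
    (hσ1 : ∀ᵐ x ∂σ, ‖x‖ = 1) (hq : 2 ≤ q) {G H : MvPolynomial ι ℝ} {d : ℕ}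
    (hG : G.IsHomogeneous (d + 1)) (hH : H.IsHomogeneous d) :
    eLpNorm (euclideanEval G + euclideanEval H) q σ ≤ (q - 1 : ℝ≥0∞) ^ ((d + 1 : ℕ) / 2 : ℝ)
      * eLpNorm (euclideanEval G + euclideanEval H) 2 σ := by
  have : σ.IsNegInvariant := ⟨hσ (LinearIsometryEquiv.neg ℝ)⟩
  have hGle := eLpNorm_euclideanEval_le_of_isHomogeneous hσ hσ1 hq hG
  have hHle : (q - 1 : ℝ≥0∞) * eLpNorm (euclideanEval H) q σ ^ 2
      ≤ (q - 1) ^ (d + 1) * eLpNorm (euclideanEval H) 2 σ ^ 2 := by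
    rw [pow_succ' (q - 1 : ℝ≥0∞) d, mul_assoc]
    gcongr
    exact sq_le_pow_mul_sq_iff.2 (eLpNorm_euclideanEval_le_of_isHomogeneous hσ hσ1 hq hH)
  have hsym := eLpNorm_add_rpow_add_eLpNorm_sub_rpow_le_of_hypercontractive hq
    (continuous_euclideanEval G).aestronglyMeasurable
    (continuous_euclideanEval H).aestronglyMeasurable (sq_le_pow_mul_sq_iff.2 hGle) hHle
  simp_rw [eLpNorm_euclideanEval_sub hG hH, ← two_mul,
    ENNReal.inv_mul_cancel_left two_ne_zero ENNReal.ofNat_ne_top] at hsym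
  exact sq_le_pow_mul_sq_iff.1 (sq_le_of_rpow_le_rpow_half (by positivity) hsym)

theorem eLpNorm_euclideanEval_le
    (hσ : ∀ U : EuclideanSpace ℝ ι ≃ₗᵢ[ℝ] EuclideanSpace ℝ ι, σ.map U = σ)
    (hσ1 : ∀ᵐ x ∂σ, ‖x‖ = 1) (hq : 2 ≤ q) (P : MvPolynomial ι ℝ) :
    eLpNorm (euclideanEval P) q σ
      ≤ (q - 1 : ℝ≥0∞) ^ (P.totalDegree / 2 : ℝ) * eLpNorm (euclideanEval P) 2 σ := by
  cases hd : P.totalDegree with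
  | zero =>
    exact eLpNorm_euclideanEval_le_of_isHomogeneous hσ hσ1 hq
      ((totalDegree_zero_iff_isHomogeneous _).1 hd)
  | succ d =>
    obtain ⟨G, H, hG, hH, hGH⟩ := exists_isHomogeneous_add_isHomogeneous
      (fun k ↦ homogeneousComponent_isHomogeneous k P) d
    have hP : euclideanEval P =ᵐ[σ] euclideanEval G + euclideanEval H := by
      filter_upwards [hσ1] with x hx
      have hx2 : ∑ i, x i ^ 2 = 1 := by rw [← EuclideanSpace.real_norm_sq_eq, hx, one_pow]
      have h := hGH x hx2
      rwa [show d + 2 = P.totalDegree + 1 by lia, sum_homogeneousComponent, map_add] at h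
    rw [eLpNorm_congr_ae hP, eLpNorm_congr_ae hP]
    exact eLpNorm_euclideanEval_add_le_of_isHomogeneous hσ hσ1 hq hG hH

end Polynomial

lemma integral_abs_rpow_le_of_eLpNorm_le {X : Type*} [MeasurableSpace X] {μ : Measure X}
    {f : X → ℝ} {q : ℝ≥0} {C : ℝ≥0∞} (hq : q ≠ 0) (hf : MemLp f 2 μ) (hC : C ≠ ∞)
    (h : eLpNorm f q μ ≤ C * eLpNorm f 2 μ) :
    (∫ x, |f x| ^ (q : ℝ) ∂μ) ^ (1 / q : ℝ) ≤ C.toReal * (∫ x, f x ^ 2 ∂μ) ^ (1 / 2 : ℝ) := by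
  have hlp : lpNorm f q μ ≤ C.toReal * lpNorm f 2 μ := by
    rw [← toReal_eLpNorm hf.1, ← toReal_eLpNorm hf.1, ← ENNReal.toReal_mul]
    exact ENNReal.toReal_mono (ENNReal.mul_ne_top hC hf.eLpNorm_ne_top) h
  rw [lpNorm_nnreal_eq_integral_norm_rpow hq hf.1,
    lpNorm_eq_integral_norm_rpow_toReal two_ne_zero ENNReal.ofNat_ne_top hf.1] at hlp
  simpa using hlp

lemma ae_norm_eq_map_coe_sphere {E : Type*} [NormedAddCommGroup E] [MeasurableSpace E]
    [BorelSpace E] {r : ℝ} (μ : Measure (Metric.sphere (0 : E) r)) :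
    ∀ᵐ x ∂μ.map Subtype.val, ‖x‖ = r :=
  (ae_map_iff (by fun_prop) (measurableSet_eq_fun (by fun_prop) (by fun_prop))).2
    (ae_of_all _ fun ξ ↦ mem_sphere_zero_iff_norm.1 ξ.2)

/-- Hypercontractive norm inequality for low-degree polynomials on the real `n`-sphere:
if `μ` is the uniform (rotation-invariant) probability measure on
`S^n = {x ∈ ℝ^{n+1} : ‖x‖ = 1}` and `f` is (the restriction of) a polynomial of degree
at most `d`, then for any `q ≥ 2`, `‖f‖_{L^q(S^n)} ≤ (q-1)^{d/2} ‖f‖_{L^2(S^n)}`. -/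
theorem sphere_poly_hypercontractive {n d : ℕ}
    (μ : Measure (Metric.sphere (0 : EuclideanSpace ℝ (Fin (n + 1))) 1))
    [IsProbabilityMeasure μ]
    (hinv : ∀ U : EuclideanSpace ℝ (Fin (n + 1)) ≃ₗᵢ[ℝ] EuclideanSpace ℝ (Fin (n + 1)),
      Measure.map (fun ξ : Metric.sphere (0 : EuclideanSpace ℝ (Fin (n + 1))) 1 =>
        (⟨U ξ.1, by
          rw [mem_sphere_zero_iff_norm, U.norm_map, ← mem_sphere_zero_iff_norm]
          exact ξ.2⟩ : Metric.sphere (0 : EuclideanSpace ℝ (Fin (n + 1))) 1)) μ = μ)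
    (P : MvPolynomial (Fin (n + 1)) ℝ) (hdeg : P.totalDegree ≤ d)
    (q : ℝ) (hq : 2 ≤ q) :
    (∫ ξ, |MvPolynomial.eval (fun i => ξ.1 i) P| ^ q ∂μ) ^ (1 / q)
      ≤ (q - 1) ^ ((d : ℝ) / 2) *
          (∫ ξ, (MvPolynomial.eval (fun i => ξ.1 i) P) ^ 2 ∂μ) ^ ((1 : ℝ) / 2) := by
  lift q to ℝ≥0 using by positivity
  have hq' : 2 ≤ q := by exact_mod_cast hq
  let σ : Measure (EuclideanSpace ℝ (Fin (n + 1))) := μ.map Subtype.val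
  have : IsProbabilityMeasure σ := Measure.isProbabilityMeasure_map (by fun_prop)
  have hσ (U : EuclideanSpace ℝ (Fin (n + 1)) ≃ₗᵢ[ℝ] EuclideanSpace ℝ (Fin (n + 1))) :
      σ.map U = σ :=
    (measurable_subtype_coe.measurePreserving μ |>.of_semiconj ⟨by fun_prop, hinv U⟩
      (fun _ ↦ rfl) U.continuous.measurable).map_eq
  have hσq : eLpNorm (euclideanEval P) q σ
      ≤ (q - 1 : ℝ≥0∞) ^ (d / 2 : ℝ) * eLpNorm (euclideanEval P) 2 σ := by
    refine (eLpNorm_euclideanEval_le hσ (ae_norm_eq_map_coe_sphere μ) hq' P).trans ?_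
    gcongr
    exact one_le_coe_sub_one hq'
  have hc : Continuous (euclideanEval P) := continuous_euclideanEval P
  rw [eLpNorm_map_measure hc.aestronglyMeasurable (by fun_prop),
    eLpNorm_map_measure hc.aestronglyMeasurable (by fun_prop)] at hσq
  have hf := (hc.comp continuous_subtype_val).memLp_of_hasCompactSupport (μ := μ) (p := 2)
    (.of_compactSpace _)
  have hC : ((q - 1 : ℝ≥0∞) ^ (d / 2 : ℝ)).toReal = ((q : ℝ) - 1) ^ (d / 2 : ℝ) := by
    rw [← ENNReal.toReal_rpow, ENNReal.toReal_sub_of_le (mod_cast one_le_two.trans hq')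
      (by finiteness), ENNReal.toReal_one, ENNReal.coe_toReal]
  rw [← hC]
  exact integral_abs_rpow_le_of_eLpNorm_le (by positivity) hf (by finiteness) hσq
end
end

section
/- Let f : (ℝ^{n+1})^k → ℝ be a polynomial which has degree at most d in the components of each of its k blocks of variables x^1, …, x^k ∈ ℝ^{n+1}. Then for any q ≥ 2, ‖f‖_{L^q((S^n)^k)} ≤ (q−1)^{dk/2} ‖f‖_{L^2((S^n)^k)}. -/
noncomputable section

open MeasureTheory

/-!
The two-point inequality says that `‖a + ε b‖_q² ≤ a² + (q - 1) b²` for a random sign `ε`. Hence, if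
a function is split into its even and odd parts under a measure-preserving sign change, and if
`‖·‖_q² ≤ C ‖·‖₂²` holds with `C = (q - 1) ^ d` for one part and `C = (q - 1) ^ (d - 1)` for the
other, then the function itself satisfies the bound with `C = (q - 1) ^ d`.

Flipping one sign at a time gives this bound for polynomials of degree `d` in independent random
signs, and the central limit theorem transfers it to polynomials of a standard Gaussian vector.
Polar coordinates and Jensen's inequality for the radial factor bring it to homogeneous polynomials
on the sphere. There, a polynomial of degree `d` is a sum of homogeneous polynomials of degrees `d`
and `d - 1`, which have opposite parities under the antipodal map, so the two-point inequality
applies once more. Finally, by Minkowski's integral inequality, the constants of the factors of a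
product space multiply.
-/

namespace SphereHypercontractivity

open Filter Topology
open scoped ENNReal

/-! ### The two-point inequality -/

lemma hasDerivAt_one_add_rpow {s : ℝ} (hs : 1 ≤ s) (x : ℝ) :
    HasDerivAt (fun y : ℝ => (1 + y) ^ s) (s * (1 + x) ^ (s - 1)) x := by
  simpa using ((hasDerivAt_id x).const_add 1).rpow_const (Or.inr hs)

lemma hasDerivAt_one_sub_rpow {s : ℝ} (hs : 1 ≤ s) (x : ℝ) :
    HasDerivAt (fun y : ℝ => (1 - y) ^ s) (-(s * (1 - x) ^ (s - 1))) x := by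
  simpa using ((hasDerivAt_id x).const_sub 1).rpow_const (Or.inr hs)

lemma rpow_eq_self_mul_rpow_sub_one {x : ℝ} (hx : 0 < x) (s : ℝ) :
    x ^ s = x * x ^ (s - 1) := by
  rw [Real.rpow_sub_one hx.ne', mul_div_cancel₀ _ hx.ne']

lemma one_add_rpow_sub_one_sub_rpow_le {s y : ℝ} (hs : 1 ≤ s) (hy : y ∈ Set.Icc (0 : ℝ) 1) :
    (1 + y) ^ s - (1 - y) ^ s ≤ s * y * ((1 + y) ^ s + (1 - y) ^ s) := by
  have hderiv (x : ℝ) := (((hasDerivAt_id x).const_mul s).mul ((hasDerivAt_one_add_rpow hs x).add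
    (hasDerivAt_one_sub_rpow hs x))).sub
    ((hasDerivAt_one_add_rpow hs x).sub (hasDerivAt_one_sub_rpow hs x))
  have hmono : MonotoneOn
      (fun x : ℝ => s * x * ((1 + x) ^ s + (1 - x) ^ s) - ((1 + x) ^ s - (1 - x) ^ s))
      (Set.Icc 0 1) := monotoneOn_of_hasDerivWithinAt_nonneg (convex_Icc (0 : ℝ) 1)
    (fun x _ => (hderiv x).continuousAt.continuousWithinAt)
    (fun x _ => (hderiv x).hasDerivWithinAt) fun x hx => by
      obtain ⟨hx0, hx1⟩ : 0 < x ∧ x < 1 := by simpa using hx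
      have hle : (1 - x) ^ (s - 1) ≤ (1 + x) ^ (s - 1) :=
        Real.rpow_le_rpow (by linarith) (by linarith) (by linarith)
      have hpos : 0 ≤ s * (1 + s) * x * ((1 + x) ^ (s - 1) - (1 - x) ^ (s - 1)) :=
        mul_nonneg (by positivity) (sub_nonneg.2 hle)
      simp only [Pi.add_apply, id]
      rw [rpow_eq_self_mul_rpow_sub_one (by linarith : 0 < 1 + x) s,
        rpow_eq_self_mul_rpow_sub_one (by linarith : 0 < 1 - x) s]
      linarith
  simpa using hmono (Set.left_mem_Icc.2 zero_le_one) hy hy.1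

lemma one_add_mul_sq_pos {q : ℝ} (hq : 1 ≤ q) (x : ℝ) : 0 < 1 + (q - 1) * x ^ 2 := by
  have := mul_nonneg (sub_nonneg.2 hq) (sq_nonneg x)
  linarith

-- The derivative of the quotient of the two sides has the sign given by the preceding inequality
-- for the exponent `q - 1`.
lemma one_add_rpow_add_one_sub_rpow_le {q y : ℝ} (hq : 2 ≤ q) (hy : y ∈ Set.Icc (0 : ℝ) 1) :
    (1 + y) ^ q + (1 - y) ^ q ≤ 2 * (1 + (q - 1) * y ^ 2) ^ (q / 2) := by
  have hpos := one_add_mul_sq_pos (one_le_two.trans hq)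
  have hderiv (x : ℝ) := ((hasDerivAt_one_add_rpow (one_le_two.trans hq) x).add
    (hasDerivAt_one_sub_rpow (one_le_two.trans hq) x)).mul
    ((((hasDerivAt_pow 2 x).const_mul (q - 1)).const_add 1).rpow_const (p := -(q / 2))
      (Or.inl (hpos x).ne'))
  have hanti : AntitoneOn (fun x : ℝ => ((1 + x) ^ q + (1 - x) ^ q) *
      (1 + (q - 1) * x ^ 2) ^ (-(q / 2))) (Set.Icc 0 1) :=
    antitoneOn_of_hasDerivWithinAt_nonpos (convex_Icc (0 : ℝ) 1)
    (fun x _ => (hderiv x).continuousAt.continuousWithinAt)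
    (fun x _ => (hderiv x).hasDerivWithinAt) fun x hx => by
      obtain ⟨hx0, hx1⟩ : 0 < x ∧ x < 1 := by simpa using hx
      have hdiff := one_add_rpow_sub_one_sub_rpow_le (s := q - 1) (by linarith) ⟨hx0.le, hx1.le⟩
      have hW := (Real.rpow_pos_of_pos (hpos x) (-(q / 2) - 1)).le
      have hnonneg := mul_nonneg (mul_nonneg (by linarith : 0 ≤ q) hW) (sub_nonneg.2 hdiff)
      simp only [Pi.add_apply, Nat.add_one_sub_one, pow_one, Nat.cast_ofNat]
      rw [rpow_eq_self_mul_rpow_sub_one (by linarith : 0 < 1 + x) q,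
        rpow_eq_self_mul_rpow_sub_one (by linarith : 0 < 1 - x) q,
        rpow_eq_self_mul_rpow_sub_one (hpos x) (-(q / 2))]
      linarith
  have h := hanti (Set.left_mem_Icc.2 zero_le_one) hy hy.1
  simp only [Real.rpow_neg (hpos y).le] at h
  rw [← div_eq_mul_inv, div_le_iff₀ (Real.rpow_pos_of_pos (hpos y) _)] at h
  exact h.trans_eq (by norm_num)

lemma sq_rpow_half {x : ℝ} (hx : 0 ≤ x) (q : ℝ) : (x ^ 2) ^ (q / 2) = x ^ q := by
  rw [← Real.rpow_natCast, ← Real.rpow_mul hx]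
  congr 1
  push_cast
  ring

lemma add_rpow_add_sub_rpow_le {q a b : ℝ} (hq : 2 ≤ q) (hb : 0 ≤ b) (hba : b ≤ a) :
    (a + b) ^ q + (a - b) ^ q ≤ 2 * (a ^ 2 + (q - 1) * b ^ 2) ^ (q / 2) := by
  rcases (hb.trans hba).eq_or_lt with rfl | ha
  · obtain rfl : b = 0 := le_antisymm hba hb
    simp [Real.zero_rpow (by linarith : q ≠ 0), Real.zero_rpow (by linarith : q / 2 ≠ 0)]
  have hy : b / a ∈ Set.Icc (0 : ℝ) 1 := ⟨by positivity, (div_le_one ha).2 hba⟩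
  calc (a + b) ^ q + (a - b) ^ q
      = (a * (1 + b / a)) ^ q + (a * (1 - b / a)) ^ q := by
        congr 2 <;> field_simp
    _ = a ^ q * ((1 + b / a) ^ q + (1 - b / a) ^ q) := by
        rw [Real.mul_rpow ha.le (by positivity), Real.mul_rpow ha.le (sub_nonneg.2 hy.2), mul_add]
    _ ≤ a ^ q * (2 * (1 + (q - 1) * (b / a) ^ 2) ^ (q / 2)) := by
        gcongr
        exact one_add_rpow_add_one_sub_rpow_le hq hy
    _ = 2 * (a ^ 2 * (1 + (q - 1) * (b / a) ^ 2)) ^ (q / 2) := by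
        rw [Real.mul_rpow (sq_nonneg a) (one_add_mul_sq_pos (by linarith) _).le,
          sq_rpow_half ha.le]
        ring
    _ = 2 * (a ^ 2 + (q - 1) * b ^ 2) ^ (q / 2) := by
        congr 2
        field_simp

lemma abs_add_rpow_add_abs_sub_rpow_le {q : ℝ} (hq : 2 ≤ q) (a b : ℝ) :
    |a + b| ^ q + |a - b| ^ q ≤ 2 * (a ^ 2 + (q - 1) * b ^ 2) ^ (q / 2) := by
  wlog hb : 0 ≤ b generalizing b
  · simpa [sub_eq_add_neg, add_comm (|a + -b| ^ q)] using this (-b) (by linarith)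
  wlog ha : 0 ≤ a generalizing a
  · have := this (-a) (by linarith)
    rwa [neg_sq, neg_add_eq_sub, abs_sub_comm, ← neg_add', abs_neg, add_comm] at this
  rcases le_total b a with hba | hab
  · rw [abs_of_nonneg (add_nonneg ha hb), abs_of_nonneg (sub_nonneg.2 hba)]
    exact add_rpow_add_sub_rpow_le hq hb hba
  · rw [abs_of_nonneg (add_nonneg ha hb), abs_sub_comm, abs_of_nonneg (sub_nonneg.2 hab),
      add_comm a b]
    refine (add_rpow_add_sub_rpow_le hq ha hab).trans ?_
    gcongr ?_ * ?_ ^ _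
    · have := mul_nonneg (by linarith : 0 ≤ q - 1) (sq_nonneg a)
      positivity
    · nlinarith [mul_nonneg (by linarith : 0 ≤ q - 2) (sub_nonneg.2 (pow_le_pow_left₀ ha hab 2))]

lemma enorm_rpow_eq_ofReal_abs_rpow (x : ℝ) {r : ℝ} (hr : 0 ≤ r) :
    ‖x‖ₑ ^ r = ENNReal.ofReal (|x| ^ r) := by
  rw [Real.enorm_eq_ofReal_abs, ENNReal.ofReal_rpow_of_nonneg (abs_nonneg x) hr]

lemma enorm_rpow_two (x : ℝ) : ‖x‖ₑ ^ (2 : ℝ) = ENNReal.ofReal (x ^ 2) := by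
  rw [enorm_rpow_eq_ofReal_abs_rpow x zero_le_two, Real.rpow_two, sq_abs]

lemma enorm_add_rpow_add_enorm_sub_rpow_le {q : ℝ} (hq : 2 ≤ q) (a b : ℝ) :
    ‖a + b‖ₑ ^ q + ‖a - b‖ₑ ^ q ≤
      2 * (‖a‖ₑ ^ (2 : ℝ) + ENNReal.ofReal (q - 1) * ‖b‖ₑ ^ (2 : ℝ)) ^ (q / 2) := by
  have hq0 : 0 ≤ q := by linarith
  have hb : 0 ≤ (q - 1) * b ^ 2 := mul_nonneg (by linarith) (sq_nonneg b)
  rw [enorm_rpow_two, enorm_rpow_two, enorm_rpow_eq_ofReal_abs_rpow _ hq0,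
    enorm_rpow_eq_ofReal_abs_rpow _ hq0, ← ENNReal.ofReal_add (by positivity) (by positivity),
    ← ENNReal.ofReal_mul (by linarith), ← ENNReal.ofReal_add (sq_nonneg a) hb,
    ENNReal.ofReal_rpow_of_nonneg (by positivity) (by positivity),
    show (2 : ℝ≥0∞) = ENNReal.ofReal 2 by simp, ← ENNReal.ofReal_mul zero_le_two]
  exact ENNReal.ofReal_le_ofReal (abs_add_rpow_add_abs_sub_rpow_le hq a b)

lemma enorm_add_sq_add_enorm_sub_sq (a b : ℝ) :
    ‖a + b‖ₑ ^ (2 : ℝ) + ‖a - b‖ₑ ^ (2 : ℝ) = 2 * (‖a‖ₑ ^ (2 : ℝ) + ‖b‖ₑ ^ (2 : ℝ)) := by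
  simp only [enorm_rpow_two]
  rw [← ENNReal.ofReal_add (sq_nonneg _) (sq_nonneg _),
    ← ENNReal.ofReal_add (sq_nonneg _) (sq_nonneg _), show (2 : ℝ≥0∞) = ENNReal.ofReal 2 by simp,
    ← ENNReal.ofReal_mul zero_le_two]
  congr 1
  ring

section Hypercontractive

variable {α β : Type*} [MeasurableSpace α] [MeasurableSpace β] {μ : Measure α} {ν : Measure β}
  {q : ℝ} {C : ℝ≥0∞}

/-- The `L²` to `L^q` bound `‖f‖_q² ≤ C ‖f‖₂²`. It is stated with extended nonnegative integrals,
so that it makes sense without any integrability assumption. -/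
def IsHypercontractive (q : ℝ) (C : ℝ≥0∞) (μ : Measure α) (f : α → ℝ) : Prop :=
  (∫⁻ x, ‖f x‖ₑ ^ q ∂μ) ^ (2 / q) ≤ C * ∫⁻ x, ‖f x‖ₑ ^ (2 : ℝ) ∂μ

lemma isHypercontractive_const [IsProbabilityMeasure μ] (hq : 0 < q) (c : ℝ) :
    IsHypercontractive q 1 μ fun _ => c := by
  simp [IsHypercontractive, ← ENNReal.rpow_mul, mul_div_cancel₀ _ hq.ne']

lemma IsHypercontractive.mono {D : ℝ≥0∞} {f : α → ℝ} (hf : IsHypercontractive q C μ f)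
    (hCD : C ≤ D) : IsHypercontractive q D μ f :=
  hf.trans (by gcongr)

lemma isHypercontractive_congr_ae {f g : α → ℝ} (hfg : f =ᵐ[μ] g) :
    IsHypercontractive q C μ f ↔ IsHypercontractive q C μ g := by
  have hcongr (r : ℝ) : ∫⁻ x, ‖f x‖ₑ ^ r ∂μ = ∫⁻ x, ‖g x‖ₑ ^ r ∂μ :=
    lintegral_congr_ae (hfg.fun_comp fun y => ‖y‖ₑ ^ r)
  simp only [IsHypercontractive, hcongr]

lemma isHypercontractive_map {f : β → ℝ} {g : α → β} (hf : Measurable f) (hg : Measurable g) :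
    IsHypercontractive q C (μ.map g) f ↔ IsHypercontractive q C μ fun x => f (g x) := by
  rw [IsHypercontractive, IsHypercontractive, lintegral_map (hf.enorm.pow_const q) hg,
    lintegral_map (hf.enorm.pow_const 2) hg]

lemma isHypercontractive_iff_lintegral_rpow_le {f : α → ℝ} (hq : 0 < q) :
    IsHypercontractive q C μ f ↔
      ∫⁻ x, ‖f x‖ₑ ^ q ∂μ ≤ (C * ∫⁻ x, ‖f x‖ₑ ^ (2 : ℝ) ∂μ) ^ (q / 2) := by
  rw [IsHypercontractive, ← inv_div, ENNReal.rpow_inv_le_iff (by positivity)]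

/-! ### Combining an even and an odd part -/

lemma lintegral_rpow_half_add_le {a b : α → ℝ} {D : ℝ≥0∞} (hq : 2 ≤ q) (ha : Measurable a)
    (hb : Measurable b) :
    (∫⁻ x, (‖a x‖ₑ ^ (2 : ℝ) + D * ‖b x‖ₑ ^ (2 : ℝ)) ^ (q / 2) ∂μ) ^ (2 / q) ≤
      (∫⁻ x, ‖a x‖ₑ ^ q ∂μ) ^ (2 / q) + D * (∫⁻ x, ‖b x‖ₑ ^ q ∂μ) ^ (2 / q) := by
  have hq2 : 0 ≤ q / 2 := by linarith
  have hpow (x : ℝ≥0∞) : (x ^ (2 : ℝ)) ^ (q / 2) = x ^ q := by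
    rw [← ENNReal.rpow_mul, mul_div_cancel₀ _ two_ne_zero]
  have hD : (D ^ (q / 2)) ^ (2 / q) = D := by
    rw [← ENNReal.rpow_mul, div_mul_div_cancel₀ two_ne_zero, div_self (by linarith),
      ENNReal.rpow_one]
  have hminkowski := ENNReal.lintegral_Lp_add_le (μ := μ) (ha.enorm.pow_const (2 : ℝ)).aemeasurable
    ((hb.enorm.pow_const (2 : ℝ)).const_mul D).aemeasurable (by linarith : 1 ≤ q / 2)
  simpa only [Pi.add_apply, one_div_div, ENNReal.mul_rpow_of_nonneg _ _ hq2, hpow,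
    lintegral_const_mul _ (hb.enorm.pow_const q),
    ENNReal.mul_rpow_of_nonneg _ _ (by positivity : 0 ≤ 2 / q), hD] using hminkowski

theorem IsHypercontractive.of_add_sub {a b : α → ℝ} {f : β → ℝ} (hq : 2 ≤ q)
    (ha : Measurable a) (hb : Measurable b)
    (hf : ∀ r : ℝ, 2 * ∫⁻ y, ‖f y‖ₑ ^ r ∂ν = ∫⁻ x, ‖a x + b x‖ₑ ^ r + ‖a x - b x‖ₑ ^ r ∂μ)
    (ha' : IsHypercontractive q (ENNReal.ofReal (q - 1) * C) μ a)
    (hb' : IsHypercontractive q C μ b) :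
    IsHypercontractive q (ENNReal.ofReal (q - 1) * C) ν f := by
  set D := ENNReal.ofReal (q - 1)
  have hq_le : ∫⁻ y, ‖f y‖ₑ ^ q ∂ν ≤
      ∫⁻ x, (‖a x‖ₑ ^ (2 : ℝ) + D * ‖b x‖ₑ ^ (2 : ℝ)) ^ (q / 2) ∂μ := by
    rw [← ENNReal.mul_le_mul_iff_right two_ne_zero ENNReal.ofNat_ne_top, hf,
      ← lintegral_const_mul _ (by fun_prop)]
    exact lintegral_mono fun x => enorm_add_rpow_add_enorm_sub_rpow_le hq (a x) (b x)
  have htwo_eq : ∫⁻ y, ‖f y‖ₑ ^ (2 : ℝ) ∂ν =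
      ∫⁻ x, ‖a x‖ₑ ^ (2 : ℝ) ∂μ + ∫⁻ x, ‖b x‖ₑ ^ (2 : ℝ) ∂μ := by
    rw [← ENNReal.mul_right_inj two_ne_zero ENNReal.ofNat_ne_top, hf,
      ← lintegral_add_left (by fun_prop), ← lintegral_const_mul _ (by fun_prop)]
    simp only [enorm_add_sq_add_enorm_sub_sq]
  calc (∫⁻ y, ‖f y‖ₑ ^ q ∂ν) ^ (2 / q)
      ≤ (∫⁻ x, (‖a x‖ₑ ^ (2 : ℝ) + D * ‖b x‖ₑ ^ (2 : ℝ)) ^ (q / 2) ∂μ) ^ (2 / q) := by gcongr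
    _ ≤ (∫⁻ x, ‖a x‖ₑ ^ q ∂μ) ^ (2 / q) + D * (∫⁻ x, ‖b x‖ₑ ^ q ∂μ) ^ (2 / q) :=
        lintegral_rpow_half_add_le hq ha hb
    _ ≤ D * C * ∫⁻ x, ‖a x‖ₑ ^ (2 : ℝ) ∂μ + D * (C * ∫⁻ x, ‖b x‖ₑ ^ (2 : ℝ) ∂μ) := by
        gcongr
        exacts [ha', hb']
    _ = D * C * ∫⁻ y, ‖f y‖ₑ ^ (2 : ℝ) ∂ν := by
        rw [htwo_eq]
        ring

end Hypercontractive

/-! ### Polynomial functions -/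

section Polynomial

variable {E : Type*} [NormedAddCommGroup E]

section NormedSpace

variable [NormedSpace ℝ E] {d e : ℕ} {f g : E → ℝ}

/-- `IsPolyFun d f` means that `f : E → ℝ` is a polynomial function of degree at most `d`, described
without coordinates: it is generated by constants and by products with linear functionals. -/
inductive IsPolyFun : ℕ → (E → ℝ) → Prop
  | const (d : ℕ) (c : ℝ) : IsPolyFun d fun _ => c
  | add {d : ℕ} {f g : E → ℝ} : IsPolyFun d f → IsPolyFun d g → IsPolyFun d (f + g)
  | clm_mul {d : ℕ} {f : E → ℝ} (L : E →L[ℝ] ℝ) : IsPolyFun d f → IsPolyFun (d + 1) (⇑L * f)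

namespace IsPolyFun

lemma continuous (hf : IsPolyFun d f) : Continuous f := by
  induction hf with
  | const => fun_prop
  | add _ _ ihf ihg => exact ihf.add ihg
  | clm_mul L _ ih => exact L.continuous.mul ih

lemma exists_eq_const (hf : IsPolyFun 0 f) : ∃ c : ℝ, f = fun _ => c := by
  generalize hd : 0 = d at hf
  induction hf with
  | const _ c => exact ⟨c, rfl⟩
  | add _ _ ihf ihg =>
    obtain ⟨c, rfl⟩ := ihf hd
    obtain ⟨c', rfl⟩ := ihg hd
    exact ⟨c + c', rfl⟩
  | clm_mul => omega

lemma mono (hf : IsPolyFun d f) (hde : d ≤ e) : IsPolyFun e f := by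
  induction hf generalizing e with
  | const _ c => exact .const e c
  | add _ _ ihf ihg => exact (ihf hde).add (ihg hde)
  | clm_mul L _ ih =>
    obtain ⟨e, rfl⟩ := Nat.exists_eq_add_of_le' (Nat.one_le_of_lt hde)
    exact (ih (Nat.le_of_succ_le_succ hde)).clm_mul L

lemma clm (L : E →L[ℝ] ℝ) : IsPolyFun 1 L := by
  simpa [Pi.mul_def] using (IsPolyFun.const 0 1).clm_mul L

lemma const_mul (c : ℝ) (hf : IsPolyFun d f) : IsPolyFun d fun x => c * f x := by
  induction hf with
  | const d c' => exact .const d (c * c')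
  | add _ _ ihf ihg => simpa only [Pi.add_def, mul_add] using ihf.add ihg
  | clm_mul L _ ih => simpa [Pi.mul_def, mul_left_comm] using ih.clm_mul L

lemma mul (hf : IsPolyFun d f) (hg : IsPolyFun e g) : IsPolyFun (d + e) (f * g) := by
  induction hf with
  | const d c => exact (hg.const_mul c).mono (Nat.le_add_left e d)
  | add _ _ ihf ihg => simpa only [add_mul] using ihf.add ihg
  | clm_mul L _ ih => simpa only [mul_assoc, Nat.add_right_comm] using ih.clm_mul L

lemma pow (hf : IsPolyFun d f) (m : ℕ) : IsPolyFun (d * m) (f ^ m) := by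
  induction m with
  | zero => exact .const 0 1
  | succ m ih => simpa only [pow_succ, mul_add_one] using ih.mul hf

lemma sum {ι : Type*} {s : Finset ι} {f : ι → E → ℝ} (hf : ∀ i ∈ s, IsPolyFun d (f i)) :
    IsPolyFun d (∑ i ∈ s, f i) :=
  Finset.sum_induction f (IsPolyFun d) (fun _ _ => .add) (.const d 0) hf

lemma prod {ι : Type*} {s : Finset ι} {f : ι → E → ℝ} {d : ι → ℕ}
    (hf : ∀ i ∈ s, IsPolyFun (d i) (f i)) : IsPolyFun (∑ i ∈ s, d i) (∏ i ∈ s, f i) := by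
  induction s using Finset.cons_induction with
  | empty => exact .const 0 1
  | cons i s hi ih =>
    rw [Finset.forall_mem_cons] at hf
    simpa only [Finset.sum_cons, Finset.prod_cons] using hf.1.mul (ih hf.2)

lemma comp_add_right (hf : IsPolyFun d f) (v : E) : IsPolyFun d fun x => f (x + v) := by
  induction hf with
  | const d c => exact .const d c
  | add _ _ ihf ihg => exact ihf.add ihg
  | @clm_mul d f L _ ih =>
    convert! (ih.clm_mul L).add ((ih.const_mul (L v)).mono d.le_succ) using 2 with x
    simp [add_mul]

protected lemma fwdDiff (hf : IsPolyFun d f) (v : E) : IsPolyFun (d - 1) (fwdDiff v f) := by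
  induction hf with
  | const d c => simpa using IsPolyFun.const (d - 1) 0
  | @add d f g _ _ ihf ihg => simpa using ihf.add ihg
  | @clm_mul d f L hf ih =>
    have hL : fwdDiff v (⇑L * f) = ⇑L * fwdDiff v f + fun x => L v * f (x + v) := by
      ext x
      simp only [fwdDiff, Pi.mul_apply, Pi.add_apply, map_add]
      ring
    have hmul : IsPolyFun d (⇑L * fwdDiff v f) := by
      cases d with
      | zero =>
        obtain ⟨c, rfl⟩ := hf.exists_eq_const
        simpa [Pi.mul_def] using IsPolyFun.const (E := E) 0 0
      | succ d => exact ih.clm_mul L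
    rw [hL]
    exact hmul.add ((hf.comp_add_right v).const_mul (L v))

end IsPolyFun

/-- Polynomial functions that are homogeneous of degree `d`. -/
structure IsHomogeneousPolyFun (d : ℕ) (f : E → ℝ) : Prop where
  isPolyFun : IsPolyFun d f
  map_smul (c : ℝ) (x : E) : f (c • x) = c ^ d * f x

namespace IsHomogeneousPolyFun

lemma zero (d : ℕ) : IsHomogeneousPolyFun d (0 : E → ℝ) := ⟨.const d 0, by simp⟩

lemma const (c : ℝ) : IsHomogeneousPolyFun 0 fun _ : E => c := ⟨.const 0 c, by simp⟩

lemma add (hf : IsHomogeneousPolyFun d f) (hg : IsHomogeneousPolyFun d g) :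
    IsHomogeneousPolyFun d (f + g) :=
  ⟨hf.isPolyFun.add hg.isPolyFun, fun c x => by simp [hf.map_smul, hg.map_smul, mul_add]⟩

lemma clm_mul (L : E →L[ℝ] ℝ) (hf : IsHomogeneousPolyFun d f) :
    IsHomogeneousPolyFun (d + 1) (⇑L * f) :=
  ⟨hf.isPolyFun.clm_mul L, fun c x => by
    simp only [Pi.mul_apply, _root_.map_smul, hf.map_smul, smul_eq_mul]
    ring⟩

end IsHomogeneousPolyFun

end NormedSpace

section InnerProductSpace

variable [InnerProductSpace ℝ E] [FiniteDimensional ℝ E] {d : ℕ} {f : E → ℝ}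

lemma isPolyFun_norm_sq : IsPolyFun 2 fun x : E => ‖x‖ ^ 2 := by
  let b := stdOrthonormalBasis ℝ E
  have hsum : (fun x : E => ‖x‖ ^ 2) = ∑ i, ⇑(innerSL ℝ (b i)) ^ 2 := by
    ext x
    simp [← b.sum_sq_inner_right x]
  rw [hsum]
  exact .sum fun i _ => (IsPolyFun.clm _).pow 2

lemma isHomogeneousPolyFun_const_mul_norm_pow (hd : Even d) (c : ℝ) :
    IsHomogeneousPolyFun d fun x : E => c * ‖x‖ ^ d := by
  obtain ⟨m, rfl⟩ := even_iff_exists_two_mul.1 hd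
  refine ⟨?_, fun a x => ?_⟩
  · simpa only [Pi.pow_def, ← pow_mul] using (isPolyFun_norm_sq.pow m).const_mul c
  · rw [norm_smul, mul_pow, Real.norm_eq_abs, hd.pow_abs]
    ring

-- On the unit sphere the constant `c` is homogeneous of every even degree, as `c * ‖x‖ ^ (2 * m)`.
lemma IsPolyFun.exists_isHomogeneousPolyFun_add (hf : IsPolyFun d f) :
    ∃ a b : E → ℝ, IsHomogeneousPolyFun d a ∧ IsHomogeneousPolyFun (d - 1) b ∧
      ∀ x, ‖x‖ = 1 → f x = a x + b x := by
  induction hf with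
  | const d c =>
    rcases Nat.even_or_odd d with hd | hd
    · exact ⟨_, 0, isHomogeneousPolyFun_const_mul_norm_pow hd c, .zero _, by simp +contextual⟩
    · exact ⟨0, _, .zero _, isHomogeneousPolyFun_const_mul_norm_pow (Nat.Odd.sub_odd hd odd_one) c,
        by simp +contextual⟩
  | add _ _ ihf ihg =>
    obtain ⟨a, b, ha, hb, hab⟩ := ihf
    obtain ⟨a', b', ha', hb', hab'⟩ := ihg
    refine ⟨a + a', b + b', ha.add ha', hb.add hb', fun x hx => ?_⟩
    rw [Pi.add_apply, hab x hx, hab' x hx, Pi.add_apply, Pi.add_apply, add_add_add_comm]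
  | @clm_mul d f L hf ih =>
    cases d with
    | zero =>
      obtain ⟨c, rfl⟩ := hf.exists_eq_const
      exact ⟨_, 0, (IsHomogeneousPolyFun.const c).clm_mul L, .zero _, by simp⟩
    | succ d =>
      obtain ⟨a, b, ha, hb, hab⟩ := ih
      refine ⟨⇑L * a, ⇑L * b, ha.clm_mul L, hb.clm_mul L, fun x hx => ?_⟩
      simp only [Pi.mul_apply, hab x hx, mul_add]

end InnerProductSpace

end Polynomial

/-! ### Rademacher sums -/

section Rademacher

open Measure

variable {E : Type*} [NormedAddCommGroup E] [MeasurableSpace E]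

/-- The law of the random vector `± v`, with a uniformly distributed sign. -/
def rademacher (v : E) : Measure E := (2 : ℝ≥0∞)⁻¹ • (dirac v + dirac (-v))

instance (v : E) : IsProbabilityMeasure (rademacher v) :=
  ⟨by simp [rademacher, ENNReal.inv_two_add_inv_two]⟩

/-- The law of `∑ v ∈ l, ± v` with independent, uniformly distributed signs. -/
def rademacherSum : List E → Measure E
  | [] => dirac 0
  | v :: l => rademacherSum l ∗ rademacher v

section Integral

variable [BorelSpace E]

lemma integral_rademacher {F : Type*} [NormedAddCommGroup F] [NormedSpace ℝ F] [CompleteSpace F]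
    (f : E → F) (v : E) : ∫ x, f x ∂(rademacher v) = (2 : ℝ)⁻¹ • (f v + f (-v)) := by
  rw [rademacher, integral_smul_measure, integral_add_measure (integrable_dirac (by simp))
    (integrable_dirac (by simp)), integral_dirac, integral_dirac]
  simp

variable [SecondCountableTopology E]

lemma two_mul_lintegral_conv_rademacher (ρ : Measure E) (v : E) {f : E → ℝ≥0∞}
    (hf : Measurable f) :
    2 * ∫⁻ x, f x ∂(ρ ∗ rademacher v) = ∫⁻ x, f (x + v) + f (x - v) ∂ρ := by
  have hinner (x : E) : ∫⁻ y, f (x + y) ∂(rademacher v) = 2⁻¹ * (f (x + v) + f (x - v)) := by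
    rw [rademacher, lintegral_smul_measure, lintegral_add_measure,
      lintegral_dirac' _ (by fun_prop), lintegral_dirac' _ (by fun_prop), smul_eq_mul,
      sub_eq_add_neg]
  rw [lintegral_conv hf]
  simp_rw [hinner]
  rw [lintegral_const_mul _ (by fun_prop), ← mul_assoc,
    ENNReal.mul_inv_cancel two_ne_zero ENNReal.ofNat_ne_top, one_mul]

instance (l : List E) : IsProbabilityMeasure (rademacherSum l) := by
  induction l with
  | nil => exact dirac.isProbabilityMeasure
  | cons v l ih => exact probabilitymeasure_of_probabilitymeasures_conv _ _

lemma lintegral_enorm_clm_sq_rademacherSum [NormedSpace ℝ E] (L : E →L[ℝ] ℝ) (l : List E) :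
    ∫⁻ x, ‖L x‖ₑ ^ (2 : ℝ) ∂(rademacherSum l) = (l.map fun v => ‖L v‖ₑ ^ (2 : ℝ)).sum := by
  induction l with
  | nil => simp [rademacherSum, lintegral_dirac' _ (by fun_prop : Measurable fun x => ‖L x‖ₑ ^ 2)]
  | cons v l ih =>
    rw [rademacherSum, ← ENNReal.mul_right_inj two_ne_zero ENNReal.ofNat_ne_top,
      two_mul_lintegral_conv_rademacher _ _ (by fun_prop), List.map_cons, List.sum_cons, ← ih]
    simp only [map_add, map_sub, enorm_add_sq_add_enorm_sub_sq]
    rw [lintegral_const_mul _ (by fun_prop), lintegral_add_right _ measurable_const,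
      lintegral_const, measure_univ, mul_one, add_comm]

-- Given the signs of the other summands, `f` is affine in the sign of `v`: its even and odd parts
-- in that sign have degrees `d` and `d - 1`.
theorem IsPolyFun.isHypercontractive_rademacherSum [NormedSpace ℝ E] {q : ℝ} (hq : 2 ≤ q)
    (l : List E) {d : ℕ} {f : E → ℝ} (hf : IsPolyFun d f) :
    IsHypercontractive q (ENNReal.ofReal (q - 1) ^ d) (rademacherSum l) f := by
  have hone_le : 1 ≤ ENNReal.ofReal (q - 1) := by
    rw [ENNReal.one_le_ofReal]
    linarith
  induction l generalizing d f with
  | nil =>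
    have hae : f =ᵐ[dirac 0] fun _ => f 0 := by simp [EventuallyEq, ae_dirac_eq]
    exact (isHypercontractive_congr_ae hae).2
      ((isHypercontractive_const (by linarith) _).mono (one_le_pow₀ hone_le))
  | cons v l ih =>
    cases d with
    | zero =>
      obtain ⟨c, rfl⟩ := hf.exists_eq_const
      simpa using isHypercontractive_const (by linarith) c
    | succ d =>
      have heven : IsPolyFun (d + 1) fun x => 2⁻¹ * (f (x + v) + f (x - v)) := by
        simpa only [sub_eq_add_neg, Pi.add_apply] using
          ((hf.comp_add_right v).add (hf.comp_add_right (-v))).const_mul 2⁻¹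
      have hodd : IsPolyFun d fun x => 2⁻¹ * (f (x + v) - f (x - v)) := by
        simpa [fwdDiff, sub_eq_add_neg, ← add_assoc] using
          ((hf.fwdDiff (v + v)).comp_add_right (-v)).const_mul 2⁻¹
      rw [pow_succ']
      refine .of_add_sub hq heven.continuous.measurable hodd.continuous.measurable (fun r => ?_)
        (by simpa only [pow_succ'] using ih heven) (ih hodd)
      rw [rademacherSum,
        two_mul_lintegral_conv_rademacher _ _ (hf.continuous.measurable.enorm.pow_const r)]
      refine lintegral_congr fun x => ?_
      congr 3 <;> ring_nf

end Integral

end Rademacher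

section Gauss

open Measure ProbabilityTheory

variable {E : Type*} [NormedAddCommGroup E] [InnerProductSpace ℝ E] [MeasurableSpace E]
  [BorelSpace E]

lemma charFun_rademacher (v t : E) :
    charFun (rademacher v) t = Complex.cos (inner ℝ v t) := by
  rw [charFun_apply, integral_rademacher, Complex.cos, Complex.real_smul]
  simp [div_eq_inv_mul]

lemma charFun_rademacherSum [SecondCountableTopology E] (l : List E) (t : E) :
    charFun (rademacherSum l) t = (l.map fun v => Complex.cos (inner ℝ v t)).prod := by
  induction l with
  | nil => simp [rademacherSum]
  | cons v l ih =>
    rw [rademacherSum, charFun_conv, ih, charFun_rademacher, List.map_cons, List.prod_cons,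
      mul_comm]

lemma tendsto_cos_inv_sqrt_mul_pow (t : ℝ) :
    Tendsto (fun n : ℕ => Complex.cos ((√n)⁻¹ * t) ^ n) atTop (𝓝 (Complex.exp (-t ^ 2 / 2))) := by
  have h := tendsto_charFun_inv_sqrt_mul_pow (P := rademacher (1 : ℝ)) (X := id) aemeasurable_id
    (by simp [integral_rademacher]) (by norm_num [integral_rademacher]) t
  simpa [charFun_rademacher] using h

variable [FiniteDimensional ℝ E]

variable (E) in
/-- The Rademacher sum that approximates the standard Gaussian measure: in each direction of an
orthonormal basis it has `m` independent steps `± m ^ (-1 / 2)`. -/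
def gaussApprox (m : ℕ) : Measure E :=
  rademacherSum (Finset.univ.toList.flatMap fun i =>
    List.replicate m ((√m)⁻¹ • stdOrthonormalBasis ℝ E i))

instance (m : ℕ) : IsProbabilityMeasure (gaussApprox E m) := by
  unfold gaussApprox
  infer_instance

lemma charFun_gaussApprox (m : ℕ) (t : E) :
    charFun (gaussApprox E m) t =
      ∏ i, Complex.cos ((√m)⁻¹ * inner ℝ (stdOrthonormalBasis ℝ E i) t) ^ m := by
  simp [gaussApprox, charFun_rademacherSum, List.flatMap_def, List.prod_flatten,
    real_inner_smul_left, Finset.prod_map_toList]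

variable (E) in
lemma tendsto_gaussApprox :
    Tendsto (β := ProbabilityMeasure E) (fun m => ⟨gaussApprox E m, inferInstance⟩) atTop
      (𝓝 ⟨stdGaussian E, inferInstance⟩) := by
  refine ProbabilityMeasure.tendsto_iff_tendsto_charFun.2 fun t => ?_
  simp only [ProbabilityMeasure.coe_mk, charFun_stdGaussian, charFun_gaussApprox]
  convert! tendsto_finsetProd Finset.univ fun i _ =>
    tendsto_cos_inv_sqrt_mul_pow (inner ℝ (stdOrthonormalBasis ℝ E i) t) using 2
  rw [← Complex.exp_sum, ← Finset.sum_div, Finset.sum_neg_distrib]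
  exact_mod_cast congrArg (fun x : ℝ => Complex.exp (-x / 2))
    ((stdOrthonormalBasis ℝ E).sum_sq_inner_right t).symm

lemma lintegral_enorm_clm_sq_gaussApprox_le (L : E →L[ℝ] ℝ) (m : ℕ) :
    ∫⁻ x, ‖L x‖ₑ ^ (2 : ℝ) ∂(gaussApprox E m) ≤
      ∑ i, ‖L (stdOrthonormalBasis ℝ E i)‖ₑ ^ (2 : ℝ) := by
  have hm : (m : ℝ) * (√m)⁻¹ ^ 2 ≤ 1 := by
    rw [inv_pow, Real.sq_sqrt (by positivity)]
    exact mul_inv_le_one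
  have hterm (c : ℝ) : m * ‖(√m)⁻¹ * c‖ₑ ^ (2 : ℝ) ≤ ‖c‖ₑ ^ (2 : ℝ) := by
    rw [enorm_rpow_two, enorm_rpow_two, ← ENNReal.ofReal_natCast,
      ← ENNReal.ofReal_mul (by positivity), mul_pow, ← mul_assoc]
    exact ENNReal.ofReal_le_ofReal (mul_le_of_le_one_left (sq_nonneg c) hm)
  simp only [gaussApprox, lintegral_enorm_clm_sq_rademacherSum, List.flatMap_def, List.map_flatten,
    List.sum_flatten, List.map_map, Function.comp_def, List.map_replicate, List.sum_replicate,
    Finset.sum_map_toList, map_smul, smul_eq_mul, nsmul_eq_mul]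
  exact Finset.sum_le_sum fun i _ => hterm _

end Gauss

/-! ### Weak limits -/

section WeakLimit

open scoped NNReal

variable {X : Type*} [TopologicalSpace X] [MeasurableSpace X] [OpensMeasurableSpace X]
  {μs : ℕ → ProbabilityMeasure X} {μ : ProbabilityMeasure X}

lemma tendsto_lintegral_min_of_tendsto (hμ : Tendsto μs atTop (𝓝 μ)) {g : X → ℝ≥0}
    (hg : Continuous g) (K : ℝ≥0) :
    Tendsto (fun n => ∫⁻ x, min (g x : ℝ≥0∞) K ∂(μs n : Measure X)) atTop
      (𝓝 (∫⁻ x, min (g x : ℝ≥0∞) K ∂(μ : Measure X))) := by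
  have hdist (x y : X) : dist (min (g x) K) (min (g y) K) ≤ K := by
    rw [NNReal.dist_eq, abs_sub_le_iff]
    constructor <;> linarith [NNReal.coe_le_coe.2 (min_le_right (g x) K),
      NNReal.coe_le_coe.2 (min_le_right (g y) K), (min (g x) K).coe_nonneg,
      (min (g y) K).coe_nonneg]
  simp only [← ENNReal.coe_min]
  exact ProbabilityMeasure.tendsto_iff_forall_lintegral_tendsto.1 hμ
    (.mkOfBound ⟨fun x => min (g x) K, by fun_prop⟩ K hdist)

lemma le_min_add_sq_div (x : ℝ≥0∞) {K : ℝ≥0∞} (hK : K ≠ 0) (hK' : K ≠ ∞) :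
    x ≤ min x K + x ^ 2 / K := by
  rcases le_total x K with h | h
  · rw [min_eq_left h]
    exact le_self_add
  · refine le_add_left ((ENNReal.le_div_iff_mul_le (.inl hK) (.inl hK')).2 ?_)
    rw [sq]
    gcongr

lemma limsup_lintegral_le_of_tendsto (hμ : Tendsto μs atTop (𝓝 μ)) {g : X → ℝ≥0}
    (hg : Continuous g) {B : ℝ≥0∞} (hB : B ≠ ∞)
    (hgB : ∀ n, ∫⁻ x, (g x : ℝ≥0∞) ^ 2 ∂(μs n : Measure X) ≤ B) :
    limsup (fun n => ∫⁻ x, g x ∂(μs n : Measure X)) atTop ≤ ∫⁻ x, g x ∂(μ : Measure X) := by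
  have htrunc (K : ℕ) (hK : K ≠ 0) :
      limsup (fun n => ∫⁻ x, g x ∂(μs n : Measure X)) atTop ≤
        ∫⁻ x, g x ∂(μ : Measure X) + B / K := by
    have hle (n : ℕ) : ∫⁻ x, g x ∂(μs n : Measure X) ≤
        ∫⁻ x, min (g x : ℝ≥0∞) (K : ℝ≥0) ∂(μs n : Measure X) + B / K := by
      calc ∫⁻ x, g x ∂(μs n : Measure X)
          ≤ ∫⁻ x, min (g x : ℝ≥0∞) (K : ℝ≥0) + (g x : ℝ≥0∞) ^ 2 / K ∂(μs n : Measure X) :=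
            lintegral_mono fun x => by
              simpa using le_min_add_sq_div (g x) (Nat.cast_ne_zero.2 hK) (ENNReal.natCast_ne_top K)
        _ = ∫⁻ x, min (g x : ℝ≥0∞) (K : ℝ≥0) ∂(μs n : Measure X) +
              (∫⁻ x, (g x : ℝ≥0∞) ^ 2 ∂(μs n : Measure X)) / K := by
            rw [lintegral_add_left (by fun_prop)]
            simp only [div_eq_mul_inv]
            rw [lintegral_mul_const _ (by fun_prop)]
        _ ≤ _ := by gcongr; exact hgB n
    refine (limsup_le_limsup (.of_forall hle)).trans ?_
    rw [((tendsto_lintegral_min_of_tendsto hμ hg K).add_const _).limsup_eq]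
    gcongr
    exact min_le_left _ _
  have hlim : Tendsto (fun K : ℕ => ∫⁻ x, g x ∂(μ : Measure X) + B / K) atTop
      (𝓝 (∫⁻ x, g x ∂(μ : Measure X))) := by
    simpa using (ENNReal.Tendsto.const_div ENNReal.tendsto_nat_nhds_top (.inr hB)).const_add
      (∫⁻ x, g x ∂(μ : Measure X))
  exact ge_of_tendsto hlim ((eventually_ne_atTop 0).mono htrunc)

variable [HasOuterApproxClosed X]

lemma lintegral_le_liminf_of_tendsto (hμ : Tendsto μs atTop (𝓝 μ)) {g : X → ℝ≥0}
    (hg : Continuous g) :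
    ∫⁻ x, g x ∂(μ : Measure X) ≤ liminf (fun n => ∫⁻ x, g x ∂(μs n : Measure X)) atTop := by
  simpa using lintegral_le_liminf_lintegral_of_forall_isOpen_measure_le_liminf_measure
    (NNReal.continuous_coe.comp hg) (fun x => (g x).coe_nonneg)
    fun _ hG => ProbabilityMeasure.le_liminf_measure_open_of_tendsto hμ hG

theorem IsHypercontractive.of_tendsto (hμ : Tendsto μs atTop (𝓝 μ)) {q : ℝ} (hq : 0 < q)
    {C : ℝ≥0∞} (hC : C ≠ ∞) {f : X → ℝ} (hf : Continuous f) {B : ℝ≥0∞} (hB : B ≠ ∞)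
    (hfB : ∀ n, ∫⁻ x, ‖f x‖ₑ ^ (4 : ℝ) ∂(μs n : Measure X) ≤ B)
    (h : ∀ n, IsHypercontractive q C (μs n : Measure X) f) :
    IsHypercontractive q C (μ : Measure X) f := by
  have hcoe {r : ℝ} (hr : 0 ≤ r) (x : X) : ((‖f x‖₊ ^ r : ℝ≥0) : ℝ≥0∞) = ‖f x‖ₑ ^ r :=
    ENNReal.coe_rpow_of_nonneg _ hr
  have hcont {r : ℝ} (hr : 0 ≤ r) : Continuous fun x => ‖f x‖₊ ^ r :=
    (NNReal.continuous_rpow_const hr).comp hf.nnnorm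
  have hliminf {r : ℝ} (hr : 0 ≤ r) := lintegral_le_liminf_of_tendsto hμ (hcont hr)
  have hsq (x : X) : (‖f x‖ₑ ^ (2 : ℝ)) ^ 2 = ‖f x‖ₑ ^ (4 : ℝ) := by
    rw [← ENNReal.rpow_mul_natCast]
    norm_num
  have hlimsup := limsup_lintegral_le_of_tendsto hμ (hcont zero_le_two) hB
    (by simpa only [hcoe zero_le_two, hsq] using hfB)
  have htwo := tendsto_of_le_liminf_of_limsup_le (hliminf zero_le_two) hlimsup
  simp only [hcoe zero_le_two] at htwo
  have hlim := ((ENNReal.continuous_rpow_const (y := q / 2)).tendsto _).comp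
    (ENNReal.Tendsto.const_mul htwo (.inr hC))
  have hle := hliminf hq.le
  simp only [hcoe hq.le] at hle
  refine (isHypercontractive_iff_lintegral_rpow_le hq).2
    (hle.trans (hlim.liminf_eq ▸ liminf_le_liminf (.of_forall fun n => ?_)))
  exact (isHypercontractive_iff_lintegral_rpow_le hq).1 (h n)

end WeakLimit

/-! ### The Gaussian measure -/

lemma IsHypercontractive.lintegral_mul_sq_le {α : Type*} [MeasurableSpace α] {μ : Measure α}
    {C D : ℝ≥0∞} {f g : α → ℝ} (hf : IsHypercontractive 4 C μ f) (hg : IsHypercontractive 4 D μ g)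
    (hfm : Measurable f) (hgm : Measurable g) :
    ∫⁻ x, ‖f x * g x‖ₑ ^ (2 : ℝ) ∂μ ≤
      (C * ∫⁻ x, ‖f x‖ₑ ^ (2 : ℝ) ∂μ) * (D * ∫⁻ x, ‖g x‖ₑ ^ (2 : ℝ) ∂μ) := by
  have hpow (y : ℝ≥0∞) : (y ^ (2 : ℝ)) ^ (2 : ℝ) = y ^ (4 : ℝ) := by
    rw [← ENNReal.rpow_mul]
    norm_num
  have hhalf : (1 / 2 : ℝ) = 2 / 4 := by norm_num
  calc ∫⁻ x, ‖f x * g x‖ₑ ^ (2 : ℝ) ∂μ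
      = ∫⁻ x, ‖f x‖ₑ ^ (2 : ℝ) * ‖g x‖ₑ ^ (2 : ℝ) ∂μ := by
        simp only [enorm_mul, ENNReal.mul_rpow_of_nonneg _ _ zero_le_two]
    _ ≤ (∫⁻ x, ‖f x‖ₑ ^ (4 : ℝ) ∂μ) ^ (2 / 4 : ℝ) * (∫⁻ x, ‖g x‖ₑ ^ (4 : ℝ) ∂μ) ^ (2 / 4 : ℝ) := by
        simpa only [hpow, hhalf, Pi.mul_apply] using ENNReal.lintegral_mul_le_Lp_mul_Lq μ
          Real.HolderConjugate.two_two (hfm.enorm.pow_const (2 : ℝ)).aemeasurable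
          (hgm.enorm.pow_const (2 : ℝ)).aemeasurable
    _ ≤ _ := mul_le_mul' hf hg

lemma lintegral_add_sq_le {α : Type*} [MeasurableSpace α] {μ : Measure α} {f g : α → ℝ}
    (hf : Measurable f) :
    ∫⁻ x, ‖f x + g x‖ₑ ^ (2 : ℝ) ∂μ ≤
      2 * (∫⁻ x, ‖f x‖ₑ ^ (2 : ℝ) ∂μ + ∫⁻ x, ‖g x‖ₑ ^ (2 : ℝ) ∂μ) := by
  rw [← lintegral_add_left (hf.enorm.pow_const 2), ← lintegral_const_mul' _ _ ENNReal.ofNat_ne_top]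
  refine lintegral_mono fun x => ?_
  rw [← enorm_add_sq_add_enorm_sub_sq]
  exact le_self_add

section Gauss

open ProbabilityTheory

variable {E : Type*} [NormedAddCommGroup E] [InnerProductSpace ℝ E] [FiniteDimensional ℝ E]
  [MeasurableSpace E] [BorelSpace E] {d : ℕ} {f : E → ℝ}

lemma IsPolyFun.isHypercontractive_gaussApprox {q : ℝ} (hq : 2 ≤ q) (hf : IsPolyFun d f) (m : ℕ) :
    IsHypercontractive q (ENNReal.ofReal (q - 1) ^ d) (gaussApprox E m) f :=
  hf.isHypercontractive_rademacherSum hq _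

lemma IsPolyFun.exists_lintegral_sq_gaussApprox_le (hf : IsPolyFun d f) :
    ∃ B ≠ ∞, ∀ m, ∫⁻ x, ‖f x‖ₑ ^ (2 : ℝ) ∂(gaussApprox E m) ≤ B := by
  induction hf with
  | const _ c => exact ⟨‖c‖ₑ ^ (2 : ℝ), by simp, fun m => by simp⟩
  | add hf _ ihf ihg =>
    obtain ⟨B, hB, hfB⟩ := ihf
    obtain ⟨B', hB', hgB'⟩ := ihg
    refine ⟨2 * (B + B'), by finiteness, fun m => ?_⟩
    refine (lintegral_add_sq_le hf.continuous.measurable).trans ?_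
    gcongr
    exacts [hfB m, hgB' m]
  | @clm_mul d g L hg ih =>
    obtain ⟨B, hB, hgB⟩ := ih
    have hfour : (2 : ℝ) ≤ 4 := by norm_num
    refine ⟨ENNReal.ofReal (4 - 1) ^ 1 * (∑ i, ‖L (stdOrthonormalBasis ℝ E i)‖ₑ ^ (2 : ℝ)) *
      (ENNReal.ofReal (4 - 1) ^ d * B), ?_, fun m => ?_⟩
    · have hsum : ∑ i, ‖L (stdOrthonormalBasis ℝ E i)‖ₑ ^ (2 : ℝ) ≠ ∞ :=
        ENNReal.sum_ne_top.2 fun i _ => ENNReal.rpow_ne_top_of_nonneg zero_le_two enorm_ne_top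
      finiteness
    · refine (((IsPolyFun.clm L).isHypercontractive_gaussApprox hfour m).lintegral_mul_sq_le
        (hg.isHypercontractive_gaussApprox hfour m) L.continuous.measurable
        hg.continuous.measurable).trans ?_
      gcongr
      exacts [lintegral_enorm_clm_sq_gaussApprox_le L m, hgB m]

theorem IsPolyFun.isHypercontractive_stdGaussian {q : ℝ} (hq : 2 ≤ q) (hf : IsPolyFun d f) :
    IsHypercontractive q (ENNReal.ofReal (q - 1) ^ d) (stdGaussian E) f := by
  obtain ⟨B, hB, hfB⟩ := (hf.mul hf).exists_lintegral_sq_gaussApprox_le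
  have hsq (x : E) : ‖f x * f x‖ₑ ^ (2 : ℝ) = ‖f x‖ₑ ^ (4 : ℝ) := by
    rw [enorm_mul, ← sq, ← ENNReal.rpow_natCast_mul]
    norm_num
  exact .of_tendsto (tendsto_gaussApprox E) (by linarith) (by finiteness) hf.continuous hB
    (by simpa only [ProbabilityMeasure.coe_mk, Pi.mul_apply, hsq] using hfB)
    fun m => hf.isHypercontractive_gaussApprox hq m

end Gauss

/-! ### The sphere -/

section Sphere

open ProbabilityTheory

variable {E : Type*} [NormedAddCommGroup E] [InnerProductSpace ℝ E] [MeasurableSpace E]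

/-- The uniform probability measure of the unit sphere, viewed as a measure on the ambient space and
characterized by its rotation invariance. -/
structure IsSphereUniform (ν : Measure E) : Prop where
  isProbabilityMeasure : IsProbabilityMeasure ν
  map_eq (U : E ≃ₗᵢ[ℝ] E) : ν.map U = ν
  ae_norm_eq_one : ∀ᵐ x ∂ν, ‖x‖ = 1

variable {ν : Measure E} {d : ℕ} {f : E → ℝ}

lemma IsSphereUniform.nontrivial (hν : IsSphereUniform ν) : Nontrivial E := by
  have := hν.isProbabilityMeasure
  obtain ⟨x, hx⟩ := hν.ae_norm_eq_one.exists
  exact nontrivial_of_ne x 0 (norm_ne_zero_iff.1 (hx ▸ one_ne_zero))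

variable [BorelSpace E]

lemma charFun_map_linearIsometryEquiv (ν : Measure E) (U : E ≃ₗᵢ[ℝ] E) (t : E) :
    charFun (ν.map U) (U t) = charFun ν t := by
  rw [charFun_apply, charFun_apply,
    integral_map U.continuous.measurable.aemeasurable (by fun_prop)]
  simp

lemma IsSphereUniform.charFun_eq_of_norm_eq (hν : IsSphereUniform ν) {s t : E} (h : ‖s‖ = ‖t‖) :
    charFun ν s = charFun ν t := by
  rw [← charFun_map_linearIsometryEquiv ν (Submodule.span ℝ {s - t})ᗮ.reflection s,
    Submodule.reflection_sub h, hν.map_eq]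

lemma IsSphereUniform.two_mul_lintegral_rpow {a b : E → ℝ} (hν : IsSphereUniform ν)
    (ha : IsHomogeneousPolyFun (d + 1) a) (hb : IsHomogeneousPolyFun d b) (r : ℝ) :
    2 * ∫⁻ x, ‖a x + b x‖ₑ ^ r ∂ν = ∫⁻ x, ‖a x + b x‖ₑ ^ r + ‖a x - b x‖ₑ ^ r ∂ν := by
  have ham := ha.isPolyFun.continuous.measurable
  have hbm := hb.isPolyFun.continuous.measurable
  have hneg (x : E) : ‖a (-x) + b (-x)‖ₑ = ‖a x - b x‖ₑ := by
    have hsign : a (-x) + b (-x) = (-1) ^ (d + 1) * (a x - b x) := by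
      rw [← neg_one_smul ℝ x, ha.map_smul, hb.map_smul]
      ring
    rw [hsign, enorm_mul, enorm_pow, enorm_neg, enorm_one, one_pow, one_mul]
  have hanti : ∫⁻ x, ‖a x - b x‖ₑ ^ r ∂ν = ∫⁻ x, ‖a x + b x‖ₑ ^ r ∂ν := by
    nth_rw 2 [← hν.map_eq (.neg ℝ)]
    rw [lintegral_map (by fun_prop) (LinearIsometryEquiv.neg ℝ).continuous.measurable]
    simp [hneg]
  rw [lintegral_add_left (by fun_prop), hanti, two_mul]

variable [FiniteDimensional ℝ E]

lemma integral_charFun_smul_comm (μ ν : Measure E) [IsFiniteMeasure μ] [IsFiniteMeasure ν] (c : ℝ) :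
    ∫ x, charFun ν (c • x) ∂μ = ∫ y, charFun μ (c • y) ∂ν := by
  simp only [charFun_apply]
  rw [integral_integral_swap]
  · simp only [real_inner_smul_right, real_inner_comm]
  · refine .of_bound (C := 1) (by fun_prop) (.of_forall fun p => ?_)
    rw [Function.uncurry_apply_pair, Complex.norm_exp_ofReal_mul_I]

-- Polar coordinates: a standard Gaussian vector has the law of the product of its norm with an
-- independent uniformly distributed direction.
lemma IsSphereUniform.map_norm_smul_prod (hν : IsSphereUniform ν) :
    ((stdGaussian E).prod ν).map (fun p => ‖p.1‖ • p.2) = stdGaussian E := by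
  have := hν.isProbabilityMeasure
  refine Measure.ext_of_charFun (funext fun t => ?_)
  have hcont : Continuous fun p : E × E => ‖p.1‖ • p.2 := by fun_prop
  calc charFun (((stdGaussian E).prod ν).map fun p => ‖p.1‖ • p.2) t
      = ∫ x, charFun ν (‖x‖ • t) ∂(stdGaussian E) := by
        rw [charFun_apply, integral_map hcont.measurable.aemeasurable (by fun_prop), integral_prod]
        · simp only [charFun_apply, real_inner_smul_left, real_inner_smul_right]
        · refine .of_bound (C := 1) (by fun_prop) (.of_forall fun p => ?_)
          rw [Complex.norm_exp_ofReal_mul_I]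
    _ = ∫ x, charFun ν (‖t‖ • x) ∂(stdGaussian E) := by
        congr! 2 with x
        exact hν.charFun_eq_of_norm_eq (by simp [norm_smul, mul_comm])
    _ = ∫ y, charFun (stdGaussian E) (‖t‖ • y) ∂ν := integral_charFun_smul_comm _ _ _
    _ = ∫ _, charFun (stdGaussian E) t ∂ν := by
        refine integral_congr_ae (hν.ae_norm_eq_one.mono fun y hy => ?_)
        simp only [charFun_stdGaussian, norm_smul, hy, norm_norm, mul_one]
    _ = charFun (stdGaussian E) t := by simp

lemma IsSphereUniform.lintegral_stdGaussian_eq_mul (hν : IsSphereUniform ν)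
    (hf : IsHomogeneousPolyFun d f) {r : ℝ} (hr : 0 ≤ r) :
    ∫⁻ x, ‖f x‖ₑ ^ r ∂(stdGaussian E) =
      (∫⁻ x, ‖‖x‖ ^ d‖ₑ ^ r ∂(stdGaussian E)) * ∫⁻ x, ‖f x‖ₑ ^ r ∂ν := by
  have := hν.isProbabilityMeasure
  have hfm := hf.isPolyFun.continuous.measurable
  have hsmul : Measurable fun p : E × E => ‖p.1‖ • p.2 :=
    (by fun_prop : Continuous fun p : E × E => ‖p.1‖ • p.2).measurable
  rw [← lintegral_prod_mul (by fun_prop) (by fun_prop)]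
  nth_rw 1 [← hν.map_norm_smul_prod]
  rw [lintegral_map (by fun_prop) hsmul]
  simp only [hf.map_smul, enorm_mul, ENNReal.mul_rpow_of_nonneg _ _ hr]

variable (E) in
lemma not_ae_stdGaussian_eq_zero [Nontrivial E] : ¬ ∀ᵐ x ∂(stdGaussian E), x = 0 := by
  intro h
  obtain ⟨t, ht⟩ := exists_ne (0 : E)
  have hone : charFun (stdGaussian E) t = 1 := by
    rw [charFun_apply, integral_congr_ae (g := fun _ => 1) (h.mono fun x hx => by simp [hx])]
    simp
  rw [charFun_stdGaussian] at hone
  have hexp : Real.exp (-‖t‖ ^ 2 / 2) = 1 := by exact_mod_cast hone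
  simpa [ht] using (Real.exp_eq_one_iff _).1 hexp

lemma lintegral_norm_pow_sq_stdGaussian_ne_zero [Nontrivial E] (d : ℕ) :
    ∫⁻ x, ‖‖x‖ ^ d‖ₑ ^ (2 : ℝ) ∂(stdGaussian E) ≠ 0 := by
  rw [Ne, lintegral_eq_zero_iff (by fun_prop)]
  refine fun h => not_ae_stdGaussian_eq_zero E (h.mono fun x hx => ?_)
  have hpow : ‖x‖ ^ d = 0 := by simpa using hx
  exact norm_eq_zero.1 (eq_zero_of_pow_eq_zero hpow)

lemma lintegral_norm_pow_sq_stdGaussian_ne_top (d : ℕ) :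
    ∫⁻ x : E, ‖‖x‖ ^ d‖ₑ ^ (2 : ℝ) ∂(stdGaussian E) ≠ ∞ := by
  have h : Integrable (fun x : E => ‖x‖ ^ (d * 2)) (stdGaussian E) :=
    (IsGaussian.memLp_id _ ((d * 2 : ℕ) : ℝ≥0∞) (by finiteness)).integrable_norm_pow'
  simpa only [enorm_pow, pow_mul, ENNReal.rpow_ofNat] using h.hasFiniteIntegral.ne

lemma lintegral_sq_le_lintegral_rpow {α : Type*} [MeasurableSpace α] {μ : Measure α}
    [IsProbabilityMeasure μ] {q : ℝ} (hq : 2 ≤ q) {g : α → ℝ} (hg : Measurable g) :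
    ∫⁻ x, ‖g x‖ₑ ^ (2 : ℝ) ∂μ ≤ (∫⁻ x, ‖g x‖ₑ ^ q ∂μ) ^ (2 / q) := by
  have h := eLpNorm'_le_eLpNorm'_of_exponent_le two_pos hq μ hg.aestronglyMeasurable
  rw [eLpNorm'_eq_lintegral_enorm, eLpNorm'_eq_lintegral_enorm, one_div,
    ENNReal.rpow_inv_le_iff two_pos, ← ENNReal.rpow_mul] at h
  rwa [div_eq_inv_mul, ← one_div]

theorem IsHomogeneousPolyFun.isHypercontractive (hf : IsHomogeneousPolyFun d f)
    (hν : IsSphereUniform ν) {q : ℝ} (hq : 2 ≤ q) :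
    IsHypercontractive q (ENNReal.ofReal (q - 1) ^ d) ν f := by
  have := hν.nontrivial
  have hgauss := hf.isPolyFun.isHypercontractive_stdGaussian hq
  rw [IsHypercontractive, hν.lintegral_stdGaussian_eq_mul hf (by linarith),
    hν.lintegral_stdGaussian_eq_mul hf zero_le_two, ENNReal.mul_rpow_of_nonneg _ _ (by positivity),
    mul_left_comm] at hgauss
  refine (ENNReal.mul_le_mul_iff_right (lintegral_norm_pow_sq_stdGaussian_ne_zero d)
    (lintegral_norm_pow_sq_stdGaussian_ne_top d)).1 (le_trans ?_ hgauss)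
  gcongr
  exact lintegral_sq_le_lintegral_rpow hq (by fun_prop)

theorem IsPolyFun.isHypercontractive (hf : IsPolyFun d f) (hν : IsSphereUniform ν) {q : ℝ}
    (hq : 2 ≤ q) : IsHypercontractive q (ENNReal.ofReal (q - 1) ^ d) ν f := by
  have := hν.isProbabilityMeasure
  cases d with
  | zero =>
    obtain ⟨c, rfl⟩ := hf.exists_eq_const
    simpa using isHypercontractive_const (by linarith) c
  | succ d =>
    obtain ⟨a, b, ha, hb, hab⟩ := hf.exists_isHomogeneousPolyFun_add
    rw [Nat.add_sub_cancel] at hb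
    have hfab : f =ᵐ[ν] fun x => a x + b x := hν.ae_norm_eq_one.mono hab
    have hha := ha.isHypercontractive hν hq
    rw [pow_succ'] at hha
    rw [isHypercontractive_congr_ae hfab, pow_succ']
    exact .of_add_sub hq ha.isPolyFun.continuous.measurable hb.isPolyFun.continuous.measurable
      (hν.two_mul_lintegral_rpow ha hb) hha (hb.isHypercontractive hν hq)

end Sphere

/-! ### Minkowski's integral inequality -/

section Minkowski

variable {X Y : Type*} [MeasurableSpace X] [MeasurableSpace Y] {μ : Measure X} {ν : Measure Y}
  [SFinite μ] {p : ℝ} {G : X → Y → ℝ≥0∞}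

lemma lintegral_le_of_forall_le_of_ne_top [SigmaFinite ν] {f : Y → ℝ≥0∞} (hf : Measurable f)
    {C : ℝ≥0∞} (h : ∀ g : Y → ℝ≥0∞, Measurable g → g ≤ f → ∫⁻ y, g y ∂ν ≠ ∞ → ∫⁻ y, g y ∂ν ≤ C) :
    ∫⁻ y, f y ∂ν ≤ C := by
  refine lintegral_le_of_forall_fin_meas_le C fun s hs hνs => ?_
  have htrunc (n : ℕ) : ∫⁻ y in s, min (f y) n ∂ν ≤ C := by
    have hfin : ∫⁻ y in s, min (f y) n ∂ν ≠ ∞ :=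
      ne_top_of_le_ne_top (by simpa using ENNReal.mul_ne_top (ENNReal.natCast_ne_top n) hνs)
        (lintegral_mono fun y => min_le_right (f y) n)
    rw [← lintegral_indicator hs] at hfin ⊢
    exact h _ ((hf.min measurable_const).indicator hs)
      (fun y => (Set.indicator_le_self' (by simp) y).trans (min_le_left _ _)) hfin
  have hlim : Tendsto (fun n : ℕ => ∫⁻ y in s, min (f y) n ∂ν) atTop (𝓝 (∫⁻ y in s, f y ∂ν)) := by
    refine lintegral_tendsto_of_tendsto_of_monotone (fun n => by fun_prop)
      (.of_forall fun y m n hmn => min_le_min_left _ (Nat.cast_le.2 hmn)) (.of_forall fun y => ?_)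
    simpa using (tendsto_const_nhds (x := f y)).min ENNReal.tendsto_nat_nhds_top
  exact le_of_tendsto' hlim htrunc

lemma ennreal_mul_rpow_sub_one (hp : 1 < p) (a : ℝ≥0∞) : a * a ^ (p - 1) = a ^ p := by
  nth_rw 1 [← ENNReal.rpow_one a]
  rw [← ENNReal.rpow_add_of_nonneg _ _ zero_le_one (by linarith), add_sub_cancel]

-- Hölder's inequality for `h ^ (p - 1)` against each section of `G`.
lemma lintegral_rpow_le_of_le_lintegral [SFinite ν] (hp : 1 < p)
    (hG : Measurable (Function.uncurry G)) {h : Y → ℝ≥0∞} (hh : Measurable h)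
    (hhG : ∀ y, h y ≤ ∫⁻ x, G x y ∂μ) (hfin : ∫⁻ y, h y ^ p ∂ν ≠ ∞) :
    (∫⁻ y, h y ^ p ∂ν) ^ (1 / p) ≤ ∫⁻ x, (∫⁻ y, G x y ^ p ∂ν) ^ (1 / p) ∂μ := by
  set A := ∫⁻ y, h y ^ p ∂ν
  set R := ∫⁻ x, (∫⁻ y, G x y ^ p ∂ν) ^ (1 / p) ∂μ
  obtain ⟨p', hpp⟩ : ∃ p', p.HolderConjugate p' := ⟨_, .conjExponent hp⟩
  have hp' : 0 ≤ 1 / p' := hpp.symm.one_div_nonneg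
  rcases eq_or_ne A 0 with hA | hA
  · simp [hA, hpp.pos]
  have hle : A ≤ R * A ^ (1 / p') := calc
    A = ∫⁻ y, h y * h y ^ (p - 1) ∂ν := by simp only [A, ennreal_mul_rpow_sub_one hp]
    _ ≤ ∫⁻ y, (∫⁻ x, G x y ∂μ) * h y ^ (p - 1) ∂ν := by
        gcongr with y
        exact hhG y
    _ = ∫⁻ x, ∫⁻ y, G x y * h y ^ (p - 1) ∂ν ∂μ := by
        rw [lintegral_lintegral_swap (by fun_prop)]
        exact lintegral_congr fun y => (lintegral_mul_const _ (by fun_prop)).symm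
    _ ≤ ∫⁻ x, (∫⁻ y, G x y ^ p ∂ν) ^ (1 / p) * A ^ (1 / p') ∂μ := by
        gcongr with x
        have hholder := ENNReal.lintegral_mul_le_Lp_mul_Lq ν hpp (f := G x)
          (g := fun y => h y ^ (p - 1)) (by fun_prop) (by fun_prop)
        simpa only [Pi.mul_apply, ← ENNReal.rpow_mul, hpp.sub_one_mul_conj] using hholder
    _ = R * A ^ (1 / p') :=
        lintegral_mul_const' _ _ (ENNReal.rpow_ne_top_of_nonneg hp' hfin)
  have hsplit : A = A ^ (1 / p) * A ^ (1 / p') := by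
    rw [← ENNReal.rpow_add _ _ hA hfin, one_div, one_div, hpp.inv_add_inv_eq_one,
      ENNReal.rpow_one]
  nth_rw 1 [hsplit] at hle
  exact (ENNReal.mul_le_mul_iff_left (by simp [hA, hfin])
    (ENNReal.rpow_ne_top_of_nonneg hp' hfin)).1 hle

theorem lintegral_lintegral_rpow_le [SigmaFinite ν] (hp : 1 ≤ p)
    (hG : Measurable (Function.uncurry G)) :
    (∫⁻ y, (∫⁻ x, G x y ∂μ) ^ p ∂ν) ^ (1 / p) ≤ ∫⁻ x, (∫⁻ y, G x y ^ p ∂ν) ^ (1 / p) ∂μ := by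
  rcases hp.eq_or_lt with rfl | hp
  · simp only [ENNReal.rpow_one, div_one]
    rw [lintegral_lintegral_swap hG.aemeasurable]
  have hH : Measurable fun y => ∫⁻ x, G x y ∂μ := (hG.comp measurable_swap).lintegral_prod_right'
  have hp0 : 0 < p := by linarith
  have hcancel (a : ℝ≥0∞) : (a ^ (1 / p)) ^ p = a := by
    rw [one_div, ENNReal.rpow_inv_rpow hp0.ne']
  rw [one_div, ENNReal.rpow_inv_le_iff hp0, ← one_div]
  refine lintegral_le_of_forall_le_of_ne_top (hH.pow_const p) fun g hg hgH hfin => ?_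
  have hroot : ∀ y, g y ^ (1 / p) ≤ ∫⁻ x, G x y ∂μ := fun y => by
    rw [one_div, ENNReal.rpow_inv_le_iff hp0]
    exact hgH y
  have hle := lintegral_rpow_le_of_le_lintegral (ν := ν) hp hG (hg.pow_const (1 / p)) hroot
    (by simpa only [hcancel] using hfin)
  rwa [one_div, ENNReal.rpow_inv_le_iff hp0, ← one_div,
    lintegral_congr fun y => hcancel (g y)] at hle

end Minkowski

/-! ### Tensorization -/

section Tensorization

variable {q : ℝ}

theorem IsHypercontractive.prod {X Y : Type*} [MeasurableSpace X] [MeasurableSpace Y]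
    {μ : Measure X} {ν : Measure Y} [SFinite μ] [SigmaFinite ν] {C D : ℝ≥0∞} {F : X × Y → ℝ}
    (hq : 2 ≤ q) (hF : Measurable F) (hX : ∀ y, IsHypercontractive q C μ fun x => F (x, y))
    (hY : ∀ x, IsHypercontractive q D ν fun y => F (x, y)) :
    IsHypercontractive q (C * D) (μ.prod ν) F := by
  have hq2 : 1 ≤ q / 2 := by linarith
  have hC : (C ^ (q / 2)) ^ (2 / q) = C := by
    rw [← ENNReal.rpow_mul, div_mul_div_cancel₀ two_ne_zero, div_self (by linarith),
      ENNReal.rpow_one]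
  have hpow (x : X) (y : Y) : (‖F (x, y)‖ₑ ^ (2 : ℝ)) ^ (q / 2) = ‖F (x, y)‖ₑ ^ q := by
    rw [← ENNReal.rpow_mul, mul_div_cancel₀ _ two_ne_zero]
  have hminkowski : (∫⁻ y, (∫⁻ x, ‖F (x, y)‖ₑ ^ (2 : ℝ) ∂μ) ^ (q / 2) ∂ν) ^ (2 / q) ≤
      ∫⁻ x, (∫⁻ y, ‖F (x, y)‖ₑ ^ q ∂ν) ^ (2 / q) ∂μ := by
    simpa only [one_div_div, hpow] using lintegral_lintegral_rpow_le (μ := μ) (ν := ν) hq2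
      (G := fun x y => ‖F (x, y)‖ₑ ^ (2 : ℝ)) (by fun_prop)
  have hinner : Measurable fun y => ∫⁻ x, ‖F (x, y)‖ₑ ^ (2 : ℝ) ∂μ :=
    ((hF.enorm.pow_const 2).comp measurable_swap).lintegral_prod_right'
  calc (∫⁻ p, ‖F p‖ₑ ^ q ∂(μ.prod ν)) ^ (2 / q)
      = (∫⁻ y, ∫⁻ x, ‖F (x, y)‖ₑ ^ q ∂μ ∂ν) ^ (2 / q) := by
        rw [lintegral_prod_symm _ (by fun_prop)]
    _ ≤ (∫⁻ y, (C * ∫⁻ x, ‖F (x, y)‖ₑ ^ (2 : ℝ) ∂μ) ^ (q / 2) ∂ν) ^ (2 / q) := by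
        gcongr with y
        exact (isHypercontractive_iff_lintegral_rpow_le (by linarith)).1 (hX y)
    _ = C * (∫⁻ y, (∫⁻ x, ‖F (x, y)‖ₑ ^ (2 : ℝ) ∂μ) ^ (q / 2) ∂ν) ^ (2 / q) := by
        simp only [ENNReal.mul_rpow_of_nonneg _ _ (by linarith : 0 ≤ q / 2)]
        rw [lintegral_const_mul _ (hinner.pow_const _),
          ENNReal.mul_rpow_of_nonneg _ _ (by positivity), hC]
    _ ≤ C * ∫⁻ x, D * ∫⁻ y, ‖F (x, y)‖ₑ ^ (2 : ℝ) ∂ν ∂μ := by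
        gcongr
        exact hminkowski.trans (lintegral_mono hY)
    _ = C * D * ∫⁻ p, ‖F p‖ₑ ^ (2 : ℝ) ∂(μ.prod ν) := by
        rw [lintegral_const_mul _ (by fun_prop), lintegral_prod _ (by fun_prop), mul_assoc]

theorem isHypercontractive_pi {k : ℕ} {X : Fin k → Type*} [∀ i, MeasurableSpace (X i)]
    {μ : ∀ i, Measure (X i)} [∀ i, SigmaFinite (μ i)] {C : Fin k → ℝ≥0∞} {F : (∀ i, X i) → ℝ}
    (hq : 2 ≤ q) (hF : Measurable F)
    (hsection : ∀ ξ j, IsHypercontractive q (C j) (μ j) fun x => F (Function.update ξ j x)) :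
    IsHypercontractive q (∏ j, C j) (Measure.pi μ) F := by
  have hq0 : 0 < q := by linarith
  induction k with
  | zero =>
    have hconst : F = fun _ => F default := funext fun ξ => congrArg F (Subsingleton.elim _ _)
    rw [hconst, Measure.pi_of_empty]
    simpa using isHypercontractive_const hq0 _
  | succ k ih =>
    have hmp := (measurePreserving_piFinSuccAbove μ 0).symm
    have hcons (p : X 0 × ∀ j : Fin k, X j.succ) :
        (MeasurableEquiv.piFinSuccAbove X 0).symm p = Fin.cons p.1 p.2 :=
      Fin.insertNth_zero p.1 p.2
    rw [← hmp.map_eq, isHypercontractive_map hF hmp.measurable, Fin.prod_univ_succ]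
    change IsHypercontractive q _ ((μ 0).prod (Measure.pi fun j : Fin k => μ j.succ))
      fun p => F ((MeasurableEquiv.piFinSuccAbove X 0).symm p)
    have hFcons : Measurable fun p : X 0 × ∀ j : Fin k, X j.succ =>
        F ((MeasurableEquiv.piFinSuccAbove X 0).symm p) := hF.comp hmp.measurable
    simp only [hcons] at hFcons ⊢
    rcases isEmpty_or_nonempty (X 0) with _ | ⟨⟨x₀⟩⟩
    · simp [IsHypercontractive, hq0]
    refine .prod hq hFcons (fun y => ?_) fun x =>
      ih (hFcons.comp measurable_prodMk_left) fun ξ j => ?_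
    · simpa using hsection (Fin.cons x₀ y) 0
    · simpa only [Fin.cons_update] using hsection (Fin.cons x ξ) j.succ

end Tensorization

/-! ### Products of spheres -/

section ProductSphere

lemma isSphereUniform_map_subtypeVal {E : Type*} [NormedAddCommGroup E] [InnerProductSpace ℝ E]
    [MeasurableSpace E] [BorelSpace E] {μ : Measure (Metric.sphere (0 : E) 1)}
    [IsProbabilityMeasure μ]
    (hμ : ∀ U : E ≃ₗᵢ[ℝ] E, μ.map (fun ξ => (⟨U ξ.1, by simp⟩ : Metric.sphere (0 : E) 1)) = μ) :
    IsSphereUniform (μ.map Subtype.val) where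
  isProbabilityMeasure := Measure.isProbabilityMeasure_map measurable_subtype_coe.aemeasurable
  map_eq U := by
    have hU : Measurable U := U.continuous.measurable
    nth_rw 2 [← hμ U]
    rw [Measure.map_map hU measurable_subtype_coe, Measure.map_map measurable_subtype_coe
      (Measurable.subtype_mk (by fun_prop))]
    rfl
  ae_norm_eq_one := (ae_map_iff measurable_subtype_coe.aemeasurable
    (measurableSet_eq_fun measurable_norm measurable_const)).2 (.of_forall fun ξ => by simp)

lemma isPolyFun_eval_update {κ σ : Type*} [Finite κ] [Fintype σ] [DecidableEq κ]
    {P : MvPolynomial (κ × σ) ℝ} {d : ℕ} {j : κ} (hdeg : ∀ m ∈ P.support, ∑ i, m (j, i) ≤ d)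
    (z : κ → EuclideanSpace ℝ σ) :
    IsPolyFun d fun x => P.eval fun ji => Function.update z j x ji.1 ji.2 := by
  cases nonempty_fintype κ
  have hcoord (i : σ) : IsPolyFun 1 fun x : EuclideanSpace ℝ σ => x i :=
    .clm (EuclideanSpace.proj i)
  have heval : (fun x => P.eval fun ji => Function.update z j x ji.1 ji.2) =
      ∑ m ∈ P.support, fun x => (P.coeff m * ∏ l ∈ Finset.univ.erase j, ∏ i, z l i ^ m (l, i)) *
        (∏ i, (fun y : EuclideanSpace ℝ σ => y i) ^ m (j, i)) x := by
    ext x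
    simp only [MvPolynomial.eval_eq', Fintype.prod_prod_type, Finset.sum_apply, Finset.prod_apply,
      Pi.pow_apply]
    refine Finset.sum_congr rfl fun m _ => ?_
    have hother : ∏ l ∈ Finset.univ.erase j, ∏ i, Function.update z j x l i ^ m (l, i) =
        ∏ l ∈ Finset.univ.erase j, ∏ i, z l i ^ m (l, i) :=
      Finset.prod_congr rfl fun l hl => by rw [Function.update_of_ne (Finset.ne_of_mem_erase hl)]
    rw [← Finset.prod_erase_mul _ _ (Finset.mem_univ j), hother,
      Function.update_self, mul_assoc]
  rw [heval]
  refine .sum fun m hm => (IsPolyFun.mono (.prod fun i _ => (hcoord i).pow _) ?_).const_mul _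
  simpa using hdeg m hm

lemma IsHypercontractive.integral_rpow_le {α : Type*} [MeasurableSpace α] {μ : Measure α}
    {q c : ℝ} {f : α → ℝ} (h : IsHypercontractive q (ENNReal.ofReal c) μ f) (hq : 0 < q)
    (hc : 0 ≤ c) (hf : MemLp f 2 μ) :
    (∫ x, |f x| ^ q ∂μ) ^ (1 / q) ≤ c ^ ((1 : ℝ) / 2) * (∫ x, f x ^ 2 ∂μ) ^ ((1 : ℝ) / 2) := by
  have hintegral {r : ℝ} (hr : 0 < r) : ∫ x, |f x| ^ r ∂μ = (∫⁻ x, ‖f x‖ₑ ^ r ∂μ).toReal := by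
    rw [integral_eq_lintegral_of_nonneg_ae (.of_forall fun x => by positivity)
      (hf.1.aemeasurable.abs.pow_const r).aestronglyMeasurable]
    simp only [enorm_rpow_eq_ofReal_abs_rpow _ hr.le]
  have hsq : ∫ x, f x ^ 2 ∂μ = (∫⁻ x, ‖f x‖ₑ ^ (2 : ℝ) ∂μ).toReal := by
    rw [← hintegral two_pos]
    simp only [Real.rpow_two, sq_abs]
  have hfin : ∫⁻ x, ‖f x‖ₑ ^ (2 : ℝ) ∂μ ≠ ∞ := by
    simpa using (lintegral_rpow_enorm_lt_top_of_eLpNorm_lt_top two_ne_zero ENNReal.ofNat_ne_top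
      hf.2).ne
  have hle : (∫ x, |f x| ^ q ∂μ) ^ (2 / q) ≤ c * ∫ x, f x ^ 2 ∂μ := by
    rw [hintegral hq, hsq, ENNReal.toReal_rpow, ← ENNReal.toReal_ofReal hc, ← ENNReal.toReal_mul]
    exact ENNReal.toReal_mono (ENNReal.mul_ne_top ENNReal.ofReal_ne_top hfin) h
  calc (∫ x, |f x| ^ q ∂μ) ^ (1 / q)
      = ((∫ x, |f x| ^ q ∂μ) ^ (2 / q)) ^ ((1 : ℝ) / 2) := by
        rw [← Real.rpow_mul (by positivity)]
        congr 1
        ring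
    _ ≤ (c * ∫ x, f x ^ 2 ∂μ) ^ ((1 : ℝ) / 2) := by gcongr
    _ = c ^ ((1 : ℝ) / 2) * (∫ x, f x ^ 2 ∂μ) ^ ((1 : ℝ) / 2) :=
        Real.mul_rpow hc (by positivity)

end ProductSphere

end SphereHypercontractivity

open SphereHypercontractivity

/-- Hypercontractive norm inequality for polynomials of low degree in each block of
variables, on the `k`-fold product of real `n`-spheres: if `μ` is the uniform
(rotation-invariant) probability measure on `S^n ⊆ ℝ^{n+1}` and `f : (ℝ^{n+1})^k → ℝ`
is a polynomial of degree at most `d` in the components of each of its `k` blocks of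
variables, then for any `q ≥ 2`,
`‖f‖_{L^q((S^n)^k)} ≤ (q-1)^{dk/2} ‖f‖_{L^2((S^n)^k)}`,
where `(S^n)^k` carries the `k`-fold product of `μ`. -/
theorem product_sphere_poly_hypercontractive {n d k : ℕ}
    (μ : Measure (Metric.sphere (0 : EuclideanSpace ℝ (Fin (n + 1))) 1))
    [IsProbabilityMeasure μ]
    (hinv : ∀ U : EuclideanSpace ℝ (Fin (n + 1)) ≃ₗᵢ[ℝ] EuclideanSpace ℝ (Fin (n + 1)),
      Measure.map (fun ξ : Metric.sphere (0 : EuclideanSpace ℝ (Fin (n + 1))) 1 =>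
        (⟨U ξ.1, by
          rw [mem_sphere_zero_iff_norm, U.norm_map, ← mem_sphere_zero_iff_norm]
          exact ξ.2⟩ : Metric.sphere (0 : EuclideanSpace ℝ (Fin (n + 1))) 1)) μ = μ)
    (P : MvPolynomial (Fin k × Fin (n + 1)) ℝ)
    (hdeg : ∀ m ∈ P.support, ∀ j : Fin k, ∑ i : Fin (n + 1), m (j, i) ≤ d)
    (q : ℝ) (hq : 2 ≤ q) :
    (∫ ξ : Fin k → Metric.sphere (0 : EuclideanSpace ℝ (Fin (n + 1))) 1,
        |MvPolynomial.eval (fun ji : Fin k × Fin (n + 1) => (ξ ji.1).1 ji.2) P| ^ q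
        ∂(Measure.pi fun _ => μ)) ^ (1 / q)
      ≤ (q - 1) ^ ((d : ℝ) * k / 2) *
          (∫ ξ : Fin k → Metric.sphere (0 : EuclideanSpace ℝ (Fin (n + 1))) 1,
            (MvPolynomial.eval (fun ji : Fin k × Fin (n + 1) => (ξ ji.1).1 ji.2) P) ^ 2
            ∂(Measure.pi fun _ => μ)) ^ ((1 : ℝ) / 2) := by
  have hq1 : 0 ≤ q - 1 := by linarith
  have hcont : Continuous fun ξ : Fin k → Metric.sphere (0 : EuclideanSpace ℝ (Fin (n + 1))) 1 =>
      P.eval fun ji => (ξ ji.1).1 ji.2 :=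
    (MvPolynomial.continuous_eval P).comp (by fun_prop)
  have hproduct := isHypercontractive_pi (μ := fun _ : Fin k => μ) hq hcont.measurable fun ξ j => by
    have hpoly := isPolyFun_eval_update (fun m hm => hdeg m hm j) fun i => (ξ i).1
    have hsphere := hpoly.isHypercontractive (isSphereUniform_map_subtypeVal hinv) hq
    rw [isHypercontractive_map hpoly.continuous.measurable measurable_subtype_coe] at hsphere
    simpa only [Function.apply_update fun _ => Subtype.val] using hsphere
  have hconst : ((q - 1) ^ (d * k)) ^ ((1 : ℝ) / 2) = (q - 1) ^ ((d : ℝ) * k / 2) := by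
    rw [← Real.rpow_natCast, ← Real.rpow_mul hq1, Nat.cast_mul, mul_one_div]
  rw [Fin.prod_const, ← pow_mul, ← ENNReal.ofReal_pow hq1] at hproduct
  rw [← hconst]
  exact hproduct.integral_rpow_le (by linarith) (by positivity)
    (hcont.memLp_of_hasCompactSupport (.of_compactSpace _))
end
end
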